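/- arXiv:1103.3581 — 4 statements merged into one kernel-verified Lean document; each statement's English description precedes it below -/
import Mathlib

section
/- Let r be an odd prime with r ≠ 5. Let G be a finite group with a normal subgroup R whose cardinality is a power of r, such that the quotient group G ⧸ R is isomorphic to the alternating group on 5 letters. Suppose there is an element g ∈ G of order 5 that acts fixed point freely on R by conjugation, i.e. for every x ∈ R, if g * x * g⁻¹ = x then x = 1. Then R is nilpotent of nilpotency class at most two. -/
/-!
Through `G`, the group `A5` acts on every characteristic section of `R` on which `R` acts trivially
by conjugation. An element of order five acts without fixed points, so its norm vanishes on these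
sections. The group ring identity behind `AltFive.card_mem_kleinFour` then writes `5 • x` as the
sum of the norms of `x` for the five Klein four-groups, and these norms turn out to be fixed by the
corresponding point stabilizers: up to a factor of five, every vector is a sum of values of
equivariant maps from the deleted permutation module.

Consider the trilinear map `(x, y, z) ↦ ⁅⁅x, y⁆, z⁆` on the abelianization of `R / γ₄(R)`. Its
values, and those of the bilinear map `(x, y) ↦ ⁅⁅x, y⁆, -⁆`, are killed by the norms of the
elements of order five. For families `u`, `v`, `w` from the deleted permutation module this leaves
only the shape `25 • ⁅⁅u p, v q⁆, w s⁆ = κ p + κ q + 2 • κ s` for distinct `p`, `q`, `s`, where `κ`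
is again such a family. Summing over the cyclic rearrangements, the Jacobi identity forces `κ = 0`.
Hence `γ₃(R) = γ₄(R)`, and both are trivial since `R` is nilpotent.
-/

namespace AltFive

open Finset

/-- The alternating group of degree five. -/
abbrev A5 : Type := alternatingGroup (Fin 5)

/-- The `5`-cycle `i ↦ i + 1`. -/
def cycle : A5 := ⟨finRotate 5, Equiv.Perm.mem_alternatingGroup.2 (by decide)⟩

/-- The involution `i ↦ -i`, which inverts `AltFive.cycle`. -/
def reflection : A5 := ⟨Equiv.neg (Fin 5), Equiv.Perm.mem_alternatingGroup.2 (by decide)⟩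

/-- The Sylow `2`-subgroup of the stabilizer of `p`, a Klein four-group. -/
def kleinFour (p : Fin 5) : Subgroup A5 where
  carrier := {s | s • p = p ∧ s ^ 2 = 1}
  one_mem' := by simp
  mul_mem' {s t} := by revert p s t; decide +kernel
  inv_mem' {s} := by revert p s; decide +kernel

theorem mem_kleinFour {p : Fin 5} {s : A5} : s ∈ kleinFour p ↔ s • p = p ∧ s ^ 2 = 1 := Iff.rfl

instance (p : Fin 5) : DecidablePred (· ∈ kleinFour p) :=
  fun _ => decidable_of_iff _ mem_kleinFour.symm

theorem card_kleinFour (p : Fin 5) : Fintype.card (kleinFour p) = 4 := by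
  revert p; decide +kernel

theorem conj_mem_kleinFour_smul {h s : A5} {p : Fin 5} :
    h * s * h⁻¹ ∈ kleinFour (h • p) ↔ s ∈ kleinFour p := by
  simp [mem_kleinFour, mul_smul, conj_pow]

theorem pow_three_mem_kleinFour {s : A5} (hs : s • (0 : Fin 5) = 0) : s ^ 3 ∈ kleinFour 0 := by
  revert s; decide +kernel

theorem exists_smul_eq (p q : Fin 5) : ∃ h : A5, h • p = q := by
  revert p q; decide +kernel

theorem exists_smul_eq_of_ne {l p q : Fin 5} (hlp : l ≠ p) (hlq : l ≠ q) (hpq : p ≠ q) :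
    ∃ h : A5, h • 0 = l ∧ h • 1 = p ∧ h • 2 = q := by
  revert l p q; decide +kernel

theorem exists_kleinFour_doubleCoset {s : A5} (hs : s • (0 : Fin 5) = 0) {i : ℕ} (hi : i < 5)
    (hi0 : i ≠ 0) :
    ∃ v ∈ kleinFour 0, (cycle ^ i * s⁻¹)⁻¹ * (v * (s * cycle ^ i)) ∈ kleinFour 0 := by
  revert s i; decide +kernel

-- In the group ring: four times the sum of the norms of the Klein four-groups is `20` plus a sum of
-- conjugates of the coset sum of `⟨cycle⟩ * reflection`, all of whose elements are involutions.
theorem card_mem_kleinFour (g : A5) :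
    4 * Fintype.card {p // g ∈ kleinFour p} = (if g = 1 then 20 else 0) +
      Fintype.card {x : MulAction.stabilizer A5 (0 : Fin 5) × Fin 5 //
        (x.1 * (cycle ^ (x.2 : ℕ) * reflection) * x.1⁻¹ : A5) = g} := by
  revert g; decide +kernel

theorem sum_range_cycle_pow_smul {X : Type*} [AddCommMonoid X] (f : Fin 5 → X) (p : Fin 5) :
    ∑ i ∈ range 5, f (cycle ^ i • p) = ∑ q, f q := by
  rw [Finset.sum_range]
  exact Fintype.sum_bijective (fun i : Fin 5 => cycle ^ (i : ℕ) • p) (by revert p; decide +kernel)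
    _ _ fun _ => rfl

section Representation

variable {k X : Type*} [CommRing k] [AddCommGroup X] [Module k X] (ρ : Representation k A5 X)

/-- The vectors killed by the norms of all the cyclic subgroups of order five of `A5`. -/
def normKernel : Submodule k X := ⨅ h : A5, LinearMap.ker (∑ i ∈ range 5, ρ (cycle ^ i * h))

/-- The norm `x ↦ ∑ v ∈ kleinFour p, v x` of the Klein four-group `kleinFour p`. -/
def kleinNorm (p : Fin 5) : Module.End k X :=
  Representation.norm (ρ.comp (kleinFour p).subtype)

/-- The submodule of families `φ` with `h (φ p) = φ (h • p)` and `∑ p, φ p = 0`, that is, of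
equivariant maps to `X` from the deleted permutation module of `A5`. -/
def deletedFamilies : Submodule k (Fin 5 → X) where
  carrier := {φ | (∀ h p, ρ h (φ p) = φ (h • p)) ∧ ∑ p, φ p = 0}
  zero_mem' := by simp
  add_mem' := fun hφ hψ => ⟨by simp [hφ.1, hψ.1], by simp [sum_add_distrib, hφ.2, hψ.2]⟩
  smul_mem' := fun c φ hφ => ⟨by simp [hφ.1], by simp [← smul_sum, hφ.2]⟩

variable {ρ} {x : X}

theorem mem_normKernel : x ∈ normKernel ρ ↔ ∀ h, ∑ i ∈ range 5, ρ (cycle ^ i * h) x = 0 := by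
  simp [normKernel, Submodule.mem_iInf]

theorem kleinNorm_apply (p : Fin 5) (x : X) : kleinNorm ρ p x = ∑ v : kleinFour p, ρ v x := by
  simp [kleinNorm, Representation.norm]

theorem kleinNorm_apply_apply {p : Fin 5} {v : A5} (hv : v ∈ kleinFour p) (x : X) :
    kleinNorm ρ p (ρ v x) = kleinNorm ρ p x :=
  Representation.norm_self_apply (ρ.comp (kleinFour p).subtype) ⟨v, hv⟩ x

theorem apply_kleinNorm_of_mem {p : Fin 5} {v : A5} (hv : v ∈ kleinFour p) (x : X) :
    ρ v (kleinNorm ρ p x) = kleinNorm ρ p x :=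
  Representation.self_norm_apply (ρ.comp (kleinFour p).subtype) ⟨v, hv⟩ x

theorem kleinNorm_smul_apply (h : A5) (p : Fin 5) (x : X) :
    kleinNorm ρ (h • p) (ρ h x) = ρ h (kleinNorm ρ p x) := by
  rw [kleinNorm_apply, kleinNorm_apply, map_sum]
  refine (Fintype.sum_equiv ((MulAut.conj h).toEquiv.subtypeEquiv fun s => ?_) _ _ fun s => ?_).symm
  · exact conj_mem_kleinFour_smul.symm
  · simp [← Module.End.mul_apply, ← map_mul]

theorem apply_mem_normKernel (hx : x ∈ normKernel ρ) (h : A5) : ρ h x ∈ normKernel ρ :=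
  mem_normKernel.2 fun s => by
    simpa [← Module.End.mul_apply, ← map_mul, mul_assoc] using mem_normKernel.1 hx (s * h)

theorem kleinNorm_mem_normKernel (hx : x ∈ normKernel ρ) (p : Fin 5) :
    kleinNorm ρ p x ∈ normKernel ρ := by
  rw [kleinNorm_apply]
  exact Submodule.sum_mem _ fun v _ => apply_mem_normKernel hx v

theorem apply_eq_apply_inv_of_smul_zero (h2 : IsSMulRegular X (2 : ℕ)) (hx : x ∈ normKernel ρ)
    (hfix : ∀ v ∈ kleinFour 0, ρ v x = x) {s : A5} (hs : s • (0 : Fin 5) = 0) :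
    ρ s x = ρ s⁻¹ x := by
  -- `F` is constant on the double cosets of `kleinFour 0`, and `s * cycle ^ i` and
  -- `cycle ^ i * s⁻¹` share a double coset unless `i = 0`, so comparing two vanishing norms
  -- leaves `F s = F s⁻¹`.
  set F : A5 → X := fun g => kleinNorm ρ 0 (ρ g x) with hF
  have F_mul {v w : A5} (hv : v ∈ kleinFour 0) (hw : w ∈ kleinFour 0) (g : A5) :
      F (v * g * w) = F g := by
    simp only [hF, map_mul, Module.End.mul_apply, hfix w hw, kleinNorm_apply_apply hv]
  have F_stab {s : A5} (hs : s • (0 : Fin 5) = 0) : F s = 4 • ρ s x := by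
    have hnorm : kleinNorm ρ 0 x = 4 • x := by
      rw [kleinNorm_apply, sum_congr rfl fun (v : kleinFour 0) _ => hfix v v.2, sum_const,
        card_univ, card_kleinFour]
    have := kleinNorm_smul_apply (ρ := ρ) s 0 x
    rwa [hs, hnorm, map_nsmul] at this
  have sum_left : ∑ i ∈ range 5, F (s * cycle ^ i) = 0 := by
    have := mem_normKernel.1 hx 1
    simp only [mul_one] at this
    simp only [hF, map_mul, Module.End.mul_apply, ← map_sum, this, map_zero]
  have sum_right : ∑ i ∈ range 5, F (cycle ^ i * s⁻¹) = 0 := by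
    simp only [hF, ← map_sum, mem_normKernel.1 hx s⁻¹, map_zero]
  have terms_eq : ∀ i ∈ range 5, i ≠ 0 → F (s * cycle ^ i) = F (cycle ^ i * s⁻¹) := by
    intro i hi hi0
    obtain ⟨v, hv, hw⟩ := exists_kleinFour_doubleCoset hs (mem_range.1 hi) hi0
    rw [← F_mul hv (one_mem _) (s * cycle ^ i), ← F_mul (one_mem _) hw (cycle ^ i * s⁻¹)]
    congr 1
    group
  have F_inv : F s = F s⁻¹ := by
    rw [← add_sum_erase _ _ (mem_range.2 (Nat.succ_pos 4))] at sum_left sum_right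
    rw [sum_congr rfl fun i hi => terms_eq i (mem_of_mem_erase hi) (ne_of_mem_erase hi)] at sum_left
    simpa using add_right_cancel (sum_left.trans sum_right.symm)
  rw [F_stab hs, F_stab (inv_smul_eq_iff.2 hs.symm)] at F_inv
  exact h2.mul h2 F_inv

theorem apply_kleinNorm_of_smul_zero (h2 : IsSMulRegular X (2 : ℕ)) (hx : x ∈ normKernel ρ)
    {s : A5} (hs : s • (0 : Fin 5) = 0) : ρ s (kleinNorm ρ 0 x) = kleinNorm ρ 0 x := by
  set u := kleinNorm ρ 0 x
  have hinv : ρ s u = ρ s⁻¹ u := apply_eq_apply_inv_of_smul_zero h2 (kleinNorm_mem_normKernel hx 0)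
    (fun v hv => apply_kleinNorm_of_mem hv x) hs
  have hcube : ρ (s ^ 3) u = u := apply_kleinNorm_of_mem (pow_three_mem_kleinFour hs) x
  have hsq : ρ (s ^ 2) u = u := by
    rw [pow_two, map_mul, Module.End.mul_apply, hinv, ρ.self_inv_apply]
  rwa [pow_succ', map_mul, Module.End.mul_apply, hsq] at hcube

theorem apply_kleinNorm_of_smul_eq (h2 : IsSMulRegular X (2 : ℕ)) (hx : x ∈ normKernel ρ)
    {s : A5} {p : Fin 5} (hs : s • p = p) : ρ s (kleinNorm ρ p x) = kleinNorm ρ p x := by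
  obtain ⟨h, rfl⟩ := exists_smul_eq 0 p
  obtain ⟨y, rfl⟩ : ∃ y, ρ h y = x := (ρ.apply_bijective h).surjective x
  have hy : y ∈ normKernel ρ := by simpa using apply_mem_normKernel hx h⁻¹
  have key := apply_kleinNorm_of_smul_zero h2 hy (s := h⁻¹ * s * h) (by
    rw [mul_smul, mul_smul, hs, inv_smul_smul])
  rw [kleinNorm_smul_apply]
  conv_rhs => rw [← key]
  simp

theorem exists_deletedFamilies_apply_smul (h2 : IsSMulRegular X (2 : ℕ)) (hx : x ∈ normKernel ρ)
    (p : Fin 5) : ∃ φ ∈ deletedFamilies ρ, ∀ h, φ (h • p) = kleinNorm ρ (h • p) (ρ h x) := by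
  choose t ht using exists_smul_eq p
  let φ : Fin 5 → X := fun q => ρ (t q) (kleinNorm ρ p x)
  have hφ (h : A5) : φ (h • p) = ρ h (kleinNorm ρ p x) := by
    have hfix : (h⁻¹ * t (h • p)) • p = p := by rw [mul_smul, ht, inv_smul_smul]
    conv_rhs => rw [← apply_kleinNorm_of_smul_eq h2 hx hfix]
    simp [φ]
  refine ⟨φ, ⟨fun h q => ?_, ?_⟩, fun h => (hφ h).trans (kleinNorm_smul_apply h p x).symm⟩
  · obtain ⟨s, rfl⟩ := exists_smul_eq p q
    rw [hφ, ← mul_smul, hφ, map_mul, Module.End.mul_apply]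
  · rw [← sum_range_cycle_pow_smul φ p]
    simpa [hφ] using mem_normKernel.1 (kleinNorm_mem_normKernel hx p) 1

theorem five_nsmul_eq_sum_kleinNorm (h2 : IsSMulRegular X (2 : ℕ)) (hx : x ∈ normKernel ρ) :
    5 • x = ∑ p, kleinNorm ρ p x := by
  have involutions_eq_zero : ∑ y : MulAction.stabilizer A5 (0 : Fin 5) × Fin 5,
      ρ (y.1 * (cycle ^ (y.2 : ℕ) * reflection) * y.1⁻¹) x = 0 := by
    rw [Fintype.sum_prod_type]
    refine sum_eq_zero fun h _ => ?_
    have := congrArg (ρ h) (mem_normKernel.1 hx (reflection * h⁻¹))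
    rw [map_zero, map_sum, sum_range] at this
    simpa [← Module.End.mul_apply, ← map_mul, mul_assoc] using this
  have kleinNorm_eq (p : Fin 5) :
      kleinNorm ρ p x = ∑ g, if g ∈ kleinFour p then ρ g x else 0 := by
    rw [kleinNorm_apply, ← sum_filter]
    exact (sum_subtype (univ.filter (· ∈ kleinFour p)) (by simp) fun g => ρ g x).symm
  refine (h2.mul h2 (?_ : 4 • _ = 4 • _)).symm
  calc 4 • ∑ p, kleinNorm ρ p x
      = ∑ g, (4 * Fintype.card {p // g ∈ kleinFour p}) • ρ g x := by
        simp_rw [kleinNorm_eq]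
        rw [sum_comm, smul_sum]
        refine sum_congr rfl fun g _ => ?_
        rw [mul_nsmul', Fintype.card_subtype, ← sum_filter, sum_const]
    _ = 20 • x := by
        simp_rw [card_mem_kleinFour, add_nsmul, sum_add_distrib, ite_smul, zero_nsmul]
        rw [sum_ite_eq', if_pos (mem_univ _), map_one, Module.End.one_apply, add_eq_left,
          ← involutions_eq_zero, ← Fintype.sum_fiberwise' _ fun g => ρ g x]
        simp_rw [sum_const, card_univ]
    _ = 4 • 5 • x := mul_nsmul' x 4 5

end Representation

theorem sum_eq_add_four_nsmul {X : Type*} [AddCommMonoid X] {f : Fin 5 → X} {p : Fin 5} {y : X}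
    (hf : ∀ q, q ≠ p → f q = y) : ∑ q, f q = f p + 4 • y := by
  rw [← add_sum_erase _ _ (mem_univ p), sum_congr rfl fun q hq => hf q (ne_of_mem_erase hq)]
  simp

theorem eq_zero_of_forall_ne_eq_zero {ι X : Type*} [Fintype ι] [AddCommMonoid X] {f : ι → X} {p : ι}
    (hf : ∀ q, q ≠ p → f q = 0) (hsum : ∑ q, f q = 0) (q : ι) : f q = 0 := by
  rcases eq_or_ne q p with rfl | hq
  · exact (Fintype.sum_eq_single q hf).symm.trans hsum
  · exact hf q hq

theorem eq_zero_of_add_add_eq_zero {X : Type*} [AddCommGroup X] (h5 : IsSMulRegular X (5 : ℕ))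
    {α β γ : Fin 5 → X} (h : ∀ p q s, p ≠ q → p ≠ s → q ≠ s → α p + β q + γ s = 0)
    (hα : ∑ p, α p = 0) : α = 0 := by
  have const (p p' : Fin 5) : α p = α p' := by
    obtain ⟨q, s, hpq, hps, hqs, hpq', hps'⟩ :
        ∃ q s, p ≠ q ∧ p ≠ s ∧ q ≠ s ∧ p' ≠ q ∧ p' ≠ s := by
      revert p p'; decide
    exact add_right_cancel (add_right_cancel
      ((h p q s hpq hps hqs).trans (h p' q s hpq' hps' hqs).symm))
  ext p
  refine h5.right_eq_zero_of_smul ?_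
  rw [← hα, sum_congr rfl fun q _ => const q p]
  simp

section Representation

variable {k X : Type*} [CommRing k] [AddCommGroup X] [Module k X] {ρ : Representation k A5 X}

theorem exists_deletedFamilies_kleinNorm_matrix (h2 : IsSMulRegular X (2 : ℕ))
    {z : Fin 5 → Fin 5 → X} (hz : ∀ h p q, ρ h (z p q) = z (h • p) (h • q))
    (hker : ∀ p q, z p q ∈ normKernel ρ) (hrow : ∀ p, ∑ q, z p q = 0)
    (hcol : ∀ q, ∑ p, z p q = 0) :
    ∃ σ ∈ deletedFamilies ρ, ∃ ω ∈ deletedFamilies ρ,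
      (∀ l p, p ≠ l → kleinNorm ρ l (z l p) = σ l ∧ kleinNorm ρ l (z p l) = σ l) ∧
      ∀ l p q, l ≠ p → l ≠ q → p ≠ q → kleinNorm ρ l (z p q) = ω l := by
  obtain ⟨σ, hσ, hσz⟩ := exists_deletedFamilies_apply_smul h2 (hker 0 1) 0
  obtain ⟨σ', -, hσz'⟩ := exists_deletedFamilies_apply_smul h2 (hker 1 0) 0
  obtain ⟨ω, hω, hωz⟩ := exists_deletedFamilies_apply_smul h2 (hker 1 2) 0
  have values (l p q : Fin 5) (hlp : l ≠ p) (hlq : l ≠ q) (hpq : p ≠ q) :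
      kleinNorm ρ l (z l p) = σ l ∧ kleinNorm ρ l (z p l) = σ' l ∧
        kleinNorm ρ l (z p q) = ω l := by
    obtain ⟨h, rfl, rfl, rfl⟩ := exists_smul_eq_of_ne hlp hlq hpq
    simp [hσz, hσz', hωz, hz]
  have off_diag (l p : Fin 5) (hp : p ≠ l) :
      kleinNorm ρ l (z l p) = σ l ∧ kleinNorm ρ l (z p l) = σ' l := by
    obtain ⟨q, hlq, hpq⟩ : ∃ q, l ≠ q ∧ p ≠ q := by revert l p; decide
    exact ⟨(values l p q hp.symm hlq hpq).1, (values l p q hp.symm hlq hpq).2.1⟩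
  have hσ' : σ' = σ := by
    ext l
    have row := sum_eq_add_four_nsmul fun p hp => (off_diag l p hp).1
    have col := sum_eq_add_four_nsmul fun p hp => (off_diag l p hp).2
    rw [← map_sum, hrow, map_zero] at row
    rw [← map_sum, hcol, map_zero, row] at col
    exact (h2.mul h2 (add_left_cancel col)).symm
  exact ⟨σ, hσ, ω, hω, hσ' ▸ off_diag, fun l p q hlp hlq hpq => (values l p q hlp hlq hpq).2.2⟩

theorem exists_deletedFamilies_five_nsmul_eq_add (h2 : IsSMulRegular X (2 : ℕ))
    {z : Fin 5 → Fin 5 → X} (hz : ∀ h p q, ρ h (z p q) = z (h • p) (h • q))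
    (hker : ∀ p q, z p q ∈ normKernel ρ) (hrow : ∀ p, ∑ q, z p q = 0)
    (hcol : ∀ q, ∑ p, z p q = 0) :
    ∃ τ ∈ deletedFamilies ρ, ∀ p q, p ≠ q → 5 • z p q = τ p + τ q := by
  obtain ⟨σ, hσ, ω, hω, hσz, hωz⟩ :=
    exists_deletedFamilies_kleinNorm_matrix h2 hz hker hrow hcol
  refine ⟨σ - ω, Submodule.sub_mem _ hσ hω, fun p q hpq => ?_⟩
  have off_pair (l : Fin 5) (hl : l ∉ ({p, q} : Finset (Fin 5))) :
      kleinNorm ρ l (z p q) - ω l = 0 := by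
    simp only [mem_insert, mem_singleton, not_or] at hl
    rw [hωz l p q hl.1 hl.2 hpq, sub_self]
  calc 5 • z p q = ∑ l, (kleinNorm ρ l (z p q) - ω l) := by
        rw [sum_sub_distrib, hω.2, sub_zero, five_nsmul_eq_sum_kleinNorm h2 (hker p q)]
    _ = ∑ l ∈ {p, q}, (kleinNorm ρ l (z p q) - ω l) :=
        (sum_subset (subset_univ _) fun l _ => off_pair l).symm
    _ = (σ - ω) p + (σ - ω) q := by
        rw [sum_pair hpq, (hσz p q hpq.symm).1, (hσz q p hpq).2, Pi.sub_apply, Pi.sub_apply]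

theorem map_eq_zero_of_forall_deletedFamilies {Y : Type*} [AddCommGroup Y] [Module k Y]
    (h2 : IsSMulRegular X (2 : ℕ)) (h5 : IsSMulRegular Y (5 : ℕ)) (f : X →ₗ[k] Y)
    (hf : ∀ φ ∈ deletedFamilies ρ, ∀ p, f (φ p) = 0) {x : X} (hx : x ∈ normKernel ρ) : f x = 0 := by
  refine h5.right_eq_zero_of_smul ?_
  rw [← map_nsmul, five_nsmul_eq_sum_kleinNorm h2 hx, map_sum]
  refine sum_eq_zero fun p _ => ?_
  obtain ⟨φ, hφ, hφp⟩ := exists_deletedFamilies_apply_smul h2 hx p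
  have hφx : φ p = kleinNorm ρ p x := by simpa using hφp 1
  exact hφx ▸ hf φ hφ p

end Representation

section Trilinear

variable {k M N : Type*} [CommRing k] [AddCommGroup M] [Module k M] [AddCommGroup N] [Module k N]
  {ρ : Representation k A5 M} {σ : Representation k A5 N} {T : M →ₗ[k] M →ₗ[k] M →ₗ[k] N}

theorem isSMulRegular_linearMap {n : ℕ} (h : IsSMulRegular N n) :
    IsSMulRegular (M →ₗ[k] N) n :=
  fun _ _ hfg => LinearMap.ext fun x => h (LinearMap.congr_fun hfg x)

theorem exists_deletedFamilies_trilinear (h2 : IsSMulRegular N (2 : ℕ))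
    (h5 : IsSMulRegular N (5 : ℕ))
    (hT : ∀ h x y z, σ h (T x y z) = T (ρ h x) (ρ h y) (ρ h z))
    (hker : ∀ x y, T x y ∈ normKernel (ρ.linHom σ)) (hσ : normKernel σ = ⊤)
    {u v w : Fin 5 → M} (hu : u ∈ deletedFamilies ρ) (hv : v ∈ deletedFamilies ρ)
    (hw : w ∈ deletedFamilies ρ) :
    ∃ κ ∈ deletedFamilies σ,
      (∀ p q s, p ≠ q → p ≠ s → q ≠ s → 25 • T (u p) (v q) (w s) = κ p + κ q + 2 • κ s) ∧
      (κ = 0 → ∀ p q s, T (u p) (v q) (w s) = 0) := by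
  obtain ⟨τ, hτ, hTτ⟩ := exists_deletedFamilies_five_nsmul_eq_add (ρ := ρ.linHom σ)
    (isSMulRegular_linearMap h2) (z := fun p q => T (u p) (v q))
    (fun h p q => by ext x; simp [Representation.linHom_apply, hT, hu.1, hv.1])
    (fun p q => hker _ _) (fun p => by simp [← map_sum, hv.2])
    (fun q => by simp [← LinearMap.sum_apply, ← map_sum, hu.2])
  obtain ⟨κ, hκ, hτκ⟩ := exists_deletedFamilies_five_nsmul_eq_add (ρ := σ) h2
    (z := fun p s => τ p (w s))
    (fun h p s => by simp [← hτ.1, ← hw.1, Representation.linHom_apply])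
    (fun p s => hσ ▸ Submodule.mem_top) (fun p => by simp [← map_sum, hw.2])
    (fun s => by simp [← LinearMap.sum_apply, hτ.2])
  refine ⟨κ, hκ, fun p q s hpq hps hqs => ?_, ?_⟩
  · calc 25 • T (u p) (v q) (w s) = 5 • (5 • T (u p) (v q)) (w s) := mul_nsmul _ 5 5
      _ = 5 • τ p (w s) + 5 • τ q (w s) := by
          rw [hTτ p q hpq, LinearMap.add_apply, nsmul_add]
      _ = κ p + κ q + 2 • κ s := by
          rw [hτκ p s hps, hτκ q s hqs]; abel
  · rintro rfl p q s
    have hτw (p s : Fin 5) : τ p (w s) = 0 :=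
      eq_zero_of_forall_ne_eq_zero
        (fun s hs => h5.right_eq_zero_of_smul (by simpa using hτκ p s hs.symm))
        (by rw [← map_sum, hw.2, map_zero]) s
    refine eq_zero_of_forall_ne_eq_zero (f := fun q => T (u p) (v q) (w s)) (p := p)
      (fun q hq => h5.right_eq_zero_of_smul ?_) ?_ q
    · rw [← LinearMap.smul_apply, hTτ p q hq.symm, LinearMap.add_apply, hτw, hτw, add_zero]
    · rw [← LinearMap.sum_apply, ← map_sum, hv.2, map_zero, LinearMap.zero_apply]

theorem trilinear_deletedFamilies_eq_zero (h2 : IsSMulRegular N (2 : ℕ))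
    (h5 : IsSMulRegular N (5 : ℕ))
    (hT : ∀ h x y z, σ h (T x y z) = T (ρ h x) (ρ h y) (ρ h z))
    (hker : ∀ x y, T x y ∈ normKernel (ρ.linHom σ)) (hσ : normKernel σ = ⊤)
    (jacobi : ∀ x y z, T x y z + T y z x + T z x y = 0)
    {u v w : Fin 5 → M} (hu : u ∈ deletedFamilies ρ) (hv : v ∈ deletedFamilies ρ)
    (hw : w ∈ deletedFamilies ρ) (p q s : Fin 5) : T (u p) (v q) (w s) = 0 := by
  obtain ⟨κ, hκ, hTκ, hκ0⟩ := exists_deletedFamilies_trilinear h2 h5 hT hker hσ hu hv hw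
  obtain ⟨κ', hκ', hTκ', -⟩ := exists_deletedFamilies_trilinear h2 h5 hT hker hσ hv hw hu
  obtain ⟨κ'', hκ'', hTκ'', -⟩ := exists_deletedFamilies_trilinear h2 h5 hT hker hσ hw hu hv
  set α := κ + 2 • κ' + κ'' with hα
  set β := κ + κ' + 2 • κ'' with hβ
  set γ := 2 • κ + κ' + κ'' with hγ
  have jacobi_sum (p q s : Fin 5) (hpq : p ≠ q) (hps : p ≠ s) (hqs : q ≠ s) :
      α p + β q + γ s = 0 := by
    have h := congrArg ((25 : ℕ) • ·) (jacobi (u p) (v q) (w s))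
    simp only [nsmul_add, smul_zero, hTκ p q s hpq hps hqs,
      hTκ' q s p hqs hpq.symm hps.symm, hTκ'' s p q hps.symm hqs.symm hpq] at h
    simp only [hα, hβ, hγ, Pi.add_apply, Pi.smul_apply, ← h]
    abel
  have hα0 : α = 0 := eq_zero_of_add_add_eq_zero h5 jacobi_sum (by
    simp [hα, sum_add_distrib, ← smul_sum, hκ.2, hκ'.2, hκ''.2])
  have hβ0 : β = 0 := eq_zero_of_add_add_eq_zero h5
    (fun p q s hpq hps hqs => by rw [add_comm (β p), jacobi_sum q p s hpq.symm hqs hps]) (by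
    simp [hβ, sum_add_distrib, ← smul_sum, hκ.2, hκ'.2, hκ''.2])
  have hγ0 : γ = 0 := eq_zero_of_add_add_eq_zero h5
    (fun p q s hpq hps hqs => by
      rw [add_assoc, add_comm, jacobi_sum q s p hqs hpq.symm hps.symm]) (by
    simp [hγ, sum_add_distrib, ← smul_sum, hκ.2, hκ'.2, hκ''.2])
  refine hκ0 (funext fun p => (h2.mul h2).right_eq_zero_of_smul ?_) p q s
  have combination : 4 • κ = 3 • γ - α - β := by rw [hα, hβ, hγ]; abel
  simpa [hα0, hβ0, hγ0] using congrFun combination p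

theorem trilinear_eq_zero (hM : IsSMulRegular M (2 : ℕ)) (h2 : IsSMulRegular N (2 : ℕ))
    (h5 : IsSMulRegular N (5 : ℕ))
    (hT : ∀ h x y z, σ h (T x y z) = T (ρ h x) (ρ h y) (ρ h z))
    (hρ : normKernel ρ = ⊤) (hσ : normKernel σ = ⊤)
    (hker : ∀ x y, T x y ∈ normKernel (ρ.linHom σ))
    (jacobi : ∀ x y z, T x y z + T y z x + T z x y = 0) : T = 0 := by
  ext x y z
  have mem (x : M) : x ∈ normKernel ρ := hρ ▸ Submodule.mem_top
  refine map_eq_zero_of_forall_deletedFamilies hM h5 ((T.flip y).flip z) (fun u hu p => ?_) (mem x)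
  refine map_eq_zero_of_forall_deletedFamilies hM h5 ((T (u p)).flip z) (fun v hv q => ?_) (mem y)
  refine map_eq_zero_of_forall_deletedFamilies hM h5 (T (u p) (v q)) (fun w hw s => ?_) (mem z)
  exact trilinear_deletedFamilies_eq_zero h2 h5 hT hker hσ jacobi hu hv hw p q s

end Trilinear

open scoped commutatorElement IsMulCommutative

section Automorphisms

variable {H : Type*} [Group H]

/-- The automorphisms `φ` with `x * φ x * ⋯ * φ^(n-1) x = 1` for all `x`, which is the property
inherited by subgroups and quotients from fixed-point-free automorphisms of order `n`. Unlike in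
the usual definition of a splitting automorphism, `φ ^ n = 1` is not required. -/
def IsSplitting (n : ℕ) (φ : MulAut H) : Prop :=
  ∀ x, ((List.range n).map fun i => (φ ^ i) x).prod = 1

/-- The automorphism of `H ⧸ L` induced by an automorphism of `H`, for `L` characteristic. -/
def quotientAut (L : Subgroup H) [L.Normal] [hL : L.Characteristic] :
    MulAut H →* MulAut (H ⧸ L) where
  toFun φ := QuotientGroup.congr L L φ (Subgroup.characteristic_iff_map_eq.1 hL φ)
  map_one' := by ext ⟨x⟩; rfl
  map_mul' _ _ := by ext ⟨x⟩; rfl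

theorem quotientAut_conj (L : Subgroup H) [L.Normal] [L.Characteristic] (x : H) :
    quotientAut L (MulAut.conj x) = MulAut.conj (x : H ⧸ L) := by
  ext ⟨y⟩; rfl

theorem characteristic_center_conj (x : H) :
    MulAut.characteristic (Subgroup.center H) (MulAut.conj x) = 1 := by
  ext y
  exact mul_inv_eq_of_eq_mul (Subgroup.mem_center_iff.1 y.2 x)

variable {n : ℕ} {φ : MulAut H}

theorem IsSplitting.of_fixedPointFree [Finite H] (hn : φ ^ n = 1)
    (hφ : MonoidHom.FixedPointFree φ) : IsSplitting n φ := fun x => by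
  have hpow (i : ℕ) : ⇑(φ ^ i) = φ^[i] := hom_coe_pow _ rfl (fun _ _ => rfl) φ i
  simpa only [hpow] using hφ.prod_pow_eq_one (by rw [← hpow, hn]; rfl) x

theorem IsSplitting.characteristic (hφ : IsSplitting n φ) (K : Subgroup H) [K.Characteristic] :
    IsSplitting n (MulAut.characteristic K φ) := fun x => by
  apply Subtype.ext
  rw [← K.coe_subtype, map_list_prod, List.map_map, map_one, ← hφ x]
  simp only [← map_pow]
  rfl

theorem IsSplitting.quotientAut (hφ : IsSplitting n φ) (L : Subgroup H) [L.Normal]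
    [L.Characteristic] : IsSplitting n (quotientAut L φ) := by
  rintro ⟨x⟩
  have := congrArg (QuotientGroup.mk' L) (hφ x)
  rw [map_list_prod, List.map_map, map_one] at this
  simp only [← map_pow]
  exact this

theorem coprime_card_of_fixedPointFree [Finite H] {p : ℕ} [hp : Fact p.Prime] (hn : φ ^ p = 1)
    (hφ : MonoidHom.FixedPointFree φ) : (Nat.card H).Coprime p := by
  classical
  have := Fintype.ofFinite H
  have hpow : (φ : H → H)^[p ^ 1] = id := by
    rw [pow_one, ← hom_coe_pow (fun φ : MulAut H => ⇑φ) rfl (fun _ _ => rfl), hn]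
    rfl
  have hfix : Function.fixedPoints φ = {1} :=
    Set.eq_singleton_iff_unique_mem.2 ⟨map_one φ, fun x hx => hφ x hx⟩
  have hmod := Equiv.Perm.card_fixedPoints_modEq (f := (φ : H → H)) hpow
  rw [← Nat.card_eq_fintype_card, ← Nat.card_eq_fintype_card, hfix] at hmod
  simpa [Nat.Coprime] using hmod.gcd_eq

theorem isSMulRegular_additive {A : Type*} [CommGroup A] {n : ℕ} (h : (Nat.card A).Coprime n) :
    IsSMulRegular (Additive A) n :=
  (powCoprime h).injective

theorem exists_representation_apply {G S A : Type*} [Group G] [Group S] [CommGroup A]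
    (α : G →* MulAut A) {π : G →* S} (hπ : Function.Surjective π) (hker : π.ker ≤ α.ker) :
    ∃ ρ : Representation ℤ S (Additive A),
      ∀ g a, ρ (π g) (Additive.ofMul a) = Additive.ofMul (α g a) := by
  refine ⟨(Representation.ofMulDistribMulAction (MulAut A) A).comp
    (π.liftOfSurjective hπ ⟨α, hker⟩), fun g a => ?_⟩
  have := π.liftOfRightInverse_comp_apply _ (Function.rightInverse_surjInv hπ) ⟨α, hker⟩ g
  rw [MonoidHom.comp_apply, MonoidHom.liftOfSurjective, this]
  rfl

theorem IsSplitting.mem_normKernel {G X : Type*} [Group G] [AddCommGroup X]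
    {ρ : Representation ℤ A5 X} {π : G →* A5} (hπ : Function.Surjective π) {α : G →* MulAut H}
    {g : G} (hs : IsSplitting 5 (α g)) (hg : π g = cycle) (f : Additive H →+ X)
    (hf : ∀ h x, f (Additive.ofMul (α h x)) = ρ (π h) (f (Additive.ofMul x))) (x : Additive H) :
    f x ∈ normKernel ρ := by
  refine AltFive.mem_normKernel.2 fun s => ?_
  obtain ⟨h, rfl⟩ := hπ s
  have norm_eq_zero : ∑ i ∈ range 5, f (Additive.ofMul ((α g ^ i) (α h x.toMul))) = 0 := by
    have := congrArg (f ∘ Additive.ofMul) (hs (α h x.toMul))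
    simp only [Function.comp_apply, ofMul_list_prod, map_list_sum, List.map_map, ofMul_one,
      map_zero] at this
    exact this
  rw [← norm_eq_zero, ← hg]
  refine sum_congr rfl fun i _ => ?_
  rw [← map_pow, ← map_pow, ← map_mul, ← MulAut.mul_apply, ← map_mul, hf, ofMul_toMul]

end Automorphisms

section SecondCenter

variable {Q : Type*} [Group Q]

theorem commutatorElement_mem_center {k : Q} (hk : k ∈ Subgroup.upperCentralSeries Q 2) (x : Q) :
    ⁅k, x⁆ ∈ Subgroup.center Q :=
  Subgroup.upperCentralSeries_one Q ▸ Subgroup.mem_upperCentralSeries_succ_iff.1 hk x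

theorem commutatorElement_mul_right {k : Q} (hk : k ∈ Subgroup.upperCentralSeries Q 2)
    (x y : Q) : ⁅k, x * y⁆ = ⁅k, x⁆ * ⁅k, y⁆ := by
  have := Subgroup.mem_center_iff.1 (commutatorElement_mem_center hk y) x
  rw [commutatorElement_mul_right_eq_mul_conj, mul_assoc _ x, this, ← mul_assoc,
    mul_inv_cancel_right]

theorem commutatorElement_mul_left {l : Q} (hl : l ∈ Subgroup.upperCentralSeries Q 2)
    (k x : Q) : ⁅k * l, x⁆ = ⁅k, x⁆ * ⁅l, x⁆ := by
  have := Subgroup.mem_center_iff.1 (commutatorElement_mem_center hl x)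
  rw [commutatorElement_mul_left_eq_conj_mul, this k, mul_inv_cancel_right, this]

end SecondCenter

section Abelianization

variable {Q X : Type*} [Group Q] [AddCommGroup X]

/-- The class of an element in the additively written abelianization. -/
def ab : Additive Q →+ Additive (Abelianization Q) := Abelianization.of.toAdditive

theorem ab_surjective : Function.Surjective (ab (Q := Q)) :=
  QuotientGroup.mk_surjective (s := commutator Q)

/-- The extension of an additive map to the additively written abelianization. -/
def abLift (f : Additive Q →+ X) : Additive (Abelianization Q) →ₗ[ℤ] X :=
  (Abelianization.lift (AddMonoidHom.toMultiplicativeRight f)).toAdditiveLeft.toIntLinearMap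

theorem abHom_ext {f₁ f₂ : Additive (Abelianization Q) →ₗ[ℤ] X}
    (h : ∀ x, f₁ (ab x) = f₂ (ab x)) : f₁ = f₂ :=
  LinearMap.ext <| ab_surjective.forall.2 h

/-- The pairing `(k, x) ↦ ⁅k, x⁆` between the second center and the abelianization, with values in
the center. -/
def secondCenterPairing : Additive (Subgroup.upperCentralSeries Q 2) →+
    Additive (Abelianization Q) →ₗ[ℤ] Additive (Subgroup.center Q) :=
  AddMonoidHom.mk' (fun k => abLift <| AddMonoidHom.mk'
    (fun x => Additive.ofMul ⟨⁅k.toMul.1, x.toMul⁆, commutatorElement_mem_center k.toMul.2 _⟩)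
    fun x y => Subtype.ext <| commutatorElement_mul_right k.toMul.2 x.toMul y.toMul)
    fun k l => abHom_ext fun x =>
      Subtype.ext <| commutatorElement_mul_left l.toMul.2 k.toMul.1 x.toMul

theorem ab_conj (x y : Q) : ab (Additive.ofMul (MulAut.conj x y)) = ab (Additive.ofMul y) :=
  Additive.toMul.injective <| by simp [ab]

theorem secondCenterPairing_characteristic (φ : MulAut Q) (k : Subgroup.upperCentralSeries Q 2)
    (x : Q) :
    secondCenterPairing (Additive.ofMul (MulAut.characteristic _ φ k)) (ab (Additive.ofMul (φ x))) =
      Additive.ofMul (MulAut.characteristic _ φ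
        (secondCenterPairing (Additive.ofMul k) (ab (Additive.ofMul x))).toMul) :=
  Subtype.ext (map_commutatorElement φ (k : Q) x).symm

theorem secondCenterPairing_conj (x : Q) (k : Subgroup.upperCentralSeries Q 2) :
    secondCenterPairing (Additive.ofMul (MulAut.characteristic _ (MulAut.conj x) k)) =
      secondCenterPairing (Additive.ofMul k) :=
  abHom_ext fun y => by
    have := secondCenterPairing_characteristic (MulAut.conj x) k y.toMul
    rwa [ab_conj, characteristic_center_conj] at this

variable (hQ : commutator Q ≤ Subgroup.upperCentralSeries Q 2)

/-- The commutator of two elements, as an element of the second center. -/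
def secondCenterCommutator (x y : Q) : Subgroup.upperCentralSeries Q 2 :=
  ⟨⁅x, y⁆, hQ (Subgroup.commutator_mem_commutator trivial trivial)⟩

theorem secondCenterPairing_mul_right (x y z : Q) :
    secondCenterPairing (Additive.ofMul (secondCenterCommutator hQ x (y * z))) =
      secondCenterPairing (Additive.ofMul (secondCenterCommutator hQ x y)) +
        secondCenterPairing (Additive.ofMul (secondCenterCommutator hQ x z)) := by
  rw [← secondCenterPairing_conj y (secondCenterCommutator hQ x z), ← map_add, ← ofMul_mul]
  congr 2
  refine Subtype.ext ?_
  change ⁅x, y * z⁆ = ⁅x, y⁆ * (y * ⁅x, z⁆ * y⁻¹)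
  simp only [commutatorElement_mul_right_eq_mul_conj, mul_assoc]

theorem secondCenterPairing_mul_left (x y z : Q) :
    secondCenterPairing (Additive.ofMul (secondCenterCommutator hQ (x * y) z)) =
      secondCenterPairing (Additive.ofMul (secondCenterCommutator hQ x z)) +
        secondCenterPairing (Additive.ofMul (secondCenterCommutator hQ y z)) := by
  rw [← secondCenterPairing_conj x (secondCenterCommutator hQ y z), add_comm, ← map_add,
    ← ofMul_mul]
  congr 2
  exact Subtype.ext <| commutatorElement_mul_left_eq_conj_mul x y z

/-- The trilinear map `(x, y, z) ↦ ⁅⁅x, y⁆, z⁆` on the abelianization of a group of class at most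
three, with values in the center. -/
def tripleCommutator : Additive (Abelianization Q) →ₗ[ℤ] Additive (Abelianization Q) →ₗ[ℤ]
    Additive (Abelianization Q) →ₗ[ℤ] Additive (Subgroup.center Q) :=
  abLift <| AddMonoidHom.mk' (fun x => abLift <| AddMonoidHom.mk'
    (fun y => secondCenterPairing <| Additive.ofMul <| secondCenterCommutator hQ x.toMul y.toMul)
    fun y z => secondCenterPairing_mul_right hQ x.toMul y.toMul z.toMul)
    fun x y => abHom_ext fun z => secondCenterPairing_mul_left hQ x.toMul y.toMul z.toMul

theorem tripleCommutator_ab_ab (x y : Q) :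
    tripleCommutator hQ (ab (Additive.ofMul x)) (ab (Additive.ofMul y)) =
      secondCenterPairing (Additive.ofMul (secondCenterCommutator hQ x y)) :=
  rfl

theorem tripleCommutator_ab (x y z : Q) :
    tripleCommutator hQ (ab (Additive.ofMul x)) (ab (Additive.ofMul y)) (ab (Additive.ofMul z)) =
      Additive.ofMul ⟨⁅⁅x, y⁆, z⁆, commutatorElement_mem_center
        (hQ (Subgroup.commutator_mem_commutator trivial trivial)) z⟩ :=
  rfl

theorem secondCenterCommutator_map (φ : MulAut Q) (x y : Q) :
    secondCenterCommutator hQ (φ x) (φ y) =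
      MulAut.characteristic _ φ (secondCenterCommutator hQ x y) :=
  Subtype.ext (map_commutatorElement φ x y).symm

theorem tripleCommutator_jacobi (x y z : Additive (Abelianization Q)) :
    tripleCommutator hQ x y z + tripleCommutator hQ y z x + tripleCommutator hQ z x y = 0 := by
  obtain ⟨x, rfl⟩ := ab_surjective x
  obtain ⟨y, rfl⟩ := ab_surjective y
  obtain ⟨z, rfl⟩ := ab_surjective z
  have hallWitt : tripleCommutator hQ (ab (Additive.ofMul x.toMul)) (ab (Additive.ofMul y.toMul))
        (ab (Additive.ofMul (MulAut.conj y.toMul z.toMul))) +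
      tripleCommutator hQ (ab (Additive.ofMul y.toMul)) (ab (Additive.ofMul z.toMul))
        (ab (Additive.ofMul (MulAut.conj z.toMul x.toMul))) +
      tripleCommutator hQ (ab (Additive.ofMul z.toMul)) (ab (Additive.ofMul x.toMul))
        (ab (Additive.ofMul (MulAut.conj x.toMul y.toMul))) = 0 :=
    Subtype.ext <| commutatorElement_commutatorElement_conj_mul x.toMul y.toMul z.toMul
  simpa only [ab_conj, ofMul_toMul] using hallWitt

section Equivariance

variable {G : Type*} [Group G] {ψ : G →* MulAut Q} {π : G →* A5}
  {ρ : Representation ℤ A5 (Additive (Abelianization Q))}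
  {σ : Representation ℤ A5 (Additive (Subgroup.center Q))}

theorem secondCenterPairing_equivariant
    (hρ : ∀ g x, ρ (π g) (ab (Additive.ofMul x)) = ab (Additive.ofMul (ψ g x)))
    (hσ : ∀ g c, σ (π g) (Additive.ofMul c) = Additive.ofMul (MulAut.characteristic _ (ψ g) c))
    (g : G) (k : Subgroup.upperCentralSeries Q 2) :
    secondCenterPairing (Additive.ofMul (MulAut.characteristic _ (ψ g) k)) =
      ρ.linHom σ (π g) (secondCenterPairing (Additive.ofMul k)) := by
  refine abHom_ext fun x => ?_
  obtain ⟨y, hy⟩ := (ψ g).surjective x.toMul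
  obtain rfl : Additive.ofMul (ψ g y) = x := hy
  rw [secondCenterPairing_characteristic, ← hσ, ofMul_toMul, ← hρ, Representation.linHom_apply,
    LinearMap.comp_apply, LinearMap.comp_apply, Representation.inv_self_apply]

theorem tripleCommutator_equivariant
    (hρ : ∀ g x, ρ (π g) (ab (Additive.ofMul x)) = ab (Additive.ofMul (ψ g x)))
    (hσ : ∀ g c, σ (π g) (Additive.ofMul c) = Additive.ofMul (MulAut.characteristic _ (ψ g) c))
    (g : G) (x y z : Additive (Abelianization Q)) :
    σ (π g) (tripleCommutator hQ x y z) =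
      tripleCommutator hQ (ρ (π g) x) (ρ (π g) y) (ρ (π g) z) := by
  obtain ⟨x, rfl⟩ := ab_surjective x
  obtain ⟨y, rfl⟩ := ab_surjective y
  have hpair := secondCenterPairing_equivariant hρ hσ g (secondCenterCommutator hQ x.toMul y.toMul)
  rw [← secondCenterCommutator_map, ← tripleCommutator_ab_ab, ← tripleCommutator_ab_ab, ← hρ,
    ← hρ] at hpair
  simpa [Representation.linHom_apply] using (LinearMap.congr_fun hpair (ρ (π g) z)).symm

theorem tripleCommutator_mem_normKernel (hπ : Function.Surjective π)
    (hρ : ∀ g x, ρ (π g) (ab (Additive.ofMul x)) = ab (Additive.ofMul (ψ g x)))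
    (hσ : ∀ g c, σ (π g) (Additive.ofMul c) = Additive.ofMul (MulAut.characteristic _ (ψ g) c))
    {g : G} (hg : π g = cycle) (hs : IsSplitting 5 (ψ g)) (x y : Additive (Abelianization Q)) :
    tripleCommutator hQ x y ∈ normKernel (ρ.linHom σ) := by
  obtain ⟨x, rfl⟩ := ab_surjective x
  obtain ⟨y, rfl⟩ := ab_surjective y
  exact (hs.characteristic (Subgroup.upperCentralSeries Q 2)).mem_normKernel hπ
    (α := (MulAut.characteristic _).comp ψ) hg
    secondCenterPairing (secondCenterPairing_equivariant hρ hσ)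
    (Additive.ofMul (secondCenterCommutator hQ x.toMul y.toMul))

end Equivariance

end Abelianization

section CentralSeries

variable {N : Type*} [Group N] {n : ℕ}

theorem lowerCentralSeries_eq_bot_of_le_succ [Group.IsNilpotent N]
    (h : (⊤ : Subgroup N).lowerCentralSeries n ≤ (⊤ : Subgroup N).lowerCentralSeries (n + 1)) :
    (⊤ : Subgroup N).lowerCentralSeries n = ⊥ := by
  obtain ⟨m, hm⟩ := Subgroup.nilpotent_iff_lowerCentralSeries.1 ‹Group.IsNilpotent N›
  have le_add (k : ℕ) : (⊤ : Subgroup N).lowerCentralSeries n ≤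
      (⊤ : Subgroup N).lowerCentralSeries (n + k) := by
    induction k with
    | zero => exact le_rfl
    | succ k ih => exact h.trans (Subgroup.commutator_mono ih le_rfl)
  exact eq_bot_iff.2 <| (le_add m).trans <|
    hm ▸ Subgroup.lowerCentralSeries_antitone _ (Nat.le_add_left m n)

theorem lowerCentralSeries_le_upperCentralSeries {m : ℕ}
    (h : (⊤ : Subgroup N).lowerCentralSeries (n + m) = ⊥) :
    (⊤ : Subgroup N).lowerCentralSeries n ≤ Subgroup.upperCentralSeries N m := by
  induction m generalizing n with
  | zero => exact h.le
  | succ m ih =>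
    exact fun x hx => Subgroup.mem_upperCentralSeries_succ_iff.2 fun y =>
      ih (n := n + 1) (by rwa [Nat.add_right_comm]) <|
        Subgroup.commutator_mem_commutator hx (Subgroup.mem_top y)

theorem lowerCentralSeries_quotient_eq_bot_iff {K : Subgroup N} [K.Normal] :
    (⊤ : Subgroup (N ⧸ K)).lowerCentralSeries n = ⊥ ↔
      (⊤ : Subgroup N).lowerCentralSeries n ≤ K := by
  rw [← Subgroup.map_top_of_surjective _ (QuotientGroup.mk'_surjective K),
    ← Subgroup.map_lowerCentralSeries, Subgroup.map_eq_bot_iff, QuotientGroup.ker_mk']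

end CentralSeries

section ClassThree

variable {G Q : Type*} [Group G] [Group Q]

/-- The automorphism of the abelianization induced by an automorphism. -/
def abelianizationAut : MulAut Q →* MulAut (Abelianization Q) where
  toFun φ := φ.abelianizationCongr
  map_one' := abelianizationCongr_refl
  map_mul' φ χ := (abelianizationCongr_trans χ φ).symm

theorem abelianizationAut_conj (q : Q) : abelianizationAut (MulAut.conj q) = 1 := by
  ext x
  obtain ⟨y, rfl⟩ := QuotientGroup.mk_surjective (s := commutator Q) x
  exact mul_inv_cancel_comm (Abelianization.of q) (Abelianization.of y)

variable {ψ : G →* MulAut Q} {π : G →* A5} {g : G}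

theorem exists_representation_abelianization (hπ : Function.Surjective π)
    (hψ : ∀ h ∈ π.ker, ψ h ∈ (MulAut.conj : Q →* MulAut Q).range) (hg : π g = cycle)
    (hs : IsSplitting 5 (ψ g)) :
    ∃ ρ : Representation ℤ A5 (Additive (Abelianization Q)),
      (∀ h x, ρ (π h) (ab (Additive.ofMul x)) = ab (Additive.ofMul (ψ h x))) ∧
        normKernel ρ = ⊤ := by
  obtain ⟨ρ, hρ⟩ := exists_representation_apply (abelianizationAut.comp ψ) hπ fun h hh => by
    obtain ⟨q, hq⟩ := hψ h hh
    rw [MonoidHom.mem_ker, MonoidHom.comp_apply, ← hq, abelianizationAut_conj]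
  have hρ_ab (h : G) (x : Q) : ρ (π h) (ab (Additive.ofMul x)) = ab (Additive.ofMul (ψ h x)) :=
    hρ h (Abelianization.of x)
  exact ⟨ρ, hρ_ab, eq_top_iff.2 fun y _ =>
    have ⟨x, hx⟩ := ab_surjective y
    hx ▸ hs.mem_normKernel hπ hg ab (fun h x => (hρ_ab h x).symm) x⟩

theorem exists_representation_center (hπ : Function.Surjective π)
    (hψ : ∀ h ∈ π.ker, ψ h ∈ (MulAut.conj : Q →* MulAut Q).range) (hg : π g = cycle)
    (hs : IsSplitting 5 (ψ g)) :
    ∃ σ : Representation ℤ A5 (Additive (Subgroup.center Q)),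
      (∀ h c, σ (π h) (Additive.ofMul c) = Additive.ofMul (MulAut.characteristic _ (ψ h) c)) ∧
        normKernel σ = ⊤ := by
  obtain ⟨σ, hσ⟩ := exists_representation_apply
    ((MulAut.characteristic (Subgroup.center Q)).comp ψ) hπ fun h hh => by
      obtain ⟨q, hq⟩ := hψ h hh
      rw [MonoidHom.mem_ker, MonoidHom.comp_apply, ← hq, characteristic_center_conj]
  exact ⟨σ, hσ, eq_top_iff.2 fun x _ =>
    (hs.characteristic (Subgroup.center Q)).mem_normKernel hπ
      (α := (MulAut.characteristic _).comp ψ) hg (AddMonoidHom.id _) (fun h c => (hσ h c).symm) x⟩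

theorem commutator_le_center_of_le_upperCentralSeries_two
    (hQ : commutator Q ≤ Subgroup.upperCentralSeries Q 2) (h2 : (Nat.card Q).Coprime 2)
    (h5 : (Nat.card Q).Coprime 5) (hπ : Function.Surjective π)
    (hψ : ∀ h ∈ π.ker, ψ h ∈ (MulAut.conj : Q →* MulAut Q).range) (hg : π g = cycle)
    (hs : IsSplitting 5 (ψ g)) : commutator Q ≤ Subgroup.center Q := by
  obtain ⟨ρ, hρ, hρ_top⟩ := exists_representation_abelianization hπ hψ hg hs
  obtain ⟨σ, hσ, hσ_top⟩ := exists_representation_center hπ hψ hg hs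
  have h2_ab := h2.coprime_dvd_left (Subgroup.card_quotient_dvd_card (commutator Q))
  have h2_center := h2.coprime_dvd_left (Subgroup.card_subgroup_dvd_card (Subgroup.center Q))
  have h5_center := h5.coprime_dvd_left (Subgroup.card_subgroup_dvd_card (Subgroup.center Q))
  have triple_eq_zero : tripleCommutator hQ = 0 :=
    trilinear_eq_zero (ρ := ρ) (σ := σ) (isSMulRegular_additive h2_ab)
      (isSMulRegular_additive h2_center) (isSMulRegular_additive h5_center)
      (hπ.forall.2 fun h => tripleCommutator_equivariant hQ hρ hσ h) hρ_top hσ_top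
      (tripleCommutator_mem_normKernel hQ hπ hρ hσ hg hs) (tripleCommutator_jacobi hQ)
  refine Subgroup.commutator_le.2 fun x _ y _ => Subgroup.mem_center_iff.2 fun z => ?_
  have := tripleCommutator_ab hQ x y z
  rw [triple_eq_zero] at this
  exact (commutatorElement_eq_one_iff_mul_comm.1 (congrArg Subtype.val this).symm).symm

theorem upperCentralSeries_two_eq_top_of_isSplitting {N : Type*} [Group N] [Group.IsNilpotent N]
    {ψ : G →* MulAut N} (h2 : (Nat.card N).Coprime 2) (h5 : (Nat.card N).Coprime 5)
    (hπ : Function.Surjective π) (hψ : ∀ h ∈ π.ker, ψ h ∈ (MulAut.conj : N →* MulAut N).range)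
    (hg : π g = cycle) (hs : IsSplitting 5 (ψ g)) : Subgroup.upperCentralSeries N 2 = ⊤ := by
  rw [← Subgroup.lowerCentralSeries_eq_bot_iff_upperCentralSeries_eq_top]
  apply lowerCentralSeries_eq_bot_of_le_succ
  set L := (⊤ : Subgroup N).lowerCentralSeries 3
  have hL : L.Characteristic := inferInstance
  have class_three : commutator (N ⧸ L) ≤ Subgroup.upperCentralSeries (N ⧸ L) 2 :=
    lowerCentralSeries_le_upperCentralSeries (n := 1) <|
      lowerCentralSeries_quotient_eq_bot_iff.2 le_rfl
  have hcard := Subgroup.card_quotient_dvd_card L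
  have comm_le_center : commutator (N ⧸ L) ≤ Subgroup.center (N ⧸ L) :=
    commutator_le_center_of_le_upperCentralSeries_two (ψ := (quotientAut L).comp ψ) class_three
      (h2.coprime_dvd_left hcard) (h5.coprime_dvd_left hcard) hπ
      (fun h hh => by
        obtain ⟨x, hx⟩ := hψ h hh
        exact ⟨x, by rw [← quotientAut_conj, hx, MonoidHom.comp_apply]⟩)
      hg (hs.quotientAut L)
  exact lowerCentralSeries_quotient_eq_bot_iff.1 <|
    Subgroup.lowerCentralSeries_succ_eq_bot _ comm_le_center

end ClassThree

theorem cycleType_eq_singleton_card {X : Type*} [Fintype X] [DecidableEq X] {s : Equiv.Perm X}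
    (hX : (Fintype.card X).Prime) (hs : orderOf s = Fintype.card X) :
    s.cycleType = {Fintype.card X} := by
  have hcycle : s.IsCycle := Equiv.Perm.isCycle_of_prime_order'' hX hs
  rw [hcycle.cycleType, ← hcycle.orderOf, hs]

theorem exists_surjective_ker_eq_apply_eq_cycle {G : Type*} [Group G] {R : Subgroup G} [R.Normal]
    (e : (G ⧸ R) ≃* A5) {g : G} (hg : orderOf g = 5) (hgR : g ∉ R) :
    ∃ π : G →* A5, Function.Surjective π ∧ π.ker = R ∧ π g = cycle := by
  have : Fact (Nat.Prime 5) := ⟨Nat.prime_five⟩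
  let p : G →* A5 := e.toMonoidHom.comp (QuotientGroup.mk' R)
  have hp : Function.Surjective p := e.surjective.comp (QuotientGroup.mk'_surjective R)
  have ker_p : p.ker = R := by
    rw [MonoidHom.ker_comp_of_injective _ _ e.injective, QuotientGroup.ker_mk']
  have order_p : orderOf (p g : Equiv.Perm (Fin 5)) = 5 := by
    rw [Subgroup.orderOf_coe]
    exact orderOf_eq_prime (by rw [← map_pow, orderOf_dvd_iff_pow_eq_one.1 hg.dvd, map_one])
      fun h => hgR (ker_p ▸ h)
  have order_cycle : orderOf (cycle : Equiv.Perm (Fin 5)) = 5 :=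
    orderOf_eq_prime (by decide) (by decide)
  obtain ⟨s, hs⟩ := isConj_iff.1 <| Equiv.Perm.isConj_iff_cycleType_eq.2 <|
    (cycleType_eq_singleton_card (X := Fin 5) Nat.prime_five order_p).trans
      (cycleType_eq_singleton_card (X := Fin 5) Nat.prime_five order_cycle).symm
  let c : A5 ≃* A5 := MulAut.conjNormal s
  exact ⟨c.toMonoidHom.comp p, c.surjective.comp hp,
    (MonoidHom.ker_comp_of_injective p c.toMonoidHom c.injective).trans ker_p, Subtype.ext hs⟩

end AltFive

theorem class_at_most_two_of_fpf_order_five_general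
    {G : Type*} [Group G] (R : Subgroup G) [R.Normal] [Finite R] [Group.IsNilpotent R]
    (hodd : Odd (Nat.card R)) (hquot : Nonempty ((G ⧸ R) ≃* alternatingGroup (Fin 5)))
    (g : G) (hg : orderOf g = 5) (hfpf : ∀ x ∈ R, g * x * g⁻¹ = x → x = 1) :
    Subgroup.upperCentralSeries R 2 = ⊤ := by
  obtain ⟨e⟩ := hquot
  have g_notMem : g ∉ R := fun hgR => by
    simp [hfpf g hgR (mul_inv_cancel_right g g)] at hg
  obtain ⟨π, hπ, rfl, hπg⟩ := AltFive.exists_surjective_ker_eq_apply_eq_cycle e hg g_notMem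
  have conj_pow_five : (MulAut.conjNormal g : MulAut π.ker) ^ 5 = 1 := by
    rw [← map_pow, orderOf_dvd_iff_pow_eq_one.1 hg.dvd, map_one]
  have conj_fpf : MonoidHom.FixedPointFree (MulAut.conjNormal g : MulAut π.ker) :=
    fun x hx => Subtype.ext <| hfpf x x.2 <| congrArg Subtype.val hx
  have : Fact (Nat.Prime 5) := ⟨Nat.prime_five⟩
  exact AltFive.upperCentralSeries_two_eq_top_of_isSplitting (ψ := MulAut.conjNormal)
    hodd.coprime_two_right (AltFive.coprime_card_of_fixedPointFree conj_pow_five conj_fpf) hπ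
    (fun h hh => ⟨⟨h, hh⟩, by ext; rfl⟩) hπg (.of_fixedPointFree conj_pow_five conj_fpf)

/-- Theorem 3.1 (Astill–Parker–Waldecker): if `G` is a finite group with a normal
`r`-subgroup `R` (with `r` an odd prime, `r ≠ 5`) such that `G ⧸ R ≅ Alt(5)`, and some
element of order `5` of `G` acts fixed point freely on `R` by conjugation, then `R` is
nilpotent of class at most two. -/
theorem class_at_most_two_of_fpf_order_five
    (r : ℕ) (hr : r.Prime) (hodd : Odd r) (hr5 : r ≠ 5)
    (G : Type*) [Group G] [Finite G]
    (R : Subgroup G) (hRnormal : R.Normal)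
    (hRcard : ∃ k : ℕ, Nat.card R = r ^ k)
    (hquot : Nonempty ((G ⧸ R) ≃* alternatingGroup (Fin 5)))
    (g : G) (hg : orderOf g = 5)
    (hfpf : ∀ x ∈ R, g * x * g⁻¹ = x → x = 1) :
    Group.IsNilpotent R ∧ upperCentralSeries R 2 = ⊤ := by
  obtain ⟨k, hk⟩ := hRcard
  have := Fact.mk hr
  have hnil : Group.IsNilpotent R := (IsPGroup.of_card hk).isNilpotent
  exact ⟨hnil, class_at_most_two_of_fpf_order_five_general R (hk ▸ hodd.pow) hquot g hg hfpf⟩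
end

section
/- Let r be an odd prime with r ≠ 5 and let V be the deleted permutation module over ZMod r with the action of X = Equiv.Perm (Fin 5). Define the ZMod r-linear endomorphism θ of V by (θ f)(j) = 3 * f 0 if j = 0 and (θ f)(j) = −(f 0) − f j if j ≠ 0. Let X act on the endomorphism space End(V) by conjugation: g • φ = ρ(g) ∘ φ ∘ ρ(g)⁻¹, where ρ(g) denotes the action of g on V. Then the ZMod r-linear span of the X-orbit of θ in End(V) has dimension 4 and is X-equivariantly isomorphic to V. -/
/-!
Let `c` be the centering map `f ↦ 5 f - ∑ i, f i`, whose values lie in `V`, and send `a : V` to the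
endomorphism `f ↦ c (a f)`, with `a f` the pointwise product. This is equivariant, and it is
injective: for `f = eᵢ - eⱼ` and `l ≠ i, j`, the `l`-th coordinate of `c (a f) = 0` shows that
`a f` has sum zero, and then the `i`-th one reads `5 aᵢ = 0`. It sends `c e₀` to `5 θ`, and the
orbit `{c eᵢ}` of `c e₀` spans `V` because `5 f = c f = ∑ i, f i • c eᵢ` for `f` in `V`. Hence its
image is the span of the orbit of `θ`.
-/

/-- The deleted permutation module: functions `Fin 5 → ZMod r` summing to zero. -/
def V (r : ℕ) : Submodule (ZMod r) (Fin 5 → ZMod r) where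
  carrier := {f | ∑ i, f i = 0}
  add_mem' := by
    intro a b ha hb
    simp only [Set.mem_setOf_eq, Pi.add_apply, Finset.sum_add_distrib] at *
    rw [ha, hb, add_zero]
  zero_mem' := by simp
  smul_mem' := by
    intro c f hf
    simp only [Set.mem_setOf_eq, Pi.smul_apply, smul_eq_mul, ← Finset.mul_sum] at *
    rw [hf, mul_zero]

/-- The permutation action of `Equiv.Perm (Fin 5)` on `V r`, given by `σ • f = f ∘ σ⁻¹`. -/
def rho (r : ℕ) : Representation (ZMod r) (Equiv.Perm (Fin 5)) (V r) where
  toFun σ :=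
    { toFun := fun f => ⟨fun i => (f : Fin 5 → ZMod r) (σ⁻¹ i),
        (Equiv.sum_comp σ⁻¹ (f : Fin 5 → ZMod r)).trans f.2⟩
      map_add' := fun _ _ => rfl
      map_smul' := fun _ _ => rfl }
  map_one' := rfl
  map_mul' := fun _ _ => rfl

/-- The endomorphism `θ` of `V`: `(θ f) 0 = 3 * f 0` and `(θ f) j = - f 0 - f j`
for `j ≠ 0`. -/
def theta (r : ℕ) : V r →ₗ[ZMod r] V r where
  toFun f := ⟨fun j => if j = 0 then 3 * (f : Fin 5 → ZMod r) 0
      else -(f : Fin 5 → ZMod r) 0 - (f : Fin 5 → ZMod r) j, by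
    have hf : ∑ i, (f : Fin 5 → ZMod r) i = 0 := f.2
    show ∑ j : Fin 5, (if j = 0 then 3 * (f : Fin 5 → ZMod r) 0
      else -(f : Fin 5 → ZMod r) 0 - (f : Fin 5 → ZMod r) j) = 0
    rw [Fin.sum_univ_five] at hf ⊢
    simp only [show ((0:Fin 5) = 0) = True by simp, show ((1:Fin 5) = 0) = False by decide,
      show ((2:Fin 5) = 0) = False by decide, show ((3:Fin 5) = 0) = False by decide,
      show ((4:Fin 5) = 0) = False by decide, if_true, if_false]
    linear_combination -hf⟩
  map_add' := by
    intro f g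
    ext j
    by_cases h : j = 0 <;> simp [h] <;> ring
  map_smul' := by
    intro c f
    ext j
    by_cases h : j = 0 <;> simp [h] <;> ring

/-- The span of the orbit of `θ` under the conjugation action of `Sym(5)` on `End(V)`. -/
def thetaOrbitSpan (r : ℕ) : Submodule (ZMod r) (V r →ₗ[ZMod r] V r) :=
  Submodule.span (ZMod r)
    (Set.range fun σ : Equiv.Perm (Fin 5) => rho r σ ∘ₗ theta r ∘ₗ rho r σ⁻¹)

section Centering

variable (R ι : Type*) [CommRing R] [Fintype ι]

/-- The centering map `f ↦ |ι| f - ∑ i, f i`: the projection onto functions of sum zero along the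
constants, scaled by `|ι|` so that no division is needed. -/
def centering : (ι → R) →ₗ[R] (ι → R) :=
  (Fintype.card ι : R) • LinearMap.id - LinearMap.pi fun _ => ∑ i, LinearMap.proj i

variable {R ι}

lemma centering_apply (f : ι → R) (j : ι) :
    centering R ι f j = Fintype.card ι * f j - ∑ i, f i := by
  simp [centering]

lemma sum_centering (f : ι → R) : ∑ j, centering R ι f j = 0 := by
  simp [centering_apply, ← Finset.mul_sum]

lemma centering_comp_equiv {κ : Type*} [Fintype κ] (f : ι → R) (e : κ ≃ ι) :
    centering R κ (f ∘ e) = centering R ι f ∘ e := by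
  funext j
  simp only [centering_apply, Function.comp_apply, Fintype.card_congr e, Equiv.sum_comp e f]

lemma centering_eq_card_smul {f : ι → R} (hf : ∑ i, f i = 0) :
    centering R ι f = (Fintype.card ι : R) • f := by
  funext j
  simp [centering_apply, hf]

lemma centering_single [DecidableEq ι] (i : ι) :
    centering R ι (Pi.single i 1) = (Fintype.card ι : R) • Pi.single i 1 - 1 := by
  funext j
  simp [centering_apply]

lemma card_smul_eq_sum_smul_centering_single [DecidableEq ι] {f : ι → R} (hf : ∑ i, f i = 0) :
    (Fintype.card ι : R) • f = ∑ i, f i • centering R ι (Pi.single i 1) := by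
  simp only [← map_smul, ← map_sum, ← Pi.single_smul', smul_eq_mul, mul_one,
    Finset.univ_sum_single, centering_eq_card_smul hf]

lemma centering_centering_single_mul [DecidableEq ι] {f : ι → R} (hf : ∑ i, f i = 0) (i : ι) :
    centering R ι (centering R ι (Pi.single i 1) * f)
      = (Fintype.card ι : R) • (f i • centering R ι (Pi.single i 1) - f) := by
  have single_mul : (Pi.single i 1 : ι → R) * f = f i • Pi.single i 1 := by
    rw [← Pi.single_mul_left, ← Pi.single_smul', one_mul, smul_eq_mul, mul_one]
  rw [centering_single, sub_mul, one_mul, smul_mul_assoc, single_mul, map_sub, map_smul, map_smul,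
    centering_eq_card_smul hf, ← centering_single, smul_sub]

lemma eq_zero_of_centering_mul_eq_zero (hι : 2 < Fintype.card ι)
    (hreg : IsLeftRegular (Fintype.card ι : R)) {a : ι → R}
    (ha : ∀ f : ι → R, ∑ i, f i = 0 → centering R ι (a * f) = 0) : a = 0 := by
  classical
  funext i
  obtain ⟨j, hji⟩ := Fintype.exists_ne_of_one_lt_card (one_lt_two.trans hι) i
  obtain ⟨l, hli, hlj⟩ : ∃ l, l ≠ i ∧ l ≠ j :=
    ENat.exists_ne_ne_of_three_le (by simpa using mod_cast hι) i j
  let f : ι → R := Pi.single i 1 - Pi.single j 1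
  have hcentering : centering R ι (a * f) = 0 := ha f (by simp [f])
  have hsum : ∑ k, (a * f) k = 0 := by
    simpa [centering_apply, f, hli, hlj] using congrFun hcentering l
  have hcard : (Fintype.card ι : R) * a i = 0 := by
    simpa [centering_eq_card_smul hsum, f, hji.symm] using congrFun hcentering i
  exact hreg (by simpa using hcard)

end Centering

lemma finrank_ker_sum_proj {R : Type*} [CommRing R] [Nontrivial R] (n : ℕ) :
    Module.finrank R (LinearMap.ker (∑ i, LinearMap.proj i : (Fin (n + 1) → R) →ₗ[R] R)) = n := by
  set K := LinearMap.ker (∑ i, LinearMap.proj i : (Fin (n + 1) → R) →ₗ[R] R)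
  have mem_K (f : Fin (n + 1) → R) : f ∈ K ↔ f 0 + ∑ i : Fin n, f i.succ = 0 := by
    simp [K, Fin.sum_univ_succ]
  let tail : K →ₗ[R] (Fin n → R) := LinearMap.funLeft R R Fin.succ ∘ₗ K.subtype
  have tail_injective : Function.Injective tail := by
    rw [injective_iff_map_eq_zero]
    intro f hf
    have hsucc (i : Fin n) : f.1 i.succ = 0 := congrFun hf i
    have hzero : f.1 0 = 0 := by simpa [hsucc] using (mem_K f).1 f.2
    exact Subtype.ext (funext (Fin.cases hzero hsucc))
  have tail_surjective : Function.Surjective tail := fun g =>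
    ⟨⟨Fin.cons (-∑ i, g i) g, (mem_K _).2 (by simp)⟩, rfl⟩
  rw [(LinearEquiv.ofBijective tail ⟨tail_injective, tail_surjective⟩).finrank_eq,
    Module.finrank_fin_fun]

section DeletedPermutationModule

variable (r : ℕ)

lemma finrank_V [Nontrivial (ZMod r)] : Module.finrank (ZMod r) (V r) = 4 := by
  have hV : V r = LinearMap.ker (∑ i, LinearMap.proj i : (Fin 5 → ZMod r) →ₗ[ZMod r] ZMod r) := by
    ext f
    simp [V]
  rw [hV, finrank_ker_sum_proj]

/-- The centering map with values in `V`. -/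
def centeringV : (Fin 5 → ZMod r) →ₗ[ZMod r] V r :=
  (centering (ZMod r) (Fin 5)).codRestrict (V r) sum_centering

/-- The centered pointwise product `(a, f) ↦ c (a f)` on `V`, where `c` is the centering map; as a
map `V → End V` it is the equivariant embedding onto the span of the orbit of `θ`. -/
def centeredMul : V r →ₗ[ZMod r] V r →ₗ[ZMod r] V r :=
  ((LinearMap.mul (ZMod r) (Fin 5 → ZMod r)).compr₂ (centeringV r)).domRestrict₁₂ (V r) (V r)

variable {r}

lemma coe_rho (σ : Equiv.Perm (Fin 5)) (f : V r) :
    (rho r σ f : Fin 5 → ZMod r) = f ∘ ⇑σ⁻¹ := rfl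

lemma coe_centeringV (f : Fin 5 → ZMod r) :
    (centeringV r f : Fin 5 → ZMod r) = centering (ZMod r) (Fin 5) f := rfl

lemma rho_centeringV (σ : Equiv.Perm (Fin 5)) (f : Fin 5 → ZMod r) :
    rho r σ (centeringV r f) = centeringV r (f ∘ ⇑σ⁻¹) :=
  Subtype.ext (centering_comp_equiv f σ⁻¹).symm

lemma centeredMul_apply (a f : V r) :
    centeredMul r a f = centeringV r (a * f : Fin 5 → ZMod r) := rfl

lemma rho_comp_centeredMul_comp_rho_inv (σ : Equiv.Perm (Fin 5)) (a : V r) :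
    rho r σ ∘ₗ centeredMul r a ∘ₗ rho r σ⁻¹ = centeredMul r (rho r σ a) := by
  ext1 f
  have hmul : (a * rho r σ⁻¹ f : Fin 5 → ZMod r) ∘ ⇑σ⁻¹ = rho r σ a * f := by
    funext j
    simp [coe_rho]
  rw [LinearMap.comp_apply, LinearMap.comp_apply, centeredMul_apply, rho_centeringV, hmul,
    centeredMul_apply]

lemma centeredMul_injective (h5 : IsLeftRegular (5 : ZMod r)) :
    Function.Injective (centeredMul r) := by
  rw [injective_iff_map_eq_zero]
  intro a ha
  refine Subtype.ext (eq_zero_of_centering_mul_eq_zero (by simp) (by simpa using h5) ?_)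
  intro f hf
  exact congrArg Subtype.val (LinearMap.congr_fun ha ⟨f, hf⟩)

lemma theta_eq_smul_centeringV_sub (f : V r) :
    theta r f = (f : Fin 5 → ZMod r) 0 • centeringV r (Pi.single 0 1) - f := by
  ext j
  rcases eq_or_ne j 0 with rfl | hj
  · suffices 3 * f.1 0 = f.1 0 * (5 - 1) - f.1 0 by
      simpa [theta, coe_centeringV, centering_single]
    ring
  · simp [theta, coe_centeringV, centering_single, hj]

lemma centeredMul_centeringV_single_zero :
    centeredMul r (centeringV r (Pi.single 0 1)) = (5 : ZMod r) • theta r := by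
  ext1 f
  rw [LinearMap.smul_apply, theta_eq_smul_centeringV_sub]
  exact Subtype.ext (centering_centering_single_mul f.2 0)

lemma rho_swap_centeringV_single_zero (i : Fin 5) :
    rho r (Equiv.swap 0 i) (centeringV r (Pi.single 0 1)) = centeringV r (Pi.single i 1) := by
  rw [rho_centeringV, Equiv.swap_inv, Pi.single_comp_equiv, Equiv.symm_swap, Equiv.swap_apply_left]

lemma span_range_rho_centeringV_single_zero (h5 : IsUnit (5 : ZMod r)) :
    Submodule.span (ZMod r) (Set.range fun σ => rho r σ (centeringV r (Pi.single 0 1))) = ⊤ := by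
  rw [Submodule.eq_top_iff']
  intro f
  have hf : (5 : ZMod r) • f
      = ∑ i, f.1 i • rho r (Equiv.swap 0 i) (centeringV r (Pi.single 0 1)) := by
    ext1
    simpa [rho_swap_centeringV_single_zero, coe_centeringV]
      using card_smul_eq_sum_smul_centering_single f.2
  rw [← Submodule.smul_mem_iff_of_isUnit _ h5, hf]
  exact Submodule.sum_mem _ fun i _ =>
    Submodule.smul_mem _ _ (Submodule.subset_span (Set.mem_range_self _))

open scoped Pointwise in
lemma range_centeredMul (h5 : IsUnit (5 : ZMod r)) :
    LinearMap.range (centeredMul r) = thetaOrbitSpan r := by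
  have horbit (σ : Equiv.Perm (Fin 5)) :
      centeredMul r (rho r σ (centeringV r (Pi.single 0 1)))
        = (5 : ZMod r) • (rho r σ ∘ₗ theta r ∘ₗ rho r σ⁻¹) := by
    rw [← rho_comp_centeredMul_comp_rho_inv, centeredMul_centeringV_single_zero,
      LinearMap.smul_comp, LinearMap.comp_smul]
  calc LinearMap.range (centeredMul r)
      = Submodule.span (ZMod r)
          (Set.range fun σ => centeredMul r (rho r σ (centeringV r (Pi.single 0 1)))) := by
        rw [LinearMap.range_eq_map, ← span_range_rho_centeringV_single_zero h5,
          Submodule.map_span, ← Set.range_comp']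
    _ = Submodule.span (ZMod r)
          ((5 : ZMod r) • Set.range fun σ => rho r σ ∘ₗ theta r ∘ₗ rho r σ⁻¹) := by
        simp only [horbit, ← Set.range_smul]
    _ = thetaOrbitSpan r := Submodule.span_smul_eq_of_isUnit _ _ h5

end DeletedPermutationModule

theorem theta_orbit_span_dim_four_iso_V_general
    (r : ℕ) (hr : r ≠ 1) (hr5 : Nat.Coprime 5 r) :
    Module.finrank (ZMod r) (thetaOrbitSpan r) = 4 ∧
    ∃ e : thetaOrbitSpan r ≃ₗ[ZMod r] V r,
      ∀ g : Equiv.Perm (Fin 5), ∀ φ ψ : thetaOrbitSpan r,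
        (φ : V r →ₗ[ZMod r] V r) = rho r g ∘ₗ (ψ : V r →ₗ[ZMod r] V r) ∘ₗ rho r g⁻¹ →
        e φ = rho r g (e ψ) := by
  have : Nontrivial (ZMod r) := ZMod.nontrivial_iff.2 hr
  have h5 : IsUnit (5 : ZMod r) := (ZMod.isUnit_iff_coprime 5 r).2 hr5
  let e : V r ≃ₗ[ZMod r] thetaOrbitSpan r :=
    LinearEquiv.ofInjective (centeredMul r) (centeredMul_injective h5.isRegular.left) ≪≫ₗ
      LinearEquiv.ofEq _ _ (range_centeredMul h5)
  have coe_e (a : V r) : (e a : V r →ₗ[ZMod r] V r) = centeredMul r a := rfl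
  refine ⟨e.finrank_eq.symm.trans (finrank_V r), e.symm, fun g φ ψ hφ => ?_⟩
  rw [LinearEquiv.symm_apply_eq]
  apply Subtype.ext
  rw [coe_e, ← rho_comp_centeredMul_comp_rho_inv, ← coe_e, LinearEquiv.apply_symm_apply, hφ]

/-- Lemma 2.3 (Astill–Parker–Waldecker): for an odd prime `r ≠ 5`, the span of the
`Sym(5)`-orbit of `θ` in `End(V)` (with the conjugation action) is `4`-dimensional and
is `Sym(5)`-equivariantly isomorphic to `V`. -/
theorem theta_orbit_span_dim_four_iso_V
    (r : ℕ) (hr : r.Prime) (hodd : Odd r) (hr5 : r ≠ 5) :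
    Module.finrank (ZMod r) (thetaOrbitSpan r) = 4 ∧
    ∃ e : thetaOrbitSpan r ≃ₗ[ZMod r] V r,
      ∀ g : Equiv.Perm (Fin 5), ∀ φ ψ : thetaOrbitSpan r,
        (φ : V r →ₗ[ZMod r] V r) = rho r g ∘ₗ (ψ : V r →ₗ[ZMod r] V r) ∘ₗ rho r g⁻¹ →
        e φ = rho r g (e ψ) := by
  exact theta_orbit_span_dim_four_iso_V_general r hr.ne_one
    ((Nat.coprime_primes Nat.prime_five hr).2 hr5.symm)
end

section
/- The alternating group on 6 letters, alternatingGroup (Fin 6), admits no injective group homomorphism into the general linear group GL₄(ℤ/9ℤ) of invertible 4×4 matrices over ZMod 9. Equivalently, Alt(6) is not isomorphic to any subgroup of GL₄(ℤ/9ℤ). -/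
/-!
In `Alt(6)` the elements `a = (0 1 2)` and `b = (3 4 5)` commute, and every nontrivial `g ∈ ⟨a, b⟩`
cyclically permutes the involutions of a Klein four subgroup. Suppose `Alt(6)` is embedded in
`GL₄(ℤ/9ℤ)` and reduce modulo 3. The Klein four subgroups rule out `(g - 1)² = 0`, so the nilpotent
`x = a - 1` has Jordan type (3, 1) and `y = b - 1`, which commutes with it, satisfies `y x = β x²`
for some scalar `β`. Replacing `b` by `b aᵏ` with `k ≡ -β` gives `y x = 0`, which forces
`y² = ± x²`. With the sign `-` we get `(a b - 1)² = 0`, a contradiction, while the sign `+` is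
incompatible with `a` and `b` being the reductions of elements of order 3 modulo 9.
-/

open Module

lemma mul_one_add_pow_mul {K R : Type*} [CommRing K] [Ring R] [Algebra K R] {x b : R} {β : K}
    (hx : x ^ 3 = 0) (hb : b * x = x + β • x ^ 2) (k : ℕ) :
    b * (1 + x) ^ k * x = x + (k + β) • x ^ 2 := by
  induction k with
  | zero => simp [hb]
  | succ k ih =>
    calc b * (1 + x) ^ (k + 1) * x = b * (1 + x) ^ k * x * (1 + x) := by
          rw [pow_succ]; noncomm_ring
      _ = x + x ^ 2 + (k + β) • (x ^ 2 + x ^ 3) := by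
          rw [ih, add_mul, smul_mul_assoc]; noncomm_ring
      _ = x + ((k + 1 : ℕ) + β) • x ^ 2 := by
          rw [hx, add_zero]; push_cast; module

section CommutingEndomorphisms

variable {R M : Type*} [Semiring R] [AddCommMonoid M] [Module R M]

lemma map_range_le_of_commute {f g : End R M} (h : Commute f g) : f.range.map g ≤ f.range := by
  rw [← LinearMap.range_comp, ← End.mul_eq_comp, ← h.eq]
  exact LinearMap.range_comp_le_range g f

lemma map_ker_le_of_commute {f g : End R M} (h : Commute f g) : f.ker.map g ≤ f.ker := by
  rw [Submodule.map_le_iff_le_comap, ← LinearMap.ker_comp, ← End.mul_eq_comp, h.eq]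
  exact LinearMap.ker_le_ker_comp f g

end CommutingEndomorphisms

section LinearAlgebra

variable {K V : Type*} [Field K] [AddCommGroup V] [Module K V]

lemma finrank_map_add_finrank_ker_inf [FiniteDimensional K V] (f : End K V) (W : Submodule K V) :
    finrank K (W.map f) + finrank K (f.ker ⊓ W : Submodule K V) = finrank K W := by
  have h := (f.domRestrict W).finrank_range_add_finrank_ker
  rwa [LinearMap.range_domRestrict, LinearMap.ker_domRestrict,
    ← Submodule.finrank_map_subtype_eq, Submodule.map_comap_subtype, inf_comm] at h

lemma map_le_of_isNilpotent_of_finrank_le [FiniteDimensional K V] {f : End K V}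
    {W' W : Submodule K V} (hf : IsNilpotent f) (hfW' : W'.map f ≤ W') (hfW : W.map f ≤ W)
    (hle : W' ≤ W) (hrank : finrank K W ≤ finrank K W' + 1) : W.map f ≤ W' := by
  by_contra hnot
  have hsup : W' ⊔ W.map f = W := by
    refine Submodule.eq_of_le_of_finrank_le (sup_le hle hfW) ?_
    have := Submodule.finrank_lt_finrank_of_lt (left_lt_sup.mpr hnot)
    omega
  have hpow (n : ℕ) : W' ⊔ W.map (f ^ n) = W := by
    induction n with
    | zero => simpa [End.one_eq_id] using hle
    | succ n ih =>
      have hmap : W.map (f ^ (n + 1)) = (W.map (f ^ n)).map f := by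
        rw [pow_succ', End.mul_eq_comp, Submodule.map_comp]
      conv_rhs => rw [← hsup, ← ih, Submodule.map_sup, ← sup_assoc, sup_eq_left.mpr hfW', ← hmap]
  obtain ⟨n, hn⟩ := hf
  have hWW' : W' = W := by simpa [hn] using hpow n
  exact hnot (hWW' ▸ hfW)

lemma exists_eq_smul_of_ker_le_ker {V₂ : Type*} [AddCommGroup V₂] [Module K V₂] {f g : V →ₗ[K] V₂}
    (hg : finrank K g.range = 1) (hker : g.ker ≤ f.ker) (hrange : f.range ≤ g.range) :
    ∃ c : K, f = c • g := by
  obtain ⟨⟨_, e, rfl⟩, -, hspan⟩ := finrank_eq_one_iff'.mp hg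
  have hmul (w : V₂) (hw : w ∈ g.range) : ∃ c : K, c • g e = w :=
    (hspan ⟨w, hw⟩).imp fun _ h => congrArg Subtype.val h
  obtain ⟨c, hc⟩ := hmul (f e) (hrange ⟨e, rfl⟩)
  refine ⟨c, LinearMap.ext fun v => ?_⟩
  obtain ⟨d, hd⟩ := hmul (g v) ⟨v, rfl⟩
  have hv : f (v - d • e) = 0 := hker (by simp [hd])
  rw [map_sub, map_smul, sub_eq_zero] at hv
  rw [hv, ← hc, LinearMap.smul_apply, ← hd, smul_comm]

section JordanTypeThreeOne

variable {X Y : End K V} (hV : finrank K V = 4) (hX3 : X ^ 3 = 0) (hX2 : X ^ 2 ≠ 0)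

include hV hX3 hX2

lemma finrank_ker_range_of_pow_three_eq_zero :
    finrank K X.ker = 2 ∧ finrank K X.range = 2 ∧ finrank K (X ^ 2).range = 1 ∧
      finrank K (X.ker ⊓ X.range : Submodule K V) = 1 := by
  have : FiniteDimensional K V := finite_of_finrank_pos (by omega)
  have hr2 : X.range.map X = (X ^ 2).range := by rw [sq, End.mul_eq_comp, LinearMap.range_comp]
  have hr3 : (X ^ 2).range.map X = ⊥ := by
    rw [← LinearMap.range_comp, ← End.mul_eq_comp, ← pow_succ', hX3, LinearMap.range_zero]
  -- The ranks `r₁`, `r₂` of `X`, `X ^ 2` satisfy `4 - r₁ ≥ r₁ - r₂ ≥ r₂ ≥ 1`.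
  have h₁ := X.finrank_range_add_finrank_ker
  have h₂ := finrank_map_add_finrank_ker_inf X X.range
  have h₃ := finrank_map_add_finrank_ker_inf X (X ^ 2).range
  rw [hr2] at h₂
  rw [hr3, finrank_bot] at h₃
  have h₄ : finrank K (X.ker ⊓ X.range : Submodule K V) ≤ finrank K X.ker :=
    Submodule.finrank_mono inf_le_left
  have h₅ : finrank K (X.ker ⊓ (X ^ 2).range : Submodule K V) ≤
      finrank K (X.ker ⊓ X.range : Submodule K V) :=
    Submodule.finrank_mono (inf_le_inf_left _ (hr2 ▸ LinearMap.map_le_range))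
  have hpos : 0 < finrank K (X ^ 2).range :=
    Submodule.one_le_finrank_iff.mpr (mt LinearMap.range_eq_bot.mp hX2)
  omega

lemma ker_sq_eq_ker_sup_range : (X ^ 2).ker = X.ker ⊔ X.range := by
  have : FiniteDimensional K V := finite_of_finrank_pos (by omega)
  obtain ⟨hker, hrange, hrange2, hinf⟩ := finrank_ker_range_of_pow_three_eq_zero hV hX3 hX2
  symm
  refine Submodule.eq_of_le_of_finrank_le (sup_le ?_ ?_) ?_
  · rw [sq, End.mul_eq_comp]
    exact LinearMap.ker_le_ker_comp X X
  · rw [LinearMap.range_le_ker_iff, ← End.mul_eq_comp, ← pow_succ, hX3]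
  · have := (X ^ 2).finrank_range_add_finrank_ker
    have := Submodule.finrank_sup_add_finrank_inf_eq X.ker X.range
    omega

lemma mul_sq_eq_zero_of_isNilpotent (hXY : Commute X Y) (hY : IsNilpotent Y) : Y * X ^ 2 = 0 := by
  have : FiniteDimensional K V := finite_of_finrank_pos (by omega)
  obtain ⟨-, -, hrange2, -⟩ := finrank_ker_range_of_pow_three_eq_zero hV hX3 hX2
  have hle : (X ^ 2).range.map Y ≤ ⊥ :=
    map_le_of_isNilpotent_of_finrank_le hY (by simp) (map_range_le_of_commute (hXY.pow_left 2))
      bot_le (by simp [hrange2])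
  rwa [← LinearMap.range_comp, ← End.mul_eq_comp, le_bot_iff, LinearMap.range_eq_bot] at hle

lemma exists_mul_eq_smul_sq (hXY : Commute X Y) (hY : IsNilpotent Y) :
    ∃ β : K, Y * X = β • X ^ 2 := by
  have : FiniteDimensional K V := finite_of_finrank_pos (by omega)
  obtain ⟨-, hrange, hrange2, -⟩ := finrank_ker_range_of_pow_three_eq_zero hV hX3 hX2
  refine exists_eq_smul_of_ker_le_ker hrange2 ?_ ?_
  · rw [ker_sq_eq_ker_sup_range hV hX3 hX2]
    refine sup_le (LinearMap.ker_le_ker_comp X Y) ?_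
    rw [LinearMap.range_le_ker_iff, ← End.mul_eq_comp, mul_assoc, ← sq,
      mul_sq_eq_zero_of_isNilpotent hV hX3 hX2 hXY hY]
  · rw [End.mul_eq_comp, LinearMap.range_comp]
    exact map_le_of_isNilpotent_of_finrank_le hY (map_range_le_of_commute (hXY.pow_left 2))
      (map_range_le_of_commute hXY) (LinearMap.range_comp_le_range X X) (by omega)

lemma exists_sq_eq_smul_sq (hXY : X * Y = 0) (hYX : Y * X = 0) (hY : IsNilpotent Y) :
    ∃ c : K, Y ^ 2 = c • X ^ 2 := by
  have : FiniteDimensional K V := finite_of_finrank_pos (by omega)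
  obtain ⟨hker, -, hrange2, -⟩ := finrank_ker_range_of_pow_three_eq_zero hV hX3 hX2
  have hcomm : Commute X Y := hXY.trans hYX.symm
  have hmap : X.ker.map Y ≤ (X ^ 2).range := by
    refine map_le_of_isNilpotent_of_finrank_le hY (map_range_le_of_commute (hcomm.pow_left 2))
      (map_ker_le_of_commute hcomm) ?_ (by omega)
    rw [LinearMap.range_le_ker_iff, ← End.mul_eq_comp, ← pow_succ', hX3]
  refine exists_eq_smul_of_ker_le_ker hrange2 ?_ ?_
  · rw [ker_sq_eq_ker_sup_range hV hX3 hX2]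
    refine sup_le ?_ ?_
    · rw [sq, End.mul_eq_comp, LinearMap.ker_comp, ← Submodule.map_le_iff_le_comap]
      refine hmap.trans ?_
      rw [LinearMap.range_le_ker_iff, ← End.mul_eq_comp, sq, ← mul_assoc, hYX, zero_mul]
    · rw [LinearMap.range_le_ker_iff, ← End.mul_eq_comp, sq, mul_assoc, hYX, mul_zero]
  · rw [sq, End.mul_eq_comp, LinearMap.range_comp]
    exact (Submodule.map_mono (LinearMap.range_le_ker_iff.mpr hXY)).trans hmap

end JordanTypeThreeOne

lemma exists_mul_pow_sub_one_mul_eq_zero {p : ℕ} [Fact p.Prime] [Module (ZMod p) V]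
    (hV : finrank (ZMod p) V = 4) {A B : End (ZMod p) V} (hAB : Commute A B)
    (hA3 : (A - 1) ^ 3 = 0) (hA2 : (A - 1) ^ 2 ≠ 0) (hB : IsNilpotent (B - 1)) :
    ∃ k : ℕ, (B * A ^ k - 1) * (A - 1) = 0 := by
  have hcomm : Commute (A - 1) (B - 1) :=
    (hAB.sub_left (.one_left _)).sub_right ((Commute.one_right _).sub_left (.one_left _))
  obtain ⟨β, hβ⟩ := exists_mul_eq_smul_sq hV hA3 hA2 hcomm hB
  obtain ⟨k, hk⟩ : ∃ k : ℕ, (k : ZMod p) + β = 0 := ⟨(-β).val, by simp⟩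
  refine ⟨k, ?_⟩
  have h := mul_one_add_pow_mul (b := B) hA3 (by rw [← hβ]; noncomm_ring) k
  rwa [hk, zero_smul, add_zero, add_sub_cancel, ← sub_eq_zero, ← sub_one_mul] at h

end LinearAlgebra

section RingElements

variable {R : Type*} [Ring R]

lemma sub_one_pow_three_of_three_eq_zero (h3 : (3 : R) = 0) (x : R) : (x - 1) ^ 3 = x ^ 3 - 1 := by
  have expand : (x - 1) ^ 3 = x ^ 3 - 1 - 3 * (x ^ 2 - x) := by noncomm_ring
  rw [expand, h3, zero_mul, sub_zero]

lemma eq_one_of_klein_four_of_sq_sub_one_eq_zero (h3 : (3 : R) = 0) {a s t : R} (hs : s ^ 2 = 1)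
    (ht : t ^ 2 = 1) (hst : s * t = t * s) (has : a * s = t * a) (hsa : s * a = a * (s * t))
    (ha : (a - 1) ^ 2 = 0) : s = 1 := by
  obtain ⟨n, rfl⟩ : ∃ n, a = 1 + n := ⟨a - 1, by abel⟩
  rw [add_sub_cancel_left] at ha
  have hinv : (1 + n) * (1 - n) = 1 := by
    rw [show (1 + n) * (1 - n) = 1 - n ^ 2 by noncomm_ring, ha, sub_zero]
  have hinv' : (1 - n) * (1 + n) = 1 := by
    rw [show (1 - n) * (1 + n) = 1 - n ^ 2 by noncomm_ring, ha, sub_zero]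
  have ht_conj : t = (1 + n) * s * (1 - n) := by rw [has, mul_assoc, hinv, mul_one]
  have hst_conj : s * t = (1 - n) * s * (1 + n) := by
    rw [mul_assoc, hsa, ← mul_assoc, hinv', one_mul]
  -- `w` is the sum of the conjugates of `s` by `1`, `a`, `a⁻¹`. It equals `n * s * n`, so `w² = 0`,
  -- while the relations of the Klein four group give `w² = -w`.
  set w := s + t + s * t with hw
  have hw_conj : w = n * s * n := by
    have expand : s + (1 + n) * s * (1 - n) + (1 - n) * s * (1 + n) =
        3 * (s - n * s * n) + n * s * n := by noncomm_ring
    rw [hw, hst_conj, ht_conj, expand, h3, zero_mul, zero_add]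
  have hw_sq : w * w = 0 := by
    rw [hw_conj, show n * s * n * (n * s * n) = n * s * n ^ 2 * s * n by noncomm_ring, ha]
    simp
  have hsw : s * w = 1 + w - s := by
    rw [hw, mul_add, mul_add, ← mul_assoc, ← sq, hs]; noncomm_ring
  have htw : t * w = 1 + w - t := by
    rw [hw, mul_add, mul_add, hst, ← mul_assoc, ← sq, ht]; noncomm_ring
  have hstw : s * t * w = 1 + w - s * t := by
    rw [mul_assoc, htw, mul_sub, mul_add, hsw]; noncomm_ring
  have hw_zero : w = 0 := by
    calc w = 3 * (1 + w) - (s * w + t * w + s * t * w) := by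
          rw [hsw, htw, hstw, hw]; noncomm_ring
      _ = 0 := by rw [← add_mul, ← add_mul, ← hw, hw_sq, h3]; simp
  rw [hw_zero, mul_zero, add_zero] at hsw
  exact (sub_eq_zero.mp hsw.symm).symm

lemma eq_one_of_sq_eq_one_of_isNilpotent_sub_one {s : R} (h2 : IsUnit (2 : R)) (hs : s ^ 2 = 1)
    (hnil : IsNilpotent (s - 1)) : s = 1 := by
  have hunit : IsUnit (2 + (s - 1)) :=
    hnil.isUnit_add_left_of_commute h2 (Nat.cast_commute 2 _).symm
  have hmul : (s - 1) * (2 + (s - 1)) = 0 := by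
    rw [show (s - 1) * (2 + (s - 1)) = s ^ 2 - 1 by noncomm_ring, hs, sub_self]
  exact sub_eq_zero.mp (hunit.mul_left_eq_zero.mp hmul)

end RingElements

/-- `φ` is reduction modulo 3 on a ring `S` that is flat over `ℤ/9ℤ`: multiplication by 3 on `S` has
kernel and image equal, and both are the kernel of `φ`. -/
structure IsReductionModThree {S T : Type*} [Ring S] [Ring T] (φ : S →+* T) : Prop where
  three_mul_eq_zero_iff : ∀ s : S, 3 * s = 0 ↔ 3 ∣ s
  map_eq_zero_iff_three_dvd : ∀ s : S, φ s = 0 ↔ 3 ∣ s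

namespace IsReductionModThree

variable {S T : Type*} [Ring S] [Ring T] {φ : S →+* T} (hφ : IsReductionModThree φ)

include hφ

lemma three_eq_zero : (3 : T) = 0 := by
  simpa only [map_ofNat] using (hφ.map_eq_zero_iff_three_dvd 3).mpr dvd_rfl

lemma map_eq_zero_of_three_mul_eq_zero {s : S} (h : 3 * s = 0) : φ s = 0 :=
  (hφ.map_eq_zero_iff_three_dvd s).mpr ((hφ.three_mul_eq_zero_iff s).mp h)

lemma eq_one_of_sq_eq_one_of_map_eq_one {s : S} (hs : s ^ 2 = 1) (h : φ s = 1) : s = 1 := by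
  have h9 (c : S) : 3 * (3 * c) = 0 := (hφ.three_mul_eq_zero_iff _).mpr (dvd_mul_right 3 c)
  have h2 : IsUnit (2 : S) := by
    have h3 : IsNilpotent (3 : S) := ⟨2, by simpa [sq] using h9 1⟩
    simpa [show (3 : S) - 1 = 2 by norm_num] using h3.isUnit_sub_one
  obtain ⟨c, hc⟩ := (hφ.map_eq_zero_iff_three_dvd (s - 1)).mp (by simp [h])
  refine eq_one_of_sq_eq_one_of_isNilpotent_sub_one h2 hs ⟨2, ?_⟩
  rw [hc, show (3 * c) ^ 2 = 3 * (3 * (c * c)) by noncomm_ring, h9]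

lemma map_mul_sq_eq_sq {x y q : S} (hx : (x + 1) ^ 3 = 1) (hxy : Commute x y)
    (hmul : φ x * φ y = 0) (hq : y ^ 2 = x ^ 2 + 3 * q) : φ q * φ x ^ 2 = φ x ^ 2 := by
  have hφx : φ x ^ 3 = 0 := by
    have := sub_one_pow_three_of_three_eq_zero hφ.three_eq_zero (φ (x + 1))
    rwa [← map_pow, hx, map_one, sub_self, map_add, map_one, add_sub_cancel_right] at this
  have hφyx : φ y * φ x = 0 := by rw [← map_mul, ← hxy.eq, map_mul, hmul]
  obtain ⟨p, hp⟩ := (hφ.map_eq_zero_iff_three_dvd (x * y)).mp (by rw [map_mul, hmul])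
  -- Evaluate `x * y * y` in two ways, using `x * y = 3 * p` and `y ^ 2 = x ^ 2 + 3 * q`.
  have hlift : 3 * (p * y + x + x ^ 2 - q * x) = 0 := by
    have hcube : x ^ 3 + 3 * x ^ 2 + 3 * x = 0 := by
      rw [show x ^ 3 + 3 * x ^ 2 + 3 * x = (x + 1) ^ 3 - 1 by noncomm_ring, hx, sub_self]
    calc 3 * (p * y + x + x ^ 2 - q * x)
        = 3 * p * y - (x ^ 2 + 3 * q) * x + (x ^ 3 + 3 * x ^ 2 + 3 * x) := by noncomm_ring
      _ = x * y ^ 2 - y ^ 2 * x := by rw [← hp, ← hq, hcube, add_zero, mul_assoc, ← sq]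
      _ = 0 := by rw [(hxy.pow_right 2).eq, sub_self]
  have hred : φ p * φ y + φ x + φ x ^ 2 - φ q * φ x = 0 := by
    simpa using hφ.map_eq_zero_of_three_mul_eq_zero hlift
  calc φ q * φ x ^ 2
      = φ p * (φ y * φ x) + φ x ^ 2 + φ x ^ 3
          - (φ p * φ y + φ x + φ x ^ 2 - φ q * φ x) * φ x := by noncomm_ring
    _ = φ x ^ 2 := by rw [hφyx, hφx, hred]; simp

lemma sq_map_sub_one_eq_zero {a b : S} (ha : a ^ 3 = 1) (hb : b ^ 3 = 1) (hab : Commute a b)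
    (hmul : (φ a - 1) * (φ b - 1) = 0) (hsq : (φ a - 1) ^ 2 = (φ b - 1) ^ 2) :
    (φ a - 1) ^ 2 = 0 := by
  obtain ⟨x, rfl⟩ : ∃ x, a = x + 1 := ⟨a - 1, by abel⟩
  obtain ⟨y, rfl⟩ : ∃ y, b = y + 1 := ⟨b - 1, by abel⟩
  have hxy : Commute x y := by simpa using hab.sub_right (.one_right _) |>.sub_left (.one_left _)
  simp only [map_add, map_one, add_sub_cancel_right] at hmul hsq ⊢
  obtain ⟨q, hq⟩ := (hφ.map_eq_zero_iff_three_dvd (y ^ 2 - x ^ 2)).mp (by simp [hsq])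
  -- The situation is symmetric in `x` and `y`, except that `q` changes sign.
  have hqx : φ q * φ x ^ 2 = φ x ^ 2 :=
    hφ.map_mul_sq_eq_sq ha hxy hmul (sub_eq_iff_eq_add'.mp hq)
  have hqy : φ (-q) * φ y ^ 2 = φ y ^ 2 :=
    hφ.map_mul_sq_eq_sq hb hxy.symm (by rw [← map_mul, ← hxy.eq, map_mul, hmul])
      (by rw [mul_neg, ← hq]; abel)
  rw [← hsq, map_neg, neg_mul, hqx] at hqy
  calc φ x ^ 2 = 3 * φ x ^ 2 - (φ x ^ 2 - -φ x ^ 2) := by noncomm_ring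
    _ = 0 := by rw [hqy, hφ.three_eq_zero]; simp

end IsReductionModThree

section QuadraticElement

variable {S V : Type*} [Ring S] [AddCommGroup V] [Module (ZMod 3) V] {φ : S →+* End (ZMod 3) V}

theorem exists_sq_sub_one_eq_zero (hφ : IsReductionModThree φ) (hV : finrank (ZMod 3) V = 4)
    {a b : S} (ha : a ^ 3 = 1) (hb : b ^ 3 = 1) (hab : Commute a b) :
    (φ a - 1) ^ 2 = 0 ∨ ∃ k : ℕ, (φ (b * a ^ k) - 1) ^ 2 = 0 := by
  by_contra! ⟨hqa, hqb⟩
  have hcube {g : S} (hg : g ^ 3 = 1) : (φ g - 1) ^ 3 = 0 := by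
    rw [sub_one_pow_three_of_three_eq_zero hφ.three_eq_zero, ← map_pow, hg, map_one, sub_self]
  have hcomm {g : S} (hg : Commute a g) : Commute (φ a - 1) (φ g - 1) :=
    ((hg.map φ).sub_left (.one_left _)).sub_right ((Commute.one_right _).sub_left (.one_left _))
  obtain ⟨k, hca⟩ :=
    exists_mul_pow_sub_one_mul_eq_zero hV (hab.map φ) (hcube ha) hqa ⟨3, hcube hb⟩
  rw [← map_pow, ← map_mul] at hca
  set c := b * a ^ k with hc
  have hac : Commute a c := hab.mul_right (Commute.refl a |>.pow_right k)
  have hc3 : c ^ 3 = 1 := by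
    rw [hc, (hab.symm.pow_right k).mul_pow, hb, one_mul, pow_right_comm, ha, one_pow]
  have hac_mul : (φ a - 1) * (φ c - 1) = 0 := (hcomm hac).eq.trans hca
  obtain ⟨r, hr⟩ := exists_sq_eq_smul_sq hV (hcube ha) hqa hac_mul hca ⟨3, hcube hc3⟩
  have hr_ne : r ≠ 0 := fun h => hqb k (by rw [← hc, hr, h, zero_smul])
  obtain rfl | rfl : r = 1 ∨ r = -1 := by
    clear hr; decide +revert
  · exact hqa (hφ.sq_map_sub_one_eq_zero ha hc3 hac hac_mul (by rw [hr, one_smul]))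
  · refine hqb (k + 1) ?_
    rw [pow_succ a, ← mul_assoc, ← hc, map_mul]
    have hmul : φ c * φ a - 1 = (φ a - 1) + (φ c - 1) := by
      rw [← sub_eq_zero, ← hca]; noncomm_ring
    calc (φ c * φ a - 1) ^ 2
        = (φ a - 1) ^ 2 + (φ a - 1) * (φ c - 1) + (φ c - 1) * (φ a - 1) + (φ c - 1) ^ 2 := by
          rw [hmul]; noncomm_ring
      _ = 0 := by rw [hr, hca, hac_mul]; simp

end QuadraticElement

section CyclesKleinFour

/-- The element `a` normalizes a Klein four subgroup `{1, s, t, s * t}` and permutes its involutions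
cyclically: conjugation by `a` maps `s ↦ t ↦ s * t ↦ s`. -/
def CyclesKleinFour {G : Type*} [Group G] (a : G) : Prop :=
  ∃ s t : G, s ≠ 1 ∧ s ^ 2 = 1 ∧ t ^ 2 = 1 ∧ s * t = t * s ∧ a * s = t * a ∧ s * a = a * (s * t)

lemma CyclesKleinFour.sq_map_sub_one_ne_zero {G S T : Type*} [Group G] [Ring S] [Ring T]
    {φ : S →+* T} (hφ : IsReductionModThree φ) {ρ : G →* S} (hρ : Function.Injective ρ) {a : G}
    (ha : CyclesKleinFour a) : (φ (ρ a) - 1) ^ 2 ≠ 0 := by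
  obtain ⟨s, t, hs_ne, hs, ht, hst, has, hsa⟩ := ha
  intro hq
  refine hs_ne (hρ ?_)
  rw [map_one]
  refine hφ.eq_one_of_sq_eq_one_of_map_eq_one (by rw [← map_pow, hs, map_one]) ?_
  refine eq_one_of_klein_four_of_sq_sub_one_eq_zero hφ.three_eq_zero (t := φ (ρ t))
    ?_ ?_ ?_ ?_ ?_ hq <;>
    simp only [← map_mul, ← map_pow, hs, ht, hst, has, hsa, map_one]

theorem not_injective_of_cyclesKleinFour {G S V : Type*} [Group G] [Ring S] [AddCommGroup V]
    [Module (ZMod 3) V] {φ : S →+* End (ZMod 3) V} (hφ : IsReductionModThree φ)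
    (hV : finrank (ZMod 3) V = 4) {a b : G} (ha : a ^ 3 = 1) (hb : b ^ 3 = 1) (hab : Commute a b)
    (hKa : CyclesKleinFour a) (hKb : ∀ k : ℕ, CyclesKleinFour (b * a ^ k)) (ρ : G →* S) :
    ¬ Function.Injective ρ := by
  intro hρ
  rcases exists_sq_sub_one_eq_zero hφ hV (a := ρ a) (b := ρ b) (by rw [← map_pow, ha, map_one])
    (by rw [← map_pow, hb, map_one]) (hab.map ρ) with h | ⟨k, h⟩
  · exact hKa.sq_map_sub_one_ne_zero hφ hρ h
  · exact (hKb k).sq_map_sub_one_ne_zero hφ hρ (by rwa [map_mul, map_pow])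

end CyclesKleinFour

namespace IsReductionModThree

lemma zmod_castHom : IsReductionModThree (ZMod.castHom (show 3 ∣ 9 by decide) (ZMod 3)) where
  three_mul_eq_zero_iff := by decide
  map_eq_zero_iff_three_dvd := by decide

lemma comp_of_injective {S T U : Type*} [Ring S] [Ring T] [Ring U] {φ : S →+* T} {ψ : T →+* U}
    (hφ : IsReductionModThree φ) (hψ : Function.Injective ψ) : IsReductionModThree (ψ.comp φ) where
  three_mul_eq_zero_iff := hφ.three_mul_eq_zero_iff
  map_eq_zero_iff_three_dvd s := by
    rw [RingHom.comp_apply, map_eq_zero_iff ψ hψ, hφ.map_eq_zero_iff_three_dvd]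

lemma mapMatrix {n S T : Type*} [Fintype n] [DecidableEq n] [Ring S] [Ring T] {φ : S →+* T}
    (hφ : IsReductionModThree φ) :
    IsReductionModThree (φ.mapMatrix : Matrix n n S →+* Matrix n n T) := by
  have three_mul_apply (M : Matrix n n S) (i j : n) : (3 * M : Matrix n n S) i j = 3 * M i j := by
    rw [← Nat.cast_ofNat, ← nsmul_eq_mul, Matrix.smul_apply, nsmul_eq_mul, Nat.cast_ofNat]
  have three_dvd_iff (M : Matrix n n S) : 3 ∣ M ↔ ∀ i j, 3 ∣ M i j := by
    refine ⟨fun ⟨P, hP⟩ i j => ⟨P i j, by rw [hP, three_mul_apply]⟩, fun h => ?_⟩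
    choose P hP using h
    exact ⟨Matrix.of P, Matrix.ext fun i j => by rw [hP, three_mul_apply, Matrix.of_apply]⟩
  constructor
  · intro M
    simp only [three_dvd_iff, ← hφ.three_mul_eq_zero_iff, ← three_mul_apply, ← Matrix.ext_iff,
      Matrix.zero_apply]
  · intro M
    simp only [three_dvd_iff, ← hφ.map_eq_zero_iff_three_dvd, ← Matrix.ext_iff,
      RingHom.mapMatrix_apply, Matrix.map_apply, Matrix.zero_apply]

end IsReductionModThree

lemma exists_isReductionModThree_matrix_zmod_nine (n : Type*) [Fintype n] [DecidableEq n] :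
    ∃ φ : Matrix n n (ZMod 9) →+* End (ZMod 3) (n → ZMod 3), IsReductionModThree φ :=
  ⟨_, IsReductionModThree.zmod_castHom.mapMatrix.comp_of_injective
    (ψ := (Matrix.toLinAlgEquiv' : Matrix n n (ZMod 3) ≃ₐ[ZMod 3] _).toRingEquiv.toRingHom)
    Matrix.toLinAlgEquiv'.injective⟩

section AlternatingSix

/-- An even permutation of six letters as an element of the alternating group. -/
def evenPerm (σ : Equiv.Perm (Fin 6)) (hσ : Equiv.Perm.sign σ = 1 := by decide) :
    alternatingGroup (Fin 6) :=
  ⟨σ, hσ⟩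

lemma cyclesKleinFour_threeCycle : CyclesKleinFour (evenPerm c[0, 1, 2]) :=
  ⟨evenPerm (c[0, 1] * c[2, 3]), evenPerm (c[1, 2] * c[0, 3]), by decide⟩

lemma cyclesKleinFour_threeCycle_mul_pow (k : ℕ) :
    CyclesKleinFour (evenPerm c[3, 4, 5] * evenPerm c[0, 1, 2] ^ k) := by
  have ha : evenPerm c[0, 1, 2] ^ 3 = 1 := by decide
  rw [pow_eq_pow_mod k ha]
  have hlt : k % 3 < 3 := Nat.mod_lt k three_pos
  interval_cases k % 3
  · exact ⟨evenPerm (c[3, 4] * c[5, 0]), evenPerm (c[4, 5] * c[3, 0]), by decide⟩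
  · exact ⟨evenPerm (c[0, 3] * c[1, 4]), evenPerm (c[1, 4] * c[2, 5]), by decide⟩
  · exact ⟨evenPerm (c[0, 3] * c[2, 4]), evenPerm (c[2, 4] * c[1, 5]), by decide⟩

end AlternatingSix

/-- Lemma 4.6 (Astill–Parker–Waldecker): `Alt(6)` is not isomorphic to a subgroup of
`GL₄(ℤ/9ℤ)`: there is no injective group homomorphism from `alternatingGroup (Fin 6)`
into `GL₄(ZMod 9)`. -/
theorem alt6_not_subgroup_GL4_Z9 :
    ¬ ∃ f : alternatingGroup (Fin 6) →* Matrix.GeneralLinearGroup (Fin 4) (ZMod 9),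
      Function.Injective f := by
  rintro ⟨f, hf⟩
  obtain ⟨φ, hφ⟩ := exists_isReductionModThree_matrix_zmod_nine (Fin 4)
  have hcomm : evenPerm c[0, 1, 2] * evenPerm c[3, 4, 5] =
      evenPerm c[3, 4, 5] * evenPerm c[0, 1, 2] := by decide
  exact not_injective_of_cyclesKleinFour hφ (finrank_fin_fun _) (by decide) (by decide) hcomm
    cyclesKleinFour_threeCycle cyclesKleinFour_threeCycle_mul_pow
    ((Units.coeHom _).comp f) (Units.val_injective.comp hf)
end

section
/- Let G be a finite group with a normal subgroup R whose cardinality is a power of 7, such that the quotient G ⧸ R is isomorphic to PSL₂(49), the quotient of the special linear group SL₂ over the field with 49 elements (GaloisField 7 2) by its centre. Suppose there is an element g ∈ G of order 5 that acts fixed point freely on R by conjugation, i.e. for every x ∈ R, if g * x * g⁻¹ = x then x = 1. Then R is elementary abelian: R is commutative and x^7 = 1 for every x ∈ R. -/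
instance : Fact (Nat.Prime 7) := ⟨by norm_num⟩

/-!
Modules for `A₅` over a ring in which `30` is invertible, on which the `5`-cycles have no nonzero
fixed vector, are sums of copies of the four-dimensional deleted permutation module. In `PSL₂(49)`
there are a copy of `A₅` and an involution `t` extending its subgroup `A₄` to `S₄`. The involution
preserves the fixed vectors of a `3`-cycle of `A₄`, hence it acts by two unknown scalars, and the
relation `(t c)⁷ = 1` with a `5`-cycle `c` determines both scalars and forces `7` to vanish on the
module. The deleted permutation module has only one `A₅`-equivariant product, which is not
equivariant for `t`.

If `R` is nilpotent, an induction over its central quotients reduces to class at most two, where the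
commutator is an equivariant bilinear map from the abelianization to the center, so it is trivial.
Then `R` itself is such a module and has exponent seven.
-/

open Equiv

local notation "A₅" => alternatingGroup (Fin 5)

section AlternatingFive

/-- The rotation `j ↦ j + i` of five points. -/
def rotationFive (i : Fin 5) : A₅ :=
  ⟨Equiv.addRight i, by rw [Perm.mem_alternatingGroup]; revert i; decide⟩

/-- The double transposition `(j+1 j+2)(j+3 j+4)`, which fixes `j`. -/
def doubleSwap (j : Fin 5) : A₅ :=
  ⟨swap (j + 1) (j + 2) * swap (j + 3) (j + 4), by
    rw [Perm.mem_alternatingGroup]; revert j; decide⟩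

/-- The double transposition `j ↦ -j`, which inverts the rotations. -/
def reflectionFive : A₅ :=
  ⟨Equiv.neg (Fin 5), by rw [Perm.mem_alternatingGroup]; decide⟩

/-- The four-group fixing the point `0`. -/
def kleinFour : Fin 4 → A₅ :=
  ![1, doubleSwap 0, reflectionFive, doubleSwap 0 * reflectionFive]

/-- Elements conjugating the subgroup of rotations onto the six Sylow `5`-subgroups; each is its
own inverse. -/
def sylowConj : Option (Fin 5) → A₅
  | none => 1
  | some j => doubleSwap j

lemma rotationFive_add (i j : Fin 5) :
    rotationFive (i + j) = rotationFive i * rotationFive j := by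
  ext l : 2
  exact (add_assoc l i j).symm.trans (add_right_comm l i j)

lemma rotationFive_zero : rotationFive 0 = 1 := by
  ext l : 2
  exact add_zero l

lemma rotationFive_apply_zero (i : Fin 5) : (rotationFive i).1 0 = i := zero_add i

lemma kleinFour_apply_zero (a : Fin 4) : (kleinFour a).1 0 = 0 := by
  revert a; decide +kernel

lemma add_sum_kleinFour_apply {V : Type*} [AddCommMonoid V] {i : Fin 5} (hi : i ≠ 0)
    (x : Fin 5 → V) : x 0 + ∑ a, x ((kleinFour a).1 i) = ∑ j, x j := by
  have hinj : Function.Injective (fun a ↦ (kleinFour a).1 i) := by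
    revert i; decide +kernel
  have himage : Finset.univ.image (fun a ↦ (kleinFour a).1 i) = Finset.univ.erase 0 := by
    revert i; decide +kernel
  rw [← Finset.add_sum_erase _ x (Finset.mem_univ 0), ← himage, Finset.sum_image hinj.injOn]

/-- Counting fixed points: the first count is the permutation character on five points, the other
two count the Sylow `5`-subgroups containing `z`, respectively the dihedral groups of order ten in
which `z` is a reflection. -/
lemma card_fixed_add_card_sylow (z : A₅) :
    2 * Fintype.card {i // z.1 i = i} +
      4 * Fintype.card {p : Option (Fin 5) × Fin 5 //
        sylowConj p.1 * rotationFive p.2 * sylowConj p.1 = z} +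
      Fintype.card {p : Option (Fin 5) × Fin 5 //
        sylowConj p.1 * reflectionFive * rotationFive p.2 * sylowConj p.1 = z} =
    4 + if z = 1 then 30 else 0 := by
  revert z; decide +kernel

end AlternatingFive

section RotationTraceZero

variable {k V : Type*} [CommRing k] [AddCommGroup V] [Module k V] (ρ : Representation k A₅ V)

/-- The vectors fixed by the stabilizer `A₄` of the point `0`. -/
noncomputable def pointInvariants : Submodule k V :=
  Representation.invariants (ρ.comp (MulAction.stabilizer A₅ (0 : Fin 5)).subtype)

variable {ρ}

lemma mem_pointInvariants {v : V} :
    v ∈ pointInvariants ρ ↔ ∀ σ : A₅, σ.1 0 = 0 → ρ σ v = v :=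
  ⟨fun h σ hσ ↦ h ⟨σ, hσ⟩, fun h σ ↦ h σ σ.2⟩

variable (ρ) in
/-- The translate to the point `i` of the `A₄`-fixed vectors. For the deleted permutation module
this sends a generator to the image of the `i`-th basis vector. -/
noncomputable def atPoint (i : Fin 5) : pointInvariants ρ →ₗ[k] V :=
  ρ (rotationFive i) ∘ₗ (pointInvariants ρ).subtype

lemma atPoint_zero (m : pointInvariants ρ) : atPoint ρ 0 m = m := by
  rw [atPoint, rotationFive_zero, map_one]
  rfl

lemma map_atPoint (σ : A₅) (i : Fin 5) (m : pointInvariants ρ) :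
    ρ σ (atPoint ρ i m) = atPoint ρ (σ.1 i) m := by
  have hfix : ((rotationFive (σ.1 i))⁻¹ * (σ * rotationFive i)).1 0 = 0 := by
    have h : (σ * rotationFive i).1 0 = (rotationFive (σ.1 i)).1 0 := by
      rw [rotationFive_apply_zero]
      exact congrArg σ.1 (rotationFive_apply_zero i)
    exact Perm.inv_eq_iff_eq.2 h
  have hinv := mem_pointInvariants.1 m.2 _ hfix
  calc ρ σ (ρ (rotationFive i) m)
      = ρ (rotationFive (σ.1 i)) (ρ ((rotationFive (σ.1 i))⁻¹ * (σ * rotationFive i)) m) := by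
        simp only [← Module.End.mul_apply, ← map_mul, mul_inv_cancel_left]
    _ = ρ (rotationFive (σ.1 i)) m := by rw [hinv]

lemma sum_rotationFive_apply (hρ : ∑ i, ρ (rotationFive i) = 0) (v : V) :
    ∑ i, ρ (rotationFive i) v = 0 := by
  simpa only [LinearMap.sum_apply, LinearMap.zero_apply] using LinearMap.congr_fun hρ v

lemma sum_atPoint (hρ : ∑ i, ρ (rotationFive i) = 0) (m : pointInvariants ρ) :
    ∑ i, atPoint ρ i m = 0 :=
  sum_rotationFive_apply hρ m.1

lemma sum_kleinFour_atPoint (hρ : ∑ i, ρ (rotationFive i) = 0) (i : Fin 5)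
    (m : pointInvariants ρ) :
    ∑ a, ρ (kleinFour a) (atPoint ρ i m) = if i = 0 then (4 : k) • (m : V) else -(m : V) := by
  simp only [map_atPoint]
  split_ifs with hi
  · simp only [hi, kleinFour_apply_zero, atPoint_zero, Finset.sum_const, Finset.card_univ,
      Fintype.card_fin, ← Nat.cast_smul_eq_nsmul k, Nat.cast_ofNat]
  · rw [eq_neg_iff_add_eq_zero, ← sum_atPoint hρ m, add_comm,
      ← add_sum_kleinFour_apply hi (fun j ↦ atPoint ρ j m), atPoint_zero]

lemma five_smul_eq_sum (hρ : ∑ i, ρ (rotationFive i) = 0) {x : Fin 5 → pointInvariants ρ}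
    (h : ∑ i, atPoint ρ i (x i) = 0) (i : Fin 5) : (5 : k) • x i = ∑ j, x j := by
  have hzero {y : Fin 5 → pointInvariants ρ} (h : ∑ i, atPoint ρ i (y i) = 0) :
      (5 : k) • y 0 = ∑ j, y j := by
    have hsum : ∑ i, ∑ a, ρ (kleinFour a) (atPoint ρ i (y i)) = 0 := by
      rw [Finset.sum_comm]
      simp only [← map_sum, h, map_zero, Finset.sum_const_zero]
    simp only [sum_kleinFour_atPoint hρ, Fin.sum_univ_five, Fin.reduceEq, if_true,
      if_false] at hsum
    rw [Fin.sum_univ_five]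
    ext
    push_cast
    linear_combination (norm := module) hsum
  have hshift : ∑ j, atPoint ρ j (x (j + i)) = 0 := by
    rw [← map_zero (ρ (rotationFive (-i))), ← h, map_sum,
      ← Equiv.sum_comp (Equiv.addRight i) (fun j ↦ ρ (rotationFive (-i)) (atPoint ρ j (x j)))]
    refine Finset.sum_congr rfl fun j _ ↦ ?_
    rw [map_atPoint]
    exact congrArg (fun l ↦ atPoint ρ l _) (add_neg_cancel_right j i).symm
  rw [← Equiv.sum_comp (Equiv.addRight i) x]
  simpa only [zero_add, Equiv.coe_addRight] using hzero hshift

lemma eq_of_sum_atPoint_eq_zero (h5 : IsUnit (5 : k)) (hρ : ∑ i, ρ (rotationFive i) = 0)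
    {x : Fin 5 → pointInvariants ρ} (h : ∑ i, atPoint ρ i (x i) = 0) (i j : Fin 5) : x i = x j :=
  h5.smul_left_cancel.1 <|
    (five_smul_eq_sum hρ h i).trans (five_smul_eq_sum hρ h j).symm

lemma eq_zero_of_atPoint_add_eq_zero (h5 : IsUnit (5 : k)) (hρ : ∑ i, ρ (rotationFive i) = 0)
    {m n : pointInvariants ρ} (h : atPoint ρ 0 m + atPoint ρ 2 n = 0) : m = 0 ∧ n = 0 := by
  have hsum : ∑ i, atPoint ρ i ((![m, 0, n, 0, 0] : Fin 5 → pointInvariants ρ) i) = 0 := by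
    simpa [Fin.sum_univ_five] using h
  exact ⟨eq_of_sum_atPoint_eq_zero h5 hρ hsum 0 1, eq_of_sum_atPoint_eq_zero h5 hρ hsum 2 1⟩

lemma sum_card_smul {ι α M : Type*} [Fintype ι] [Fintype α] [AddCommMonoid M] (r : ι → α → Prop)
    [∀ p z, Decidable (r p z)] (f : α → M) :
    ∑ z, Fintype.card {p // r p z} • f z = ∑ p, ∑ z with r p z, f z := by
  simp only [Fintype.card_subtype, ← Finset.sum_const, Finset.sum_filter]
  exact Finset.sum_comm

lemma sum_mul_rotationFive_mul (hρ : ∑ i, ρ (rotationFive i) = 0) {ι : Type*} [Fintype ι]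
    (a b : ι → A₅) (v : V) :
    ∑ p : ι × Fin 5, ρ (a p.1 * rotationFive p.2 * b p.1) v = 0 := by
  rw [Fintype.sum_prod_type]
  refine Finset.sum_eq_zero fun p _ ↦ ?_
  simp only [map_mul, Module.End.mul_apply, ← map_sum, sum_rotationFive_apply hρ, map_zero]

lemma sum_alternating_apply (h5 : IsUnit (5 : k)) (hρ : ∑ i, ρ (rotationFive i) = 0) (v : V) :
    ∑ σ, ρ σ v = 0 := by
  have h : (5 : k) • ρ.norm v = 0 := by
    rw [← sum_rotationFive_apply hρ (ρ.norm v)]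
    simp only [ρ.self_norm_apply, Finset.sum_const, Finset.card_univ, Fintype.card_fin,
      ← Nat.cast_smul_eq_nsmul k, Nat.cast_ofNat]
  simpa only [Representation.norm, LinearMap.sum_apply] using h5.smul_eq_zero.1 h

/-- The sums over the Sylow `5`-subgroups and over the reflections of a dihedral group of order ten
vanish, which leaves the point stabilizers in `card_fixed_add_card_sylow`. -/
lemma fifteen_smul_eq_sum (h10 : IsUnit (10 : k)) (hρ : ∑ i, ρ (rotationFive i) = 0) (v : V) :
    (15 : k) • v = ∑ i : Fin 5, ∑ σ : A₅ with σ.1 i = i, ρ σ v := by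
  have h2 : IsUnit (2 : k) := isUnit_of_dvd_unit ⟨5, by norm_num⟩ h10
  have h5 : IsUnit (5 : k) := isUnit_of_dvd_unit ⟨2, by norm_num⟩ h10
  have hcount : ∑ z, _ • ρ z v = ∑ z, _ • ρ z v :=
    Finset.sum_congr rfl fun z _ ↦ congrArg (· • ρ z v) (card_fixed_add_card_sylow z)
  have hreflection := sum_mul_rotationFive_mul hρ (fun j ↦ sylowConj j * reflectionFive) sylowConj v
  simp only [add_smul, mul_smul, ite_smul, zero_smul, Finset.sum_add_distrib, ← Finset.smul_sum,
    sum_card_smul, Finset.sum_filter, Finset.sum_ite_eq, Finset.sum_ite_eq', Finset.mem_univ,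
    if_true, sum_mul_rotationFive_mul hρ, hreflection, sum_alternating_apply h5 hρ, map_one,
    Module.End.one_apply] at hcount
  simp only [Finset.sum_filter]
  refine h2.smul_left_cancel.1 ?_
  linear_combination (norm := module) -hcount

lemma sum_stabilizer_mem_pointInvariants (v : V) :
    ∑ σ : A₅ with σ.1 0 = 0, ρ σ v ∈ pointInvariants ρ := by
  refine mem_pointInvariants.2 fun τ hτ ↦ ?_
  rw [map_sum]
  refine Finset.sum_equiv (Equiv.mulLeft τ) (fun σ ↦ ?_) fun σ _ ↦ ?_
  · rw [Finset.mem_filter_univ, Finset.mem_filter_univ]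
    exact (τ.1.injective.eq_iff' hτ).symm
  · rw [Equiv.coe_mulLeft, map_mul, Module.End.mul_apply]

lemma sum_stabilizer_eq_rotationFive (i : Fin 5) (v : V) :
    ∑ σ : A₅ with σ.1 i = i, ρ σ v =
      ρ (rotationFive i) (∑ σ : A₅ with σ.1 0 = 0, ρ σ (ρ (rotationFive i)⁻¹ v)) := by
  rw [map_sum]
  refine (Finset.sum_equiv (MulAut.conj (rotationFive i)).toEquiv (fun σ ↦ ?_) fun σ _ ↦ ?_).symm
  · rw [Finset.mem_filter_univ, Finset.mem_filter_univ]
    change _ ↔ (rotationFive i).1 (σ.1 ((rotationFive i).1⁻¹ i)) = i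
    rw [Perm.inv_eq_iff_eq.2 (rotationFive_apply_zero i).symm]
    exact ((rotationFive i).1.injective.eq_iff' (rotationFive_apply_zero i)).symm
  · change _ = ρ (rotationFive i * σ * (rotationFive i)⁻¹) v
    simp only [map_mul, Module.End.mul_apply]

/-- A module in which rotations have trace zero is a sum of copies of the four-dimensional
deleted permutation module. -/
lemma exists_eq_sum_atPoint (h30 : IsUnit (30 : k)) (hρ : ∑ i, ρ (rotationFive i) = 0) (v : V) :
    ∃ x : Fin 5 → pointInvariants ρ, v = ∑ i, atPoint ρ i (x i) := by
  obtain ⟨u, hu⟩ : IsUnit (15 : k) := isUnit_of_dvd_unit ⟨2, by norm_num⟩ h30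
  have h10 : IsUnit (10 : k) := isUnit_of_dvd_unit ⟨3, by norm_num⟩ h30
  refine ⟨fun i ↦ u⁻¹.1 • ⟨_, sum_stabilizer_mem_pointInvariants (ρ (rotationFive i)⁻¹ v)⟩, ?_⟩
  simp only [map_smul, atPoint, LinearMap.comp_apply, Submodule.subtype_apply,
    ← sum_stabilizer_eq_rotationFive, ← Finset.smul_sum]
  rw [← fifteen_smul_eq_sum h10 hρ, ← hu, smul_smul, Units.inv_mul, one_smul]

/-- The `3`-cycle `(1 3 4)`. -/
def threeCycle : A₅ :=
  ⟨swap 1 3 * swap 3 4, by rw [Perm.mem_alternatingGroup]; decide⟩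

lemma exists_eq_atPoint_add_of_threeCycle (h30 : IsUnit (30 : k))
    (hρ : ∑ i, ρ (rotationFive i) = 0) {v : V} (hv : ρ threeCycle v = v) :
    ∃ m n, v = atPoint ρ 0 m + atPoint ρ 2 n := by
  obtain ⟨u, hu⟩ : IsUnit (3 : k) := isUnit_of_dvd_unit ⟨10, by norm_num⟩ h30
  obtain ⟨x, hx⟩ := exists_eq_sum_atPoint h30 hρ v
  have hcycle : ∀ j, threeCycle.1 j = (![0, 3, 2, 4, 1] : Fin 5 → Fin 5) j := by decide
  have hv' : ρ threeCycle (ρ threeCycle v) = v := by rw [hv, hv]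
  obtain ⟨m, n, hmn⟩ : ∃ m n, (3 : k) • v = atPoint ρ 0 m + atPoint ρ 2 n := by
    refine ⟨(3 : k) • x 0 - (x 1 + x 3 + x 4), (3 : k) • x 2 - (x 1 + x 3 + x 4), ?_⟩
    have hsum := sum_atPoint hρ (x 1 + x 3 + x 4)
    rw [Fin.sum_univ_five] at hx hsum
    rw [hx] at hv hv'
    simp only [map_add, map_sub, map_smul, map_atPoint, hcycle, Matrix.cons_val,
      hx] at hv hv' hsum ⊢
    linear_combination (norm := module) -hv - hv' + hsum
  exact ⟨u⁻¹.1 • m, u⁻¹.1 • n, by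
    rw [map_smul, map_smul, ← smul_add, ← hmn, ← hu, smul_smul, Units.inv_mul, one_smul]⟩

end RotationTraceZero

lemma exists_apply_zero_two_eq {i j : Fin 5} (hij : i ≠ j) :
    ∃ σ : A₅, σ.1 0 = i ∧ σ.1 2 = j := by
  revert i j; decide +kernel

section Bilinear

variable {k V V' W : Type*} [CommRing k] [AddCommGroup V] [Module k V] [AddCommGroup V']
  [Module k V'] [AddCommGroup W] [Module k W] {ρ : Representation k A₅ V}
  {ρ' : Representation k A₅ V'} {τ : Representation k A₅ W} {B : V →ₗ[k] V' →ₗ[k] W}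

lemma exists_bilin_atPoint_of_ne (h30 : IsUnit (30 : k)) (hτ : ∑ i, τ (rotationFive i) = 0)
    (hB : ∀ σ v v', τ σ (B v v') = B (ρ σ v) (ρ' σ v')) (m : pointInvariants ρ)
    (n : pointInvariants ρ') :
    ∃ a b : pointInvariants τ, ∀ i j, i ≠ j →
      B (atPoint ρ i m) (atPoint ρ' j n) = atPoint τ i a + atPoint τ j b := by
  obtain ⟨a, b, hab⟩ := exists_eq_atPoint_add_of_threeCycle h30 hτ
    (v := B (atPoint ρ 0 m) (atPoint ρ' 2 n)) (by
      rw [hB, map_atPoint, map_atPoint]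
      rfl)
  refine ⟨a, b, fun i j hij ↦ ?_⟩
  obtain ⟨σ, rfl, rfl⟩ := exists_apply_zero_two_eq hij
  rw [← map_atPoint, ← map_atPoint, ← hB, hab, map_add, map_atPoint, map_atPoint]

lemma exists_bilin_atPoint_self (hB : ∀ σ v v', τ σ (B v v') = B (ρ σ v) (ρ' σ v'))
    (m : pointInvariants ρ) (n : pointInvariants ρ') :
    ∃ c : pointInvariants τ, ∀ i, B (atPoint ρ i m) (atPoint ρ' i n) = atPoint τ i c := by
  refine ⟨⟨B m n, mem_pointInvariants.2 fun σ hσ ↦ ?_⟩, fun i ↦ (hB _ _ _).symm⟩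
  rw [hB, mem_pointInvariants.1 m.2 σ hσ, mem_pointInvariants.1 n.2 σ hσ]

/-- Up to scalars there is only one equivariant product on the deleted permutation module. -/
lemma exists_bilin_atPoint (h30 : IsUnit (30 : k)) (hρ : ∑ i, ρ (rotationFive i) = 0)
    (hρ' : ∑ i, ρ' (rotationFive i) = 0) (hτ : ∑ i, τ (rotationFive i) = 0)
    (hB : ∀ σ v v', τ σ (B v v') = B (ρ σ v) (ρ' σ v')) (m : pointInvariants ρ)
    (n : pointInvariants ρ') :
    ∃ a : pointInvariants τ, (∀ i, B (atPoint ρ i m) (atPoint ρ' i n) = -(3 : k) • atPoint τ i a) ∧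
      ∀ i j, i ≠ j → B (atPoint ρ i m) (atPoint ρ' j n) = atPoint τ i a + atPoint τ j a := by
  have h5 : IsUnit (5 : k) := isUnit_of_dvd_unit ⟨6, by norm_num⟩ h30
  obtain ⟨a, b, hne⟩ := exists_bilin_atPoint_of_ne h30 hτ hB m n
  obtain ⟨c, hself⟩ := exists_bilin_atPoint_self hB m n
  have hright : B (atPoint ρ 0 m) (∑ j, atPoint ρ' j n) = 0 := by rw [sum_atPoint hρ' n, map_zero]
  have hleft : B (∑ i, atPoint ρ i m) (atPoint ρ' 0 n) = 0 := by
    rw [sum_atPoint hρ m, map_zero, LinearMap.zero_apply]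
  have ha := sum_atPoint hτ a
  have hb := sum_atPoint hτ b
  simp (discharger := decide) only [Fin.sum_univ_five, map_add, LinearMap.add_apply, hself, hne]
    at hright hleft ha hb
  have hab : atPoint τ 0 a = atPoint τ 0 b := by
    refine h5.smul_left_cancel.1 ?_
    linear_combination (norm := module) hright - hleft + ha - hb
  obtain rfl : a = b := by simpa only [atPoint_zero, Subtype.coe_inj] using hab
  have hc : atPoint τ 0 c = atPoint τ 0 (-(3 : k) • a) := by
    rw [map_smul]
    linear_combination (norm := module) hright - ha
  obtain rfl : c = -(3 : k) • a := by simpa only [atPoint_zero, Subtype.coe_inj] using hc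
  exact ⟨a, fun i ↦ (hself i).trans (map_smul _ _ _), hne⟩

end Bilinear

lemma eq_three_of_relations {k E : Type*} [CommRing k] [Ring E] [Algebra k E]
    (h10 : IsUnit (10 : k)) {r : E} (hmul : -1 * r + r * -1 = (4 : k) • (r * r))
    (hcubic : r - r * r - r * -1 + r * r * r + r * r * -1 + r * -1 * r = -1) :
    (7 : k) • (1 : E) = 0 ∧ r = (3 : k) • (1 : E) := by
  have h2 : IsUnit (2 : k) := isUnit_of_dvd_unit ⟨5, by norm_num⟩ h10
  simp only [neg_mul, one_mul, mul_neg, mul_one] at hmul hcubic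
  have hsq : (2 : k) • (r * r) = -r := by
    refine h2.smul_left_cancel.1 ?_
    linear_combination (norm := module) -hmul
  have hcube : (2 : k) • (r * r * r) = -(r * r) := by
    simpa only [smul_mul_assoc, neg_mul] using congrArg (· * r) hsq
  have hlin : (15 : k) • r = -(4 : k) • (1 : E) := by
    linear_combination (norm := module) (4 : k) • hcubic - (2 : k) • hcube + (7 : k) • hsq
  have hlin' : (15 : k) • (r * r) = -(4 : k) • r := by
    simpa only [smul_mul_assoc, one_mul] using congrArg (· * r) hlin
  have hr : (7 : k) • r = 0 := by
    linear_combination (norm := module) (15 : k) • hsq - (2 : k) • hlin'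
  have hseven : (7 : k) • (1 : E) = 0 := by
    refine h2.smul_left_cancel.1 (h2.smul_left_cancel.1 ?_)
    linear_combination (norm := module) (7 : k) • hlin - (15 : k) • hr
  refine ⟨hseven, ?_⟩
  linear_combination (norm := module) hlin - (2 : k) • hr - hseven

/-- A copy of `A₅` in `Γ`, together with an involution which normalizes the point stabilizer `A₄`,
extending it to `S₄`, and whose product with a `5`-cycle has order dividing seven. In `PSL₂(49)`
these elements generate the whole group. -/
structure OctahedralExtension (Γ : Type*) [Group Γ] where
  alt : A₅ →* Γ
  invol : Γ
  invol_mul_invol : invol * invol = 1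
  invol_mul_alt (σ : A₅) (hσ : σ.1 0 = 0) :
    invol * alt σ = alt (MulAut.conjNormal (swap 1 3) σ) * invol
  invol_mul_alt_pow_seven : (invol * alt (rotationFive 1)) ^ 7 = 1

namespace OctahedralExtension

variable {Γ : Type*} [Group Γ] (𝒜 : OctahedralExtension Γ)

/-- The image of an octahedral extension under a homomorphism. -/
def map {Δ : Type*} [Group Δ] (f : Γ →* Δ) : OctahedralExtension Δ where
  alt := f.comp 𝒜.alt
  invol := f 𝒜.invol
  invol_mul_invol := by rw [← map_mul, 𝒜.invol_mul_invol, map_one]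
  invol_mul_alt σ hσ := by
    simp only [MonoidHom.comp_apply, ← map_mul, 𝒜.invol_mul_alt σ hσ]
  invol_mul_alt_pow_seven := by
    rw [MonoidHom.comp_apply, ← map_mul, ← map_pow, 𝒜.invol_mul_alt_pow_seven, map_one]

section Module

variable {k V : Type*} [CommRing k] [AddCommGroup V] [Module k V] (ρ : Representation k Γ V)

/-- The action of the subgroup `A₅`. -/
def restrict : Representation k A₅ V := ρ.comp 𝒜.alt

variable {ρ}

lemma map_invol_invol (v : V) : ρ 𝒜.invol (ρ 𝒜.invol v) = v := by
  rw [← Module.End.mul_apply, ← map_mul, 𝒜.invol_mul_invol, map_one, Module.End.one_apply]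

lemma restrict_map_invol {σ : A₅} (hσ : σ.1 0 = 0) (v : V) :
    𝒜.restrict ρ (MulAut.conjNormal (swap 1 3) σ) (ρ 𝒜.invol v) =
      ρ 𝒜.invol (𝒜.restrict ρ σ v) := by
  simp only [restrict, MonoidHom.comp_apply, ← Module.End.mul_apply, ← map_mul,
    𝒜.invol_mul_alt σ hσ]

/-- The involution inverts `threeCycle`, hence preserves its fixed vectors. -/
lemma exists_map_invol_atPoint_two (h30 : IsUnit (30 : k))
    (hρ : ∑ i, 𝒜.restrict ρ (rotationFive i) = 0) :
    ∃ r s : Module.End k (pointInvariants (𝒜.restrict ρ)), ∀ m,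
      ρ 𝒜.invol (atPoint (𝒜.restrict ρ) 2 m) =
        atPoint (𝒜.restrict ρ) 0 (r m) + atPoint (𝒜.restrict ρ) 2 (s m) := by
  have h5 : IsUnit (5 : k) := isUnit_of_dvd_unit ⟨6, by norm_num⟩ h30
  let pair := (atPoint (𝒜.restrict ρ) 0).coprod (atPoint (𝒜.restrict ρ) 2)
  have hinj : Function.Injective pair := by
    refine (injective_iff_map_eq_zero pair).2 fun p hp ↦ ?_
    obtain ⟨h1, h2⟩ := eq_zero_of_atPoint_add_eq_zero h5 hρ hp
    exact Prod.ext h1 h2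
  have hrange (m) : (ρ 𝒜.invol ∘ₗ atPoint (𝒜.restrict ρ) 2) m ∈ LinearMap.range pair := by
    obtain ⟨a, b, hab⟩ := exists_eq_atPoint_add_of_threeCycle h30 hρ
      (v := ρ 𝒜.invol (atPoint (𝒜.restrict ρ) 2 m)) (by
        have hconj : threeCycle = MulAut.conjNormal (swap 1 3) threeCycle⁻¹ := by decide +kernel
        rw [hconj, restrict_map_invol 𝒜 (by decide), map_atPoint]
        rfl)
    exact ⟨(a, b), hab.symm⟩
  let f := LinearMap.codRestrictOfInjective _ pair hinj hrange
  exact ⟨LinearMap.fst _ _ _ ∘ₗ f, LinearMap.snd _ _ _ ∘ₗ f, fun m ↦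
    (LinearMap.codRestrictOfInjective_comp_apply _ pair hinj hrange m).symm⟩

lemma invol_mul_alt_pow_three :
    (𝒜.invol * 𝒜.alt (rotationFive 1)) ^ 3 = (𝒜.alt (rotationFive 4) * 𝒜.invol) ^ 4 := by
  have hinv : 𝒜.alt (rotationFive 4) * 𝒜.invol = (𝒜.invol * 𝒜.alt (rotationFive 1))⁻¹ := by
    have hrot : rotationFive 4 = (rotationFive 1)⁻¹ := by decide +kernel
    rw [hrot, map_inv, mul_inv_rev, inv_eq_of_mul_eq_one_left 𝒜.invol_mul_invol]
  rw [hinv, inv_pow, eq_inv_iff_mul_eq_one, ← pow_add, 𝒜.invol_mul_alt_pow_seven]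

lemma map_invol_rotationFive (v : V) :
    letI t := ρ 𝒜.invol
    letI c := 𝒜.restrict ρ (rotationFive 1)
    letI d := 𝒜.restrict ρ (rotationFive 4)
    t (c (t (c (t (c v))))) = d (t (d (t (d (t (d (t v))))))) := by
  have h := congrArg (fun x ↦ ρ x v) 𝒜.invol_mul_alt_pow_three
  simp only [pow_succ, pow_zero, one_mul, map_mul, Module.End.mul_apply] at h
  exact h

lemma swap_one_three_apply (i : Fin 5) :
    swap 1 3 i = (![0, 3, 2, 1, 4] : Fin 5 → Fin 5) i := by
  revert i; decide

section Coordinates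

variable {r s : Module.End k (pointInvariants (𝒜.restrict ρ))} (hrs : ∀ m,
  ρ 𝒜.invol (atPoint (𝒜.restrict ρ) 2 m) =
    atPoint (𝒜.restrict ρ) 0 (r m) + atPoint (𝒜.restrict ρ) 2 (s m))
include hrs

lemma map_invol_atPoint_of_ne_zero {i : Fin 5} (hi : i ≠ 0)
    (m : pointInvariants (𝒜.restrict ρ)) :
    ρ 𝒜.invol (atPoint (𝒜.restrict ρ) i m) =
      atPoint (𝒜.restrict ρ) 0 (r m) + atPoint (𝒜.restrict ρ) (swap 1 3 i) (s m) := by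
  obtain ⟨σ, hσ, rfl⟩ := exists_apply_zero_two_eq hi.symm
  have hzero : (MulAut.conjNormal (swap 1 3 : Perm (Fin 5)) σ).1 0 = 0 := by
    simp [hσ, swap_apply_of_ne_of_ne]
  have htwo : (MulAut.conjNormal (swap 1 3 : Perm (Fin 5)) σ).1 2 = swap 1 3 (σ.1 2) := by
    simp [swap_apply_of_ne_of_ne]
  rw [← map_atPoint, ← restrict_map_invol 𝒜 hσ, hrs, map_add, map_atPoint, map_atPoint, hzero,
    htwo]

lemma map_invol_atPoint_zero (hρ : ∑ i, 𝒜.restrict ρ (rotationFive i) = 0)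
    (m : pointInvariants (𝒜.restrict ρ)) :
    ρ 𝒜.invol (atPoint (𝒜.restrict ρ) 0 m) =
      atPoint (𝒜.restrict ρ) 0 (s m - (4 : k) • r m) := by
  have hsum := congrArg (ρ 𝒜.invol) (sum_atPoint hρ m)
  have hsum' := sum_atPoint hρ (s m)
  rw [Fin.sum_univ_five] at hsum hsum'
  simp (discharger := decide) only [map_add, map_zero, map_sub, map_smul, swap_one_three_apply,
    Matrix.cons_val, map_invol_atPoint_of_ne_zero 𝒜 hrs] at hsum ⊢
  linear_combination (norm := module) hsum - hsum'

lemma coordinates_mul (h5 : IsUnit (5 : k)) (hρ : ∑ i, 𝒜.restrict ρ (rotationFive i) = 0) :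
    s * s = 1 ∧ s * r + r * s = (4 : k) • (r * r) := by
  have hinvol (m : pointInvariants (𝒜.restrict ρ)) :
      s (r m) + r (s m) - (4 : k) • r (r m) = 0 ∧ s (s m) - m = 0 := by
    refine eq_zero_of_atPoint_add_eq_zero h5 hρ ?_
    have h := map_invol_invol 𝒜 (ρ := ρ) (atPoint (𝒜.restrict ρ) 2 m)
    rw [hrs, map_add, hrs, map_invol_atPoint_zero 𝒜 hrs hρ] at h
    simp only [map_add, map_sub, map_smul] at h ⊢
    linear_combination (norm := module) h
  exact ⟨LinearMap.ext fun m ↦ sub_eq_zero.1 (hinvol m).2,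
    LinearMap.ext fun m ↦ sub_eq_zero.1 (hinvol m).1⟩

lemma coordinates_of_pow_seven (h5 : IsUnit (5 : k))
    (hρ : ∑ i, 𝒜.restrict ρ (rotationFive i) = 0) :
    s = -1 ∧ r - r * r - r * s + r * r * r + r * r * s + r * s * r = -1 := by
  suffices hm : ∀ m, s m = -m ∧
      r m - r (r m) - r (s m) + r (r (r m)) + r (r (s m)) + r (s (r m)) = -m from
    ⟨LinearMap.ext fun m ↦ (hm m).1, LinearMap.ext fun m ↦ (hm m).2⟩
  intro m
  have hss (m) : s (s m) = m := LinearMap.congr_fun (coordinates_mul 𝒜 hrs h5 hρ).1 m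
  have hrot : ∀ i j, (rotationFive i).1 j = j + i := fun _ _ ↦ rfl
  have h := 𝒜.map_invol_rotationFive (ρ := ρ) (atPoint (𝒜.restrict ρ) 1 m)
  simp (discharger := decide) only [map_add, map_sub, map_smul, swap_one_three_apply,
    Matrix.cons_val, map_atPoint, hrot, Fin.reduceAdd, map_invol_atPoint_of_ne_zero 𝒜 hrs,
    map_invol_atPoint_zero 𝒜 hrs hρ, hss] at h
  -- The entries are the coefficients at the five points of the difference of the two sides of `h`.
  have hcoeff := eq_of_sum_atPoint_eq_zero h5 hρ (x := ![
    r m - r (r m) - r (s m) + r (r (r m)) + r (r (s m)) + r (s (r m)),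
    -m,
    s m,
    -s (r m) + s (r (r m)) + s (r (s m)) - s (r (r (r m))) - s (r (r (s m))) - s (r (s (r m))),
    r m + (3 : k) • r (r m) - r (s m) - s (r m) - r (r (r (r m))) - r (r (r (s m)))
      - r (r (s (r m))) - r (s (r (r m))) - r (s (r (s m)))]) (by
    simp only [Fin.sum_univ_five, Matrix.cons_val, map_add, map_sub, map_smul, map_neg]
    linear_combination (norm := module) h)
  exact ⟨hcoeff 2 1, hcoeff 0 1⟩

lemma coordinates_eq (h10 : IsUnit (10 : k)) (hρ : ∑ i, 𝒜.restrict ρ (rotationFive i) = 0) :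
    (7 : k) • (1 : Module.End k (pointInvariants (𝒜.restrict ρ))) = 0 ∧
      r = (3 : k) • (1 : Module.End k (pointInvariants (𝒜.restrict ρ))) ∧ s = -1 := by
  have h5 : IsUnit (5 : k) := isUnit_of_dvd_unit ⟨2, by norm_num⟩ h10
  obtain ⟨rfl, hcubic⟩ := coordinates_of_pow_seven 𝒜 hrs h5 hρ
  obtain ⟨hseven, hr⟩ := eq_three_of_relations h10 (coordinates_mul 𝒜 hrs h5 hρ).2 hcubic
  exact ⟨hseven, hr, rfl⟩

end Coordinates

lemma map_invol_atPoint (h30 : IsUnit (30 : k)) (hρ : ∑ i, 𝒜.restrict ρ (rotationFive i) = 0)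
    (m : pointInvariants (𝒜.restrict ρ)) :
    (7 : k) • m = 0 ∧ ρ 𝒜.invol (atPoint (𝒜.restrict ρ) 2 m) =
      (3 : k) • atPoint (𝒜.restrict ρ) 0 m - atPoint (𝒜.restrict ρ) 2 m := by
  have h10 : IsUnit (10 : k) := isUnit_of_dvd_unit ⟨3, by norm_num⟩ h30
  obtain ⟨r, s, hrs⟩ := 𝒜.exists_map_invol_atPoint_two h30 hρ
  obtain ⟨hseven, rfl, rfl⟩ := coordinates_eq 𝒜 hrs h10 hρ
  refine ⟨LinearMap.congr_fun hseven m, ?_⟩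
  rw [hrs, LinearMap.smul_apply, LinearMap.neg_apply, Module.End.one_apply, map_smul, map_neg,
    sub_eq_add_neg]

lemma seven_smul_eq_zero (h30 : IsUnit (30 : k))
    (hρ : ∑ i, 𝒜.restrict ρ (rotationFive i) = 0) (v : V) : (7 : k) • v = 0 := by
  obtain ⟨x, rfl⟩ := exists_eq_sum_atPoint h30 hρ v
  rw [Finset.smul_sum]
  refine Finset.sum_eq_zero fun i _ ↦ ?_
  rw [← map_smul, (𝒜.map_invol_atPoint h30 hρ (x i)).1, map_zero]

end Module

section Bilinear

variable {k V V' W : Type*} [CommRing k] [AddCommGroup V] [Module k V] [AddCommGroup V']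
  [Module k V'] [AddCommGroup W] [Module k W] {ρ : Representation k Γ V}
  {ρ' : Representation k Γ V'} {τ : Representation k Γ W}

/-- The product on the deleted permutation module is not equivariant for the involution. -/
lemma bilin_eq_zero (h30 : IsUnit (30 : k)) (hρ : ∑ i, 𝒜.restrict ρ (rotationFive i) = 0)
    (hρ' : ∑ i, 𝒜.restrict ρ' (rotationFive i) = 0)
    (hτ : ∑ i, 𝒜.restrict τ (rotationFive i) = 0) {B : V →ₗ[k] V' →ₗ[k] W}
    (hB : ∀ γ v v', τ γ (B v v') = B (ρ γ v) (ρ' γ v')) : B = 0 := by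
  have h5 : IsUnit (5 : k) := isUnit_of_dvd_unit ⟨6, by norm_num⟩ h30
  have h12 : IsUnit (12 : k) := isUnit_of_dvd_unit ⟨75, by norm_num⟩ (h30.pow 2)
  have hpoint (m : pointInvariants (𝒜.restrict ρ)) (n : pointInvariants (𝒜.restrict ρ')) (i j) :
      B (atPoint _ i m) (atPoint _ j n) = 0 := by
    obtain ⟨a, hself, hne⟩ := exists_bilin_atPoint h30 hρ hρ' hτ (fun _ ↦ hB _) m n
    obtain rfl : a = 0 := by
      have h := hB 𝒜.invol (atPoint _ 2 m) (atPoint _ 2 n)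
      rw [hself, map_smul, (𝒜.map_invol_atPoint h30 hρ m).2, (𝒜.map_invol_atPoint h30 hρ' n).2,
        (𝒜.map_invol_atPoint h30 hτ a).2] at h
      simp (discharger := decide) only [map_sub, map_smul, LinearMap.sub_apply,
        LinearMap.smul_apply, hself, hne] at h
      have hsum : atPoint (𝒜.restrict τ) 0 ((24 : k) • a) +
          atPoint (𝒜.restrict τ) 2 ((12 : k) • a) = 0 := by
        rw [map_smul, map_smul]
        linear_combination (norm := module) h
      exact h12.smul_eq_zero.1 (eq_zero_of_atPoint_add_eq_zero h5 hτ hsum).2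
    obtain rfl | hij := eq_or_ne i j
    · rw [hself, map_zero, smul_zero]
    · rw [hne i j hij, map_zero, map_zero, add_zero]
  ext v v'
  obtain ⟨x, rfl⟩ := exists_eq_sum_atPoint h30 hρ v
  obtain ⟨y, rfl⟩ := exists_eq_sum_atPoint h30 hρ' v'
  simp only [map_sum, LinearMap.sum_apply, hpoint, Finset.sum_const_zero, LinearMap.zero_apply]

end Bilinear

end OctahedralExtension

open Matrix
open scoped MatrixGroups

section TraceTwo

variable {F : Type*} [Field F]

lemma fin_two_mem_range_scalar {A : Matrix (Fin 2) (Fin 2) F} (h10 : A 1 0 = 0) (h01 : A 0 1 = 0)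
    (h : A 0 0 = A 1 1) : A ∈ Set.range (scalar (Fin 2)) := by
  refine ⟨A 0 0, ?_⟩
  ext i j
  fin_cases i <;> fin_cases j <;> simp [h10, h01, h]

/-- The conjugating matrix has columns `x` and `A x`, where `x` is not an eigenvector. -/
lemma exists_conj_eq_companion {A : Matrix (Fin 2) (Fin 2) F}
    (hA : A ∉ Set.range (scalar (Fin 2))) :
    ∃ P : GL (Fin 2) F, A = P.1 * !![0, -A.det; 1, A.trace] * P⁻¹.1 := by
  have hcyclic {a b : F} (hab : a * (A 1 0 * a + A 1 1 * b) - (A 0 0 * a + A 0 1 * b) * b ≠ 0) :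
      ∃ P : GL (Fin 2) F, A = P.1 * !![0, -A.det; 1, A.trace] * P⁻¹.1 := by
    refine ⟨GeneralLinearGroup.mkOfDetNeZero !![a, A 0 0 * a + A 0 1 * b;
      b, A 1 0 * a + A 1 1 * b] (by rwa [det_fin_two_of]), ?_⟩
    rw [Units.eq_mul_inv_iff_mul_eq, GeneralLinearGroup.val_mkOfDetNeZero]
    ext i j
    fin_cases i <;> fin_cases j <;>
      simp [mul_apply, Fin.sum_univ_two, det_fin_two, trace_fin_two] <;> ring
  by_contra! hno
  have h10 : A 1 0 = 0 := by
    by_contra h; exact (hcyclic (a := 1) (b := 0) (by simpa using h)).elim hno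
  have h01 : A 0 1 = 0 := by
    by_contra h; exact (hcyclic (a := 0) (b := 1) (by simpa using h)).elim hno
  have h : A 1 1 - A 0 0 = 0 := by
    by_contra h
    exact (hcyclic (a := 1) (b := 1) (by simpa [h10, h01] using h)).elim hno
  exact hA (fin_two_mem_range_scalar h10 h01 (sub_eq_zero.1 h).symm)

lemma exists_conj_eq_of_trace_eq {A B : SL(2, F)} (hA : A ∉ Subgroup.center SL(2, F))
    (hB : B ∉ Subgroup.center SL(2, F)) (h : A.1.trace = B.1.trace) :
    ∃ P : GL (Fin 2) F, P.1 * A.1 * P⁻¹.1 = B := by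
  have hscalar {C : SL(2, F)} (hC : C ∉ Subgroup.center SL(2, F)) :
      C.1 ∉ Set.range (scalar (Fin 2)) := by
    rintro ⟨c, hc⟩
    refine hC (Matrix.SpecialLinearGroup.mem_center_iff.2 ⟨c, ?_, hc⟩)
    rw [← C.det_coe, ← hc, scalar_apply, det_diagonal, Finset.prod_const, Finset.card_univ]
  obtain ⟨P, hP⟩ := exists_conj_eq_companion (hscalar hA)
  obtain ⟨Q, hQ⟩ := exists_conj_eq_companion (hscalar hB)
  refine ⟨Q * P⁻¹, ?_⟩
  rw [A.det_coe, h] at hP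
  rw [B.det_coe] at hQ
  rw [hP]
  refine Eq.trans ?_ hQ.symm
  simp only [Units.val_mul, _root_.mul_inv_rev, inv_inv, mul_assoc, Units.inv_mul_cancel_left]

/-- Conjugation by an invertible matrix. -/
def conjSpecialLinear {n R : Type*} [Fintype n] [DecidableEq n] [CommRing R] (P : GL n R) :
    Matrix.SpecialLinearGroup n R →* Matrix.SpecialLinearGroup n R :=
  MonoidHom.mk'
    (fun A ↦ ⟨P.1 * A.1 * P⁻¹.1, by rw [det_units_conj, A.det_coe]⟩) fun A B ↦ by
      refine Subtype.ext ?_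
      change _ = P.1 * A.1 * P⁻¹.1 * (P.1 * B.1 * P⁻¹.1)
      simp only [Matrix.SpecialLinearGroup.coe_mul, mul_assoc, Units.inv_mul_cancel_left]

lemma trace_sq (A : SL(2, F)) : (A ^ 2).1.trace = A.1.trace ^ 2 - 2 := by
  have hdet := A.det_coe
  rw [det_fin_two] at hdet
  simp only [sq, Matrix.SpecialLinearGroup.coe_mul, trace_fin_two, mul_apply, Fin.sum_univ_two]
  linear_combination -2 * hdet

lemma add_inv_eq_trace (A : SL(2, F)) :
    A.1 + A⁻¹.1 = A.1.trace • (1 : Matrix (Fin 2) (Fin 2) F) := by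
  rw [Matrix.SpecialLinearGroup.coe_inv, adjugate_fin_two]
  ext i j
  fin_cases i <;> fin_cases j <;> simp [trace_fin_two, add_comm]

/-- With `t` the trace of `A`, the sum `1 + A + A² + A³ + A⁴` is the scalar `1 + t + (t² - 2)`. -/
lemma trace_eq_of_pow_five {A : SL(2, F)} (h5 : A ^ 5 = 1) (h1 : A ≠ 1) :
    A.1.trace ^ 2 + A.1.trace - 1 = 0 := by
  have hgeom := mul_geom_sum A.1 5
  have h4 : A⁻¹ = A ^ 4 := inv_eq_of_mul_eq_one_right (by rw [← pow_succ', h5])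
  have h3 : (A ^ 2)⁻¹ = A ^ 3 := inv_eq_of_mul_eq_one_right (by rw [← pow_add, h5])
  have htr := add_inv_eq_trace A
  have htr' := add_inv_eq_trace (A ^ 2)
  rw [h4] at htr
  rw [h3, trace_sq] at htr'
  simp only [Matrix.SpecialLinearGroup.coe_pow] at htr htr'
  have hsum : ∑ i ∈ Finset.range 5, A.1 ^ i =
      (A.1.trace ^ 2 + A.1.trace - 1) • (1 : Matrix (Fin 2) (Fin 2) F) := by
    simp only [Finset.sum_range_succ, Finset.sum_range_zero, pow_zero, pow_one]
    linear_combination (norm := module) htr + htr'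
  rw [hsum, ← Matrix.SpecialLinearGroup.coe_pow, h5, Matrix.SpecialLinearGroup.coe_one, sub_self,
    mul_smul_comm, mul_one, smul_eq_zero] at hgeom
  exact hgeom.resolve_right fun h ↦ h1 (Subtype.ext (sub_eq_zero.1 h))

end TraceTwo

/-- The field with `49` elements as `𝔽₇[i]`, in which closed terms can be evaluated. -/
abbrev GaussianSeven := QuadraticAlgebra (ZMod 7) (-1) 0

namespace GaussianSeven

/-- A matrix of order five, which lifts a rotation of five points. -/
def rotationMatrix : SL(2, GaussianSeven) := ⟨!![⟨0, 0⟩, ⟨6, 0⟩; ⟨1, 0⟩, ⟨3, 2⟩], by decide⟩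

/-- A matrix of order four, which lifts `doubleSwap 0`. -/
def doubleSwapMatrix : SL(2, GaussianSeven) := ⟨!![⟨1, 6⟩, ⟨4, 6⟩; ⟨5, 0⟩, ⟨6, 1⟩], by decide⟩

/-- A matrix of order four, which lifts `reflectionFive`. -/
def reflectionMatrix : SL(2, GaussianSeven) := ⟨!![⟨1, 1⟩, ⟨1, 3⟩; ⟨0, 5⟩, ⟨6, 6⟩], by decide⟩

/-- A matrix of order three, which lifts `threeCycle`. -/
def threeCycleMatrix : SL(2, GaussianSeven) := ⟨!![⟨4, 4⟩, ⟨3, 5⟩; ⟨6, 6⟩, ⟨2, 3⟩], by decide⟩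

/-- A matrix of order four, which conjugates the lift of `A₄` as the transposition `(1 3)` does. -/
def swapMatrix : SL(2, GaussianSeven) := ⟨!![⟨0, 3⟩, ⟨6, 6⟩; ⟨3, 4⟩, ⟨0, 4⟩], by decide⟩

/-- A lift of `A₅` to `SL₂(49)`, multiplicative up to sign. It is defined by writing each element as
a product of a rotation, an element of the four-group `kleinFour` and a power of `threeCycle`. -/
def liftAlternating (σ : A₅) : SL(2, GaussianSeven) :=
  let τ := (rotationFive (σ.1 0))⁻¹ * σ
  let a := (![0, 1, 0, 2, 3] : Fin 5 → Fin 4) (τ.1 2)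
  let j := (![0, 0, 0, 1, 2] : Fin 5 → Fin 3) ((kleinFour a * τ).1 1)
  rotationMatrix ^ (σ.1 0).val *
    (![1, doubleSwapMatrix, reflectionMatrix, doubleSwapMatrix * reflectionMatrix] : Fin 4 → _) a *
    threeCycleMatrix ^ j.val

lemma liftAlternating_rotationFive : liftAlternating (rotationFive 1) = rotationMatrix := by
  decide +kernel

lemma liftAlternating_rotationFive_mul (σ : A₅) :
    liftAlternating (rotationFive 1 * σ) = rotationMatrix * liftAlternating σ ∨
      liftAlternating (rotationFive 1 * σ) = -(rotationMatrix * liftAlternating σ) := by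
  revert σ; decide +kernel

lemma liftAlternating_doubleSwap_mul (σ : A₅) :
    liftAlternating (doubleSwap 0 * σ) = doubleSwapMatrix * liftAlternating σ ∨
      liftAlternating (doubleSwap 0 * σ) = -(doubleSwapMatrix * liftAlternating σ) := by
  revert σ; decide +kernel

lemma swapMatrix_mul_liftAlternating {σ : A₅} (hσ : σ.1 0 = 0) :
    swapMatrix * liftAlternating σ =
        liftAlternating (MulAut.conjNormal (swap 1 3) σ) * swapMatrix ∨
      swapMatrix * liftAlternating σ =
        -(liftAlternating (MulAut.conjNormal (swap 1 3) σ) * swapMatrix) := by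
  revert σ; decide +kernel

lemma rotationFive_eq_pow (i : Fin 5) : rotationFive i = rotationFive 1 ^ i.val := by
  revert i; decide +kernel

lemma closure_rotationFive_doubleSwap :
    Submonoid.closure ({rotationFive 1, doubleSwap 0} : Set A₅) = ⊤ := by
  have hword (σ : A₅) : ∃ i j k l : Fin 5, σ = rotationFive i * doubleSwap 0 * rotationFive j *
      doubleSwap 0 * rotationFive k * doubleSwap 0 * rotationFive l := by
    revert σ; decide +kernel
  have hrot (i : Fin 5) :
      rotationFive i ∈ Submonoid.closure ({rotationFive 1, doubleSwap 0} : Set A₅) := by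
    rw [rotationFive_eq_pow i]
    exact pow_mem (Submonoid.subset_closure (Set.mem_insert (rotationFive 1) _)) _
  have hswap : doubleSwap 0 ∈ Submonoid.closure ({rotationFive 1, doubleSwap 0} : Set A₅) :=
    Submonoid.subset_closure (Set.mem_insert_of_mem (rotationFive 1) rfl)
  rw [eq_top_iff]
  rintro σ -
  obtain ⟨i, j, k, l, rfl⟩ := hword σ
  exact mul_mem (mul_mem (mul_mem (mul_mem (mul_mem (mul_mem (hrot i) hswap) (hrot j)) hswap)
    (hrot k)) hswap) (hrot l)

section Hom

variable {Δ : Type*} [Group Δ] (θ : SL(2, GaussianSeven) →* Δ)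

variable {θ} in
lemma map_eq_of_eq_or_eq_neg (hθ : θ (-1) = 1) {A B : SL(2, GaussianSeven)}
    (h : A = B ∨ A = -B) : θ A = θ B := by
  obtain rfl | rfl := h
  · rfl
  · have hneg : -B = -1 * B := (neg_one_mul B).symm
    rw [hneg, map_mul, hθ, one_mul]

/-- The homomorphism `A₅ → Δ` induced by `liftAlternating`. -/
def alternatingHom (hθ : θ (-1) = 1) : A₅ →* Δ :=
  MonoidHom.ofClosureMEqTopLeft (fun σ ↦ θ (liftAlternating σ)) closure_rotationFive_doubleSwap
    (by
      have h1 : liftAlternating 1 = 1 := by decide +kernel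
      rw [h1, map_one])
    (by
      have hswap : liftAlternating (doubleSwap 0) = doubleSwapMatrix := by decide +kernel
      rintro _ (rfl | rfl) σ
      · rw [liftAlternating_rotationFive, ← map_mul]
        exact map_eq_of_eq_or_eq_neg hθ (liftAlternating_rotationFive_mul σ)
      · rw [hswap, ← map_mul]
        exact map_eq_of_eq_or_eq_neg hθ (liftAlternating_doubleSwap_mul σ))

lemma alternatingHom_apply (hθ : θ (-1) = 1) (σ : A₅) :
    alternatingHom θ hθ σ = θ (liftAlternating σ) := rfl

lemma alternatingHom_rotationFive (hθ : θ (-1) = 1) :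
    alternatingHom θ hθ (rotationFive 1) = θ rotationMatrix := by
  rw [alternatingHom_apply, liftAlternating_rotationFive]

/-- The image of `SL₂(49)` under a homomorphism which kills `-1`. -/
def octahedralExtension (hθ : θ (-1) = 1) : OctahedralExtension Δ where
  alt := alternatingHom θ hθ
  invol := θ swapMatrix
  invol_mul_invol := by
    have hsq : swapMatrix * swapMatrix = -1 := by decide +kernel
    rw [← map_mul, hsq, hθ]
  invol_mul_alt σ hσ := by
    simp only [alternatingHom_apply, ← map_mul]
    exact map_eq_of_eq_or_eq_neg hθ (swapMatrix_mul_liftAlternating hσ)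
  invol_mul_alt_pow_seven := by
    have hpow : (swapMatrix * rotationMatrix) ^ 7 = 1 := by decide +kernel
    rw [alternatingHom_rotationFive, ← map_mul, ← map_pow, hpow, map_one]

end Hom

lemma nonempty_ringHom {F : Type*} [Field F] [CharP F 7] (h : IsSquare (-1 : F)) :
    Nonempty (GaussianSeven →+* F) := by
  obtain ⟨i, hi⟩ := h
  let _ := ZMod.algebra F 7
  exact ⟨(QuadraticAlgebra.lift (R := ZMod 7) ⟨i, by simp [← hi]⟩).toRingHom⟩

end GaussianSeven

section ProjectiveSpecialLinear

variable {F : Type*} [Field F]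

lemma neg_one_mem_center : (-1 : SL(2, F)) ∈ Subgroup.center SL(2, F) := by
  rw [Subgroup.mem_center_iff]
  intro A
  rw [mul_neg_one, neg_one_mul]

lemma exists_pow_five_eq_one {B : SL(2, F)} (h : B ^ 5 ∈ Subgroup.center SL(2, F)) :
    ∃ A : SL(2, F), A ^ 5 = 1 ∧ (A : PSL(2, F)) = B := by
  obtain ⟨c, hc, hB⟩ := Matrix.SpecialLinearGroup.mem_center_iff.1 h
  obtain rfl | rfl := sq_eq_one_iff.1 ((Fintype.card_fin 2) ▸ hc)
  · refine ⟨B, Subtype.ext ?_, rfl⟩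
    rw [← hB, map_one, Matrix.SpecialLinearGroup.coe_one]
  · refine ⟨-B, ?_, ?_⟩
    · rw [Odd.neg_pow (by decide), neg_eq_iff_eq_neg]
      refine Subtype.ext ?_
      rw [← hB, map_neg, map_one, Matrix.SpecialLinearGroup.coe_neg,
        Matrix.SpecialLinearGroup.coe_one]
    · rw [eq_comm, QuotientGroup.eq, mul_neg, inv_mul_cancel]
      exact neg_one_mem_center

/-- The traces of `A` and `A²` are the two roots of `x² + x - 1`. -/
lemma exists_pow_trace_eq {A : SL(2, F)} (h5 : A ^ 5 = 1) (h1 : A ≠ 1) {x : F}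
    (hx : x ^ 2 + x - 1 = 0) :
    A.1.trace = x ∨ (A ^ 2).1.trace = x := by
  have htrace := trace_eq_of_pow_five h5 h1
  have hroots : (A.1.trace - x) * (A.1.trace + 1 + x) = 0 := by
    linear_combination htrace - hx
  refine (mul_eq_zero.1 hroots).imp sub_eq_zero.1 fun h ↦ ?_
  rw [trace_sq]
  linear_combination htrace - h

lemma exists_octahedralExtension_of_trace_eq (ψ : GaussianSeven →+* F) {A : SL(2, F)}
    (hA : A ∉ Subgroup.center SL(2, F)) (h : A.1.trace = ψ ⟨3, 2⟩) :
    ∃ 𝒜 : OctahedralExtension PSL(2, F), 𝒜.alt (rotationFive 1) = A := by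
  let base := Matrix.SpecialLinearGroup.map (n := Fin 2) ψ
  have hentry (i j) : (base GaussianSeven.rotationMatrix).1 i j =
      ψ (GaussianSeven.rotationMatrix.1 i j) := rfl
  obtain ⟨P, hP⟩ := exists_conj_eq_of_trace_eq (A := base GaussianSeven.rotationMatrix)
    (fun hcenter ↦ by
      obtain ⟨c, -, hc⟩ := Matrix.SpecialLinearGroup.mem_center_iff.1 hcenter
      have h10 := congrFun (congrFun hc 1) 0
      rw [hentry] at h10
      exact zero_ne_one (h10.trans (map_one ψ))) hA (by
      rw [h, trace_fin_two, hentry, hentry, ← map_add]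
      exact congrArg ψ (zero_add _))
  let θ := (QuotientGroup.mk' (Subgroup.center SL(2, F))).comp ((conjSpecialLinear P).comp base)
  have hθ : θ (-1) = 1 := by
    have hbase : base (-1) = -1 := by
      ext i j
      simp [base, one_apply, apply_ite ψ]
    have hconj : conjSpecialLinear P (-1) = -1 := by
      refine Subtype.ext ?_
      change P.1 * (-1 : SL(2, F)).1 * P⁻¹.1 = _
      rw [Matrix.SpecialLinearGroup.coe_neg, Matrix.SpecialLinearGroup.coe_one, mul_neg_one,
        neg_mul, Units.mul_inv]
    change ((conjSpecialLinear P (base (-1)) : SL(2, F)) : PSL(2, F)) = 1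
    rw [hbase, hconj, QuotientGroup.eq_one_iff]
    exact neg_one_mem_center
  refine ⟨GaussianSeven.octahedralExtension θ hθ, ?_⟩
  refine (GaussianSeven.alternatingHom_rotationFive θ hθ).trans ?_
  exact congrArg (QuotientGroup.mk (s := Subgroup.center SL(2, F))) (Subtype.ext hP)

lemma exists_octahedralExtension [CharP F 7] (hF : IsSquare (-1 : F)) {b : PSL(2, F)}
    (h5 : b ^ 5 = 1) (h1 : b ≠ 1) :
    ∃ 𝒜 : OctahedralExtension PSL(2, F),
      𝒜.alt (rotationFive 1) = b ∨ 𝒜.alt (rotationFive 1) = b ^ 2 := by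
  obtain ⟨ψ⟩ := GaussianSeven.nonempty_ringHom hF
  have hroot : ψ ⟨3, 2⟩ ^ 2 + ψ ⟨3, 2⟩ - 1 = 0 := by
    have hx : (⟨3, 2⟩ : GaussianSeven) ^ 2 + ⟨3, 2⟩ - 1 = 0 := by decide
    rw [← map_pow, ← map_add, ← map_one ψ, ← map_sub, hx, map_zero]
  obtain ⟨B, rfl⟩ := QuotientGroup.mk_surjective b
  rw [← QuotientGroup.mk_pow, QuotientGroup.eq_one_iff] at h5
  obtain ⟨A, hA5, hAB⟩ := exists_pow_five_eq_one h5
  rw [← hAB] at h1 ⊢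
  have hA : A ∉ Subgroup.center SL(2, F) := fun h ↦ h1 ((QuotientGroup.eq_one_iff A).2 h)
  have hA2 : A ^ 2 ∉ Subgroup.center SL(2, F) := fun h ↦ hA <| by
    have hpow : A = (A ^ 2) ^ 3 := by rw [← pow_mul, pow_succ, hA5, one_mul]
    exact hpow ▸ pow_mem h 3
  obtain h | h := exists_pow_trace_eq hA5 (fun h ↦ hA (h ▸ one_mem _)) hroot
  · exact (exists_octahedralExtension_of_trace_eq ψ hA h).imp fun _ ↦ Or.inl
  · exact (exists_octahedralExtension_of_trace_eq ψ hA2 h).imp fun _ ↦ Or.inr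

lemma exists_octahedralExtension_of_mem_range [CharP F 7] (hF : IsSquare (-1 : F)) {Δ : Type*}
    [Group Δ] {f : PSL(2, F) →* Δ} (hf : Function.Injective f) {d : Δ} (hd : d ∈ f.range)
    (h5 : d ^ 5 = 1) (h1 : d ≠ 1) :
    ∃ 𝒜 : OctahedralExtension Δ, 𝒜.alt (rotationFive 1) = d ∨ 𝒜.alt (rotationFive 1) = d ^ 2 := by
  obtain ⟨b, rfl⟩ := hd
  rw [← map_pow, map_eq_one_iff f hf] at h5
  obtain ⟨𝒜, h⟩ := exists_octahedralExtension hF h5 ((map_ne_one_iff f hf).1 h1)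
  rw [← map_pow]
  exact ⟨𝒜.map f, h.imp (congrArg f) (congrArg f)⟩

end ProjectiveSpecialLinear

open MonoidHom
open scoped commutatorElement IsMulCommutative

section Automorphisms

variable {Q : Type*} [Group Q]

/-- The action of the automorphisms of a group on the quotient by a characteristic subgroup. -/
def autQuotient (N : Subgroup Q) [N.Characteristic] : MulAut Q →* MulAut (Q ⧸ N) where
  toFun φ := QuotientGroup.congr N N φ (Subgroup.characteristic_iff_map_eq.1 inferInstance φ)
  map_one' := by
    ext x
    obtain ⟨x, rfl⟩ := QuotientGroup.mk_surjective x
    rfl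
  map_mul' _ _ := by
    ext x
    obtain ⟨x, rfl⟩ := QuotientGroup.mk_surjective x
    rfl

/-- The action of the automorphisms of a group on its abelianization. -/
def autAbelianization : MulAut Q →* MulAut (Abelianization Q) := autQuotient (commutator Q)

lemma autAbelianization_of (φ : MulAut Q) (x : Q) :
    autAbelianization φ (Abelianization.of x) = Abelianization.of (φ x) := rfl

lemma characteristic_center_conj (x : Q) :
    MulAut.characteristic (Subgroup.center Q) (MulAut.conj x) = 1 := by
  ext z
  exact mul_inv_eq_of_eq_mul (Subgroup.mem_center_iff.1 z.2 x)

lemma autAbelianization_conj (x : Q) : autAbelianization (MulAut.conj x) = 1 := by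
  refine MulEquiv.ext fun y ↦ ?_
  obtain ⟨y, rfl⟩ := QuotientGroup.mk_surjective y
  refine (autAbelianization_of _ y).trans ?_
  rw [MulAut.conj_apply, map_mul, map_mul, map_inv, mul_inv_eq_of_eq_mul (mul_comm _ _)]
  rfl

lemma fixedPointFree_center {φ : MulAut Q} (hφ : FixedPointFree φ) :
    FixedPointFree (MulAut.characteristic (Subgroup.center Q) φ) := fun z hz ↦
  Subtype.ext (hφ z (congrArg Subtype.val hz))

/-- On a finite group, freeness of fixed points amounts to surjectivity of `x ↦ x / φ x`. -/
lemma fixedPointFree_autQuotient [Finite Q] (N : Subgroup Q) [N.Characteristic] {φ : MulAut Q}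
    (hφ : FixedPointFree φ) : FixedPointFree (autQuotient N φ) := by
  have hsurj : Function.Surjective (commutatorMap (autQuotient N φ)) := by
    intro y
    obtain ⟨y, rfl⟩ := QuotientGroup.mk_surjective y
    obtain ⟨x, rfl⟩ := hφ.commutatorMap_surjective y
    exact ⟨x, rfl⟩
  intro x hx
  refine Finite.injective_iff_surjective.2 hsurj ?_
  rw [commutatorMap_apply, commutatorMap_apply, hx, map_one, div_self', div_one]

lemma fixedPointFree_sq {φ : MulAut Q} (h5 : φ ^ 5 = 1) (hφ : FixedPointFree φ) :
    FixedPointFree (φ ^ 2 : MulAut Q) := by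
  intro x hx
  refine hφ x ?_
  have h6 : φ = φ ^ 2 * φ ^ 2 * φ ^ 2 := by
    rw [← pow_add, ← pow_add, pow_succ, h5, one_mul]
  rw [h6, MulAut.mul_apply, MulAut.mul_apply, hx, hx, hx]

lemma not_dvd_card_of_fixedPointFree [Finite Q] {p : ℕ} [Fact p.Prime] {φ : MulAut Q}
    (hp : φ ^ p = 1) (hφ : FixedPointFree φ) : ¬ p ∣ Nat.card Q := by
  intro hdvd
  have hpgroup : IsPGroup p (Subgroup.zpowers φ) := by
    rintro ⟨_, i, rfl⟩
    refine ⟨1, Subtype.ext ?_⟩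
    change (φ ^ i) ^ p ^ 1 = 1
    rw [pow_one, ← zpow_natCast, zpow_comm, zpow_natCast, hp, _root_.one_zpow]
  obtain ⟨x, hx, hne⟩ := hpgroup.exists_fixed_point_of_prime_dvd_card_of_fixed_point Q hdvd
    (a := 1) fun ψ ↦ map_one ψ.1
  exact hne (hφ x (hx ⟨φ, Subgroup.mem_zpowers φ⟩)).symm

end Automorphisms

section CommutatorPairing

variable {Q : Type*} [Group Q]

lemma commutatorElement_mul_left_of_mem_center (x : Q) {y z : Q}
    (h : ⁅y, z⁆ ∈ Subgroup.center Q) : ⁅x * y, z⁆ = ⁅x, z⁆ * ⁅y, z⁆ := by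
  rw [commutatorElement_mul_left_eq_conj_mul, Subgroup.mem_center_iff.1 h x,
    mul_inv_cancel_right, Subgroup.mem_center_iff.1 h]

lemma commutatorElement_mul_right_of_mem_center {x : Q} (y : Q) {z : Q}
    (h : ⁅x, z⁆ ∈ Subgroup.center Q) : ⁅x, y * z⁆ = ⁅x, y⁆ * ⁅x, z⁆ := by
  rw [commutatorElement_mul_right_eq_mul_conj, mul_assoc _ y, Subgroup.mem_center_iff.1 h y,
    mul_assoc, mul_inv_cancel_right]

/-- The commutator as a bilinear map, for a group of nilpotency class at most two. -/
def commutatorPairing (h : ∀ x y : Q, ⁅x, y⁆ ∈ Subgroup.center Q) :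
    Abelianization Q →* Abelianization Q →* Subgroup.center Q :=
  let bracket : Q →* Q →* Subgroup.center Q :=
    MonoidHom.mk' (fun x ↦ MonoidHom.mk' (fun y ↦ ⟨⁅x, y⁆, h x y⟩) fun y z ↦
      Subtype.ext (commutatorElement_mul_right_of_mem_center y (h x z))) fun x y ↦
        MonoidHom.ext fun z ↦ Subtype.ext (commutatorElement_mul_left_of_mem_center x (h y z))
  Abelianization.lift (Abelianization.lift bracket).flip |>.flip

lemma commutatorPairing_of (h : ∀ x y : Q, ⁅x, y⁆ ∈ Subgroup.center Q) (x y : Q) :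
    (commutatorPairing h (Abelianization.of x) (Abelianization.of y) : Q) = ⁅x, y⁆ := rfl

end CommutatorPairing

section OuterAction

variable {G Q A : Type*} [Group G] [Group Q] [Group A] {K : Subgroup G} [K.Normal]

/-- An action `α` of the automorphisms of `Q` which is trivial on inner automorphisms gives an
action of `G ⧸ K` whenever `K` acts on `Q` by inner automorphisms. -/
def outerAction {ρ : G →* MulAut Q} (hK : ∀ g ∈ K, ρ g ∈ (MulAut.conj (G := Q)).range)
    {α : MulAut Q →* MulAut A} (hα : ∀ x, α (MulAut.conj x) = 1) : G ⧸ K →* MulAut A :=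
  QuotientGroup.lift K (α.comp ρ) fun g hg ↦ by
    obtain ⟨x, hx⟩ := hK g hg
    rw [MonoidHom.mem_ker, MonoidHom.comp_apply, ← hx, hα]

end OuterAction

section Additive

variable {Γ A : Type*} [Group Γ] [CommGroup A] {n : ℕ} [Module (ZMod n) (Additive A)]

/-- An action on a commutative group of exponent dividing `n`, as a linear representation. -/
def additiveRepresentation (ρ : Γ →* MulAut A) : Representation (ZMod n) Γ (Additive A) where
  toFun γ := (MonoidHom.toAdditive (ρ γ).toMonoidHom).toZModLinearMap n
  map_one' := by rw [map_one]; rfl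
  map_mul' γ δ := by rw [map_mul]; rfl

lemma sum_rotationFive_eq_zero (𝒜 : OctahedralExtension Γ) {ρ : Γ →* MulAut A}
    (hρ : FixedPointFree (ρ (𝒜.alt (rotationFive 1)))) :
    ∑ i, 𝒜.restrict (additiveRepresentation (n := n) ρ) (rotationFive i) = 0 := by
  ext v
  have hfixed : 𝒜.restrict (additiveRepresentation (n := n) ρ) (rotationFive 1)
      (∑ i, 𝒜.restrict (additiveRepresentation (n := n) ρ) (rotationFive i) v) =
      ∑ i, 𝒜.restrict (additiveRepresentation (n := n) ρ) (rotationFive i) v := by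
    simp only [map_sum, ← Module.End.mul_apply, ← map_mul, ← rotationFive_add]
    exact Fintype.sum_equiv (Equiv.addLeft 1) _ _ fun _ ↦ rfl
  rw [LinearMap.sum_apply, LinearMap.zero_apply]
  exact congrArg Additive.ofMul (hρ _ (congrArg Additive.toMul hfixed))

/-- A biadditive map between commutative groups of exponent dividing `n`, as a bilinear map. -/
def additiveBilin {C : Type*} [CommGroup C] [Module (ZMod n) (Additive C)] (B : A →* A →* C) :
    Additive A →ₗ[ZMod n] Additive A →ₗ[ZMod n] Additive C :=
  AddMonoidHom.toZModLinearMap n <|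
    AddMonoidHom.mk' (fun a ↦ (MonoidHom.toAdditive (B a.toMul)).toZModLinearMap n) fun a b ↦
      LinearMap.ext fun c ↦ DFunLike.congr_fun (map_mul B a.toMul b.toMul) c.toMul

end Additive

section FixedPointFreeActions

variable {Γ A C : Type*} [Group Γ] [CommGroup A] [CommGroup C] {n : ℕ}

lemma pow_seven_eq_one_of_fixedPointFree (𝒜 : OctahedralExtension Γ) (hn : Nat.Coprime 30 n)
    (hA : ∀ a : A, a ^ n = 1) {ρ : Γ →* MulAut A}
    (hρ : FixedPointFree (ρ (𝒜.alt (rotationFive 1)))) (a : A) : a ^ 7 = 1 := by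
  have : Module (ZMod n) (Additive A) := AddCommGroup.zmodModule (G := Additive A) hA
  have h30 : IsUnit (30 : ZMod n) := (ZMod.isUnit_iff_coprime 30 n).2 hn
  have hseven := 𝒜.seven_smul_eq_zero h30 (sum_rotationFive_eq_zero 𝒜 hρ) (Additive.ofMul a)
  rw [ofNat_smul_eq_nsmul] at hseven
  exact hseven

lemma pairing_eq_one_of_fixedPointFree (𝒜 : OctahedralExtension Γ) (hn : Nat.Coprime 30 n)
    (hA : ∀ a : A, a ^ n = 1) (hC : ∀ c : C, c ^ n = 1) {ρ : Γ →* MulAut A} {τ : Γ →* MulAut C}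
    (hρ : FixedPointFree (ρ (𝒜.alt (rotationFive 1))))
    (hτ : FixedPointFree (τ (𝒜.alt (rotationFive 1)))) {B : A →* A →* C}
    (hB : ∀ γ a b, τ γ (B a b) = B (ρ γ a) (ρ γ b)) : B = 1 := by
  have : Module (ZMod n) (Additive A) := AddCommGroup.zmodModule (G := Additive A) hA
  have : Module (ZMod n) (Additive C) := AddCommGroup.zmodModule (G := Additive C) hC
  have h30 : IsUnit (30 : ZMod n) := (ZMod.isUnit_iff_coprime 30 n).2 hn
  have hzero : additiveBilin (n := n) B = 0 := 𝒜.bilin_eq_zero h30 (sum_rotationFive_eq_zero 𝒜 hρ)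
    (sum_rotationFive_eq_zero 𝒜 hρ) (sum_rotationFive_eq_zero 𝒜 hτ) fun γ a b ↦
      congrArg Additive.ofMul (hB γ a.toMul b.toMul)
  ext a b
  exact congrArg Additive.toMul
    (LinearMap.congr_fun (LinearMap.congr_fun hzero (Additive.ofMul a)) (Additive.ofMul b))

end FixedPointFreeActions

section InnerKernel

variable {G : Type*} [Group G] {K : Subgroup G} [K.Normal] {𝒜 : OctahedralExtension (G ⧸ K)}
  {g : G} (hg : 𝒜.alt (rotationFive 1) = g)

include hg

variable {Q : Type*} [Group Q] (hQ : Nat.Coprime 30 (Nat.card Q)) {ρ : G →* MulAut Q}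
  (hK : ∀ x ∈ K, ρ x ∈ (MulAut.conj (G := Q)).range) (hρ : FixedPointFree (ρ g))

include hQ hK hρ

lemma pow_seven_eq_one_of_mem_center {z : Q} (hz : z ∈ Subgroup.center Q) : z ^ 7 = 1 := by
  have hfree : FixedPointFree (outerAction hK characteristic_center_conj
      (𝒜.alt (rotationFive 1))) := hg ▸ fixedPointFree_center hρ
  exact congrArg Subtype.val (pow_seven_eq_one_of_fixedPointFree 𝒜 hQ
    (fun _ ↦ Subtype.ext pow_card_eq_one') hfree ⟨z, hz⟩)

lemma commutatorElement_eq_one_of_mem_center [Finite Q]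
    (h : ∀ x y : Q, ⁅x, y⁆ ∈ Subgroup.center Q) (x y : Q) : ⁅x, y⁆ = 1 := by
  have hfree : FixedPointFree (outerAction hK characteristic_center_conj
      (𝒜.alt (rotationFive 1))) := hg ▸ fixedPointFree_center hρ
  have hfree' : FixedPointFree (outerAction hK autAbelianization_conj
      (𝒜.alt (rotationFive 1))) := hg ▸ fixedPointFree_autQuotient _ hρ
  have hpow (a : Abelianization Q) : a ^ Nat.card Q = 1 := by
    obtain ⟨x, rfl⟩ := QuotientGroup.mk_surjective a
    change Abelianization.of x ^ Nat.card Q = 1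
    rw [← map_pow, pow_card_eq_one', map_one]
  have hpairing : commutatorPairing h = 1 := pairing_eq_one_of_fixedPointFree 𝒜 hQ hpow
    (fun _ ↦ Subtype.ext pow_card_eq_one') hfree' hfree fun γ a b ↦ by
      obtain ⟨γ, rfl⟩ := QuotientGroup.mk_surjective γ
      obtain ⟨x, rfl⟩ := QuotientGroup.mk_surjective a
      obtain ⟨y, rfl⟩ := QuotientGroup.mk_surjective b
      exact Subtype.ext (map_commutatorElement (ρ γ) x y)
  rw [← commutatorPairing_of h, hpairing]
  rfl

end InnerKernel

lemma commutatorElement_eq_one_of_fixedPointFree {G : Type*} [Group G] {K : Subgroup G} [K.Normal]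
    {𝒜 : OctahedralExtension (G ⧸ K)} {g : G} (hg : 𝒜.alt (rotationFive 1) = g)
    (Q : Type*) [Group Q] [Group.IsNilpotent Q] :
    Finite Q → Nat.Coprime 30 (Nat.card Q) → ∀ ρ : G →* MulAut Q,
      (∀ x ∈ K, ρ x ∈ (MulAut.conj (G := Q)).range) → FixedPointFree (ρ g) →
        ∀ x y : Q, ⁅x, y⁆ = 1 := by
  refine Group.nilpotent_center_quotient_ind (P := fun Q _ _ ↦ Finite Q →
    Nat.Coprime 30 (Nat.card Q) → ∀ ρ : G →* MulAut Q,
      (∀ x ∈ K, ρ x ∈ (MulAut.conj (G := Q)).range) → FixedPointFree (ρ g) →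
        ∀ x y : Q, ⁅x, y⁆ = 1) Q (fun Q _ _ _ _ _ _ _ x y ↦ Subsingleton.elim _ _) ?_
  intro Q _ _ ih _ hQ ρ hK hρ
  refine commutatorElement_eq_one_of_mem_center hg hQ hK hρ fun x y ↦ ?_
  rw [← QuotientGroup.eq_one_iff]
  refine ih inferInstance (hQ.coprime_dvd_right (Subgroup.card_quotient_dvd_card _))
    ((autQuotient _).comp ρ) (fun k hk ↦ ?_) (fixedPointFree_autQuotient _ hρ) x y
  obtain ⟨c, hc⟩ := hK k hk
  refine ⟨c, ?_⟩
  rw [MonoidHom.comp_apply, ← hc]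
  refine MulEquiv.ext fun a ↦ ?_
  obtain ⟨a, rfl⟩ := QuotientGroup.mk_surjective a
  rfl

section NormalSubgroup

variable {G : Type*} [Group G] {R : Subgroup G} [R.Normal]

lemma mul_comm_and_pow_seven_of_octahedralExtension [Finite R] [Group.IsNilpotent R]
    (𝒜 : OctahedralExtension (G ⧸ R)) {g : G} (hg : 𝒜.alt (rotationFive 1) = g)
    (hR : Nat.Coprime 30 (Nat.card R))
    (hfree : FixedPointFree (MulAut.conjNormal g : MulAut R)) :
    (∀ x y : R, x * y = y * x) ∧ ∀ x : R, x ^ 7 = 1 := by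
  have hinner (x) (hx : x ∈ R) :
      (MulAut.conjNormal x : MulAut R) ∈ (MulAut.conj (G := R)).range :=
    ⟨⟨x, hx⟩, MulEquiv.ext fun _ ↦ rfl⟩
  have hcomm (x y : R) : x * y = y * x := commutatorElement_eq_one_iff_mul_comm.1
    (commutatorElement_eq_one_of_fixedPointFree hg R inferInstance hR MulAut.conjNormal hinner
      hfree x y)
  exact ⟨hcomm, fun x ↦ pow_seven_eq_one_of_mem_center hg hR hinner hfree
    (Subgroup.mem_center_iff.2 fun y ↦ hcomm y x)⟩

end NormalSubgroup

theorem elementary_abelian_of_psl_two_49_quotient_general {G F : Type*} [Group G] [Field F]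
    [CharP F 7] (hF : IsSquare (-1 : F)) {R : Subgroup G} [R.Normal] [Finite R]
    [Group.IsNilpotent R] (hR : Nat.Coprime 6 (Nat.card R))
    {f : PSL(2, F) →* G ⧸ R} (hf : Function.Injective f) {g : G}
    (hgf : (g : G ⧸ R) ∈ f.range) (hg : orderOf g = 5)
    (hfpf : ∀ x ∈ R, g * x * g⁻¹ = x → x = 1) :
    (∀ x ∈ R, ∀ y ∈ R, x * y = y * x) ∧ ∀ x ∈ R, x ^ 7 = 1 := by
  have hg5 : g ^ 5 = 1 := hg ▸ pow_orderOf_eq_one g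
  have hfree : FixedPointFree (MulAut.conjNormal g : MulAut R) := fun x hx ↦
    Subtype.ext (hfpf x x.2 (congrArg Subtype.val hx))
  have hfive : (MulAut.conjNormal g : MulAut R) ^ 5 = 1 := by rw [← map_pow, hg5, map_one]
  have : Fact (Nat.Prime 5) := ⟨Nat.prime_five⟩
  have h30 : Nat.Coprime 30 (Nat.card R) := Nat.Coprime.mul_left hR
    ((Nat.Prime.coprime_iff_not_dvd Nat.prime_five).2 (not_dvd_card_of_fixedPointFree hfive hfree))
  have hgR : (g : G ⧸ R) ≠ 1 := fun h ↦ by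
    rw [hfpf g ((QuotientGroup.eq_one_iff g).1 h) (mul_inv_cancel_right g g), orderOf_one] at hg
    omega
  have hgR5 : (g : G ⧸ R) ^ 5 = 1 := by rw [← QuotientGroup.mk_pow, hg5, QuotientGroup.mk_one]
  obtain ⟨𝒜, h𝒜⟩ := exists_octahedralExtension_of_mem_range hF hf hgf hgR5 hgR
  suffices h : (∀ x y : R, x * y = y * x) ∧ ∀ x : R, x ^ 7 = 1 from
    ⟨fun x hx y hy ↦ congrArg Subtype.val (h.1 ⟨x, hx⟩ ⟨y, hy⟩), fun x hx ↦
      congrArg Subtype.val (h.2 ⟨x, hx⟩)⟩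
  obtain h𝒜 | h𝒜 := h𝒜
  · exact mul_comm_and_pow_seven_of_octahedralExtension 𝒜 h𝒜 h30 hfree
  · exact mul_comm_and_pow_seven_of_octahedralExtension 𝒜 (g := g ^ 2) h𝒜 h30
      (map_pow (MulAut.conjNormal (H := R)) g 2 ▸ fixedPointFree_sq hfive hfree)

/-- Lemma 4.5 (Astill–Parker–Waldecker): if `G` is a finite group with a normal
`7`-subgroup `R` such that `G ⧸ R ≅ PSL₂(49)`, and some element of order `5` of `G` acts
fixed point freely on `R` by conjugation, then `R` is elementary abelian. -/
theorem elementary_abelian_of_psl_two_49_quotient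
    (G : Type*) [Group G] [Finite G]
    (R : Subgroup G) (hRnormal : R.Normal)
    (hRcard : ∃ k : ℕ, Nat.card R = 7 ^ k)
    (hquot : Nonempty ((G ⧸ R) ≃*
      (Matrix.SpecialLinearGroup (Fin 2) (GaloisField 7 2) ⧸
        Subgroup.center (Matrix.SpecialLinearGroup (Fin 2) (GaloisField 7 2)))))
    (g : G) (hg : orderOf g = 5)
    (hfpf : ∀ x ∈ R, g * x * g⁻¹ = x → x = 1) :
    (∀ x ∈ R, ∀ y ∈ R, x * y = y * x) ∧ (∀ x ∈ R, x ^ 7 = 1) := by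
  obtain ⟨k, hk⟩ := hRcard
  obtain ⟨e⟩ := hquot
  have : Group.IsNilpotent R := (IsPGroup.of_card hk).isNilpotent
  have hcoprime : Nat.Coprime 6 (Nat.card R) := hk ▸ Nat.Coprime.pow_right k (by norm_num)
  have : Fintype (GaloisField 7 2) := Fintype.ofFinite _
  have hsquare : IsSquare (-1 : GaloisField 7 2) := by
    rw [FiniteField.isSquare_neg_one_iff, Fintype.card_eq_nat_card,
      GaloisField.card 7 2 two_ne_zero]
    norm_num
  exact elementary_abelian_of_psl_two_49_quotient_general hsquare hcoprime
    (f := e.symm.toMonoidHom) e.symm.injective ⟨e g, e.symm_apply_apply g⟩ hg hfpf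
end
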